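/- There exists an absolute constant c such that the following holds. Let P be a set of m distinct points and L a set of n distinct lines in ℝ³, and let q₂ ≤ n be a parameter such that no plane contains more than q₂ lines of L. Then I(P,L) ≤ c·(m^{1/2}·n^{3/4} + m^{2/3}·n^{1/3}·q₂^{1/3} + m + n). -/

import Mathlib

attribute [local instance] Classical.propDecidable

noncomputable section

/-- The number of incidences between a finite set of points and a finite set of
curves (subsets of `ℝ^d`): the number of pairs `(p, γ)` with `p ∈ γ`. -/
def Incidences {d : ℕ} (P : Finset (Fin d → ℝ)) (C : Finset (Set (Fin d → ℝ))) : ℕ :=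
  ((P ×ˢ C).filter fun pc => pc.1 ∈ pc.2).card

/-- A line in `ℝ^d`. -/
def IsLine {d : ℕ} (ℓ : Set (Fin d → ℝ)) : Prop :=
  ∃ a b : Fin d → ℝ, b ≠ 0 ∧ ℓ = {x | ∃ t : ℝ, x = a + t • b}

/-- A plane in `ℝ³`: the zero set of a nonzero affine (degree-one) polynomial. -/
def IsPlane (π : Set (Fin 3 → ℝ)) : Prop :=
  ∃ (a : Fin 3 → ℝ) (c : ℝ), a ≠ 0 ∧ π = {x | (∑ i, a i * x i) + c = 0}

/-! ### Part 1: approximate radial isotropic position -/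

/-- squared Euclidean length -/
def nsq {ι : Type*} [Fintype ι] (x : ι → ℝ) : ℝ := x ⬝ᵥ x

lemma nsq_nonneg {ι : Type*} [Fintype ι] (x : ι → ℝ) : 0 ≤ nsq x := by
  unfold nsq dotProduct
  exact Finset.sum_nonneg fun i _ => mul_self_nonneg _

lemma nsq_pos {ι : Type*} [Fintype ι] {x : ι → ℝ} (hx : x ≠ 0) : 0 < nsq x := by
  rcases (nsq_nonneg x).lt_or_eq with h | h
  · exact h
  · exact absurd (dotProduct_self_eq_zero.1 h.symm) hx

lemma sq_le_nsq {ι : Type*} [Fintype ι] (x : ι → ℝ) (i : ι) : x i ^ 2 ≤ nsq x := by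
  unfold nsq dotProduct
  rw [sq]
  exact Finset.single_le_sum (f := fun i => x i * x i) (fun i _ => mul_self_nonneg _)
    (Finset.mem_univ i)

lemma mulVec_ne_zero_of_det {ι : Type*} [Fintype ι] {T : Matrix ι ι ℝ} (hT : T.det ≠ 0)
    {x : ι → ℝ} (hx : x ≠ 0) : T.mulVec x ≠ 0 := by
  intro h
  exact hT (Matrix.exists_mulVec_eq_zero_iff.1 ⟨x, hx, h⟩)

/-- crude Hadamard bound, logarithmic form -/
lemma log_det_bound {ι : Type*} [Fintype ι] (T W : Matrix ι ι ℝ) (hT : T.det ≠ 0)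
    (hW : W.det ≠ 0) :
    2 * Real.log |T.det| + 2 * Real.log |W.det| - 2 * Real.log ((Fintype.card ι).factorial : ℝ)
      ≤ ∑ i, Real.log (nsq (T.mulVec (W i))) := by
  have hWi : ∀ i, W i ≠ 0 := fun i h => hW (Matrix.det_eq_zero_of_row_eq_zero i (fun j => by
    rw [h]; rfl))
  have hpos : ∀ i, 0 < nsq (T.mulVec (W i)) := fun i =>
    nsq_pos (mulVec_ne_zero_of_det hT (hWi i))
  have h1 : |(T * W.transpose).det| ≤
      (Fintype.card ι).factorial * ∏ i, Real.sqrt (nsq (T.mulVec (W i))) := by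
    rw [Matrix.det_apply]
    refine (Finset.abs_sum_le_sum_abs _ _).trans ?_
    have : ∀ σ ∈ (Finset.univ : Finset (Equiv.Perm ι)),
        |Equiv.Perm.sign σ • ∏ i, (T * W.transpose) (σ i) i| ≤
          ∏ i, Real.sqrt (nsq (T.mulVec (W i))) := by
      intro σ _
      have e : |Equiv.Perm.sign σ • ∏ i, (T * W.transpose) (σ i) i| =
          |∏ i, (T * W.transpose) (σ i) i| := by
        rcases Int.units_eq_one_or (Equiv.Perm.sign σ) with h | h <;> rw [h] <;> simp
      rw [e, Finset.abs_prod]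
      refine Finset.prod_le_prod (fun i _ => abs_nonneg _) fun i _ => ?_
      refine Real.le_sqrt_of_sq_le ?_
      rw [sq_abs]
      exact sq_le_nsq (T.mulVec (W i)) (σ i)
    refine (Finset.sum_le_sum this).trans ?_
    rw [Finset.sum_const, Finset.card_univ, Fintype.card_perm, nsmul_eq_mul]
  rw [Matrix.det_mul, Matrix.det_transpose, abs_mul] at h1
  have h2 := Real.log_le_log (mul_pos (abs_pos.2 hT) (abs_pos.2 hW)) h1
  rw [Real.log_mul (abs_pos.2 hT).ne' (abs_pos.2 hW).ne', Real.log_mul (by positivity)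
    (Finset.prod_ne_zero_iff.2 fun i _ => (Real.sqrt_pos.2 (hpos i)).ne'),
    Real.log_prod (fun i _ => (Real.sqrt_pos.2 (hpos i)).ne')] at h2
  have h3 : ∑ i, Real.log (Real.sqrt (nsq (T.mulVec (W i)))) =
      (∑ i, Real.log (nsq (T.mulVec (W i)))) / 2 := by
    rw [Finset.sum_div]
    exact Finset.sum_congr rfl fun i _ => Real.log_sqrt (hpos i).le
  linarith

lemma isotropic {ι : Type*} [Fintype ι] (r : ℕ) (w : Fin r → Matrix ι ι ℝ)
    (hw : ∀ b, (w b).det ≠ 0) :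
    ∃ T : Matrix ι ι ℝ, T.det ≠ 0 ∧ ∀ u : ι → ℝ,
      ∑ b, ∑ i, (T.mulVec (w b i) ⬝ᵥ u) ^ 2 / nsq (T.mulVec (w b i)) ≤ 2 * r * nsq u := by
  rcases Nat.eq_zero_or_pos r with hr | hr
  · subst hr
    exact ⟨1, by simp, fun u => by simp⟩
  have hr' : (0 : ℝ) < r := by exact_mod_cast hr
  have hwi : ∀ b i, w b i ≠ 0 := fun b i h => hw b (Matrix.det_eq_zero_of_row_eq_zero i (fun j => by
    rw [h]; rfl))
  set Φ : Matrix ι ι ℝ → ℝ := fun T =>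
    (∑ b, ∑ i, Real.log (nsq (T.mulVec (w b i)))) - 2 * r * Real.log |T.det| with hΦ
  set A : Set ℝ := Set.image Φ {T | T.det ≠ 0} with hA
  have hbdd : BddBelow A := by
    refine ⟨∑ b, (2 * Real.log |(w b).det| - 2 * Real.log ((Fintype.card ι).factorial : ℝ)), ?_⟩
    rintro _ ⟨T, hT, rfl⟩
    have : ∑ b : Fin r, (2 * Real.log |T.det| + 2 * Real.log |(w b).det|
        - 2 * Real.log ((Fintype.card ι).factorial : ℝ)) ≤
        ∑ b, ∑ i, Real.log (nsq (T.mulVec (w b i))) :=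
      Finset.sum_le_sum fun b _ => log_det_bound T (w b) hT (hw b)
    have e : ∑ b : Fin r, (2 * Real.log |T.det| + 2 * Real.log |(w b).det|
        - 2 * Real.log ((Fintype.card ι).factorial : ℝ)) =
        2 * r * Real.log |T.det| +
        ∑ b, (2 * Real.log |(w b).det| - 2 * Real.log ((Fintype.card ι).factorial : ℝ)) := by
      simp_rw [add_sub_assoc]
      rw [Finset.sum_add_distrib]
      simp
      ring
    simp only [hΦ]
    linarith
  have hne : A.Nonempty := ⟨Φ 1, 1, by simp, rfl⟩
  obtain ⟨_, ⟨T, hT, rfl⟩, hlt⟩ := Real.lt_sInf_add_pos hne (show (0 : ℝ) < r * (1 / 10) by positivity)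
  refine ⟨T, hT, ?_⟩
  -- unit vectors first
  have key : ∀ u : ι → ℝ, nsq u = 1 →
      ∑ b, ∑ i, (T.mulVec (w b i) ⬝ᵥ u) ^ 2 / nsq (T.mulVec (w b i)) ≤ 2 * r := by
    intro u hu
    by_contra hcon
    push Not at hcon
    set S : Matrix ι ι ℝ := 1 - (1 / 2 : ℝ) • Matrix.vecMulVec u u with hS
    have hSv : ∀ x, S.mulVec x = x - ((u ⬝ᵥ x) / 2) • u := by
      intro x
      rw [hS, Matrix.sub_mulVec, Matrix.one_mulVec, Matrix.smul_mulVec, Matrix.vecMulVec_mulVec]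
      ext i
      simp
      ring
    have hSn : ∀ x, nsq (S.mulVec x) = nsq x - 3 / 4 * (x ⬝ᵥ u) ^ 2 := by
      intro x
      rw [hSv]
      unfold nsq at hu ⊢
      simp only [sub_dotProduct, dotProduct_sub, smul_dotProduct, dotProduct_smul, hu, smul_eq_mul]
      rw [dotProduct_comm u x]
      ring
    have hSd : S.det = 1 / 2 := by
      have := Matrix.det_one_add_replicateCol_mul_replicateRow (ι := Unit) ((-(1 / 2 : ℝ)) • u) u
      have e : S = 1 + Matrix.replicateCol Unit ((-(1 / 2 : ℝ)) • u) * Matrix.replicateRow Unit u := by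
        ext i j
        simp [hS, Matrix.vecMulVec, Matrix.mul_apply]
        ring
      rw [e, this, dotProduct_smul]
      unfold nsq at hu
      rw [hu]
      norm_num
    have hST : (S * T).det ≠ 0 := by
      rw [Matrix.det_mul, hSd]
      exact mul_ne_zero (by norm_num) hT
    have h1 : sInf A ≤ Φ (S * T) := csInf_le hbdd ⟨S * T, hST, rfl⟩
    have h2 : ∀ b i, Real.log (nsq ((S * T).mulVec (w b i))) ≤ Real.log (nsq (T.mulVec (w b i)))
        - 3 / 4 * ((T.mulVec (w b i) ⬝ᵥ u) ^ 2 / nsq (T.mulVec (w b i))) := by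
      intro b i
      have hp := nsq_pos (mulVec_ne_zero_of_det hT (hwi b i))
      have hp2 := nsq_pos (mulVec_ne_zero_of_det hST (hwi b i))
      rw [← Matrix.mulVec_mulVec, hSn] at hp2 ⊢
      set N := nsq (T.mulVec (w b i))
      set c := (T.mulVec (w b i) ⬝ᵥ u) ^ 2
      have e : N - 3 / 4 * c = N * (1 - 3 / 4 * (c / N)) := by field_simp
      have hp3 : 0 < 1 - 3 / 4 * (c / N) := by
        rw [e] at hp2
        exact (pos_iff_pos_of_mul_pos hp2).1 hp
      rw [e, Real.log_mul hp.ne' hp3.ne']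
      have := Real.log_le_sub_one_of_pos hp3
      linarith
    have h3 : ∑ b, ∑ i, Real.log (nsq ((S * T).mulVec (w b i))) ≤
        ∑ b, ∑ i, Real.log (nsq (T.mulVec (w b i))) - 3 / 4 *
        ∑ b, ∑ i, (T.mulVec (w b i) ⬝ᵥ u) ^ 2 / nsq (T.mulVec (w b i)) := by
      refine (Finset.sum_le_sum fun b _ => Finset.sum_le_sum fun i _ => h2 b i).trans (le_of_eq ?_)
      simp only [Finset.sum_sub_distrib, Finset.mul_sum]
    have h4 : Real.log |(S * T).det| = Real.log |T.det| - Real.log 2 := by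
      rw [Matrix.det_mul, hSd, abs_mul, Real.log_mul (by norm_num) (abs_pos.2 hT).ne']
      rw [abs_of_pos (by norm_num), one_div, Real.log_inv]
      ring
    have h5 := Real.log_two_lt_d9
    simp only [hΦ] at h1 hlt
    rw [h4] at h1
    nlinarith
  intro u
  by_cases hu : u = 0
  · subst hu
    simp [nsq]
  have hp := nsq_pos hu
  have h1 := key ((Real.sqrt (nsq u))⁻¹ • u) (by
    unfold nsq at hp ⊢
    rw [smul_dotProduct, dotProduct_smul, smul_eq_mul, smul_eq_mul, ← mul_assoc, ← mul_inv,
      Real.mul_self_sqrt hp.le, inv_mul_cancel₀ hp.ne'])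
  have h2 : ∀ b i, (T.mulVec (w b i) ⬝ᵥ u) ^ 2 / nsq (T.mulVec (w b i)) =
      nsq u * ((T.mulVec (w b i) ⬝ᵥ ((Real.sqrt (nsq u))⁻¹ • u)) ^ 2 / nsq (T.mulVec (w b i))) := by
    intro b i
    rw [dotProduct_smul, smul_eq_mul, mul_pow, inv_pow, Real.sq_sqrt hp.le]
    field_simp
  simp_rw [h2, ← Finset.mul_sum]
  nlinarith


/-! ### Part 2: Rademacher averages -/

/-- sign vector -/
def rad {ι : Type*} (g : ι → Bool) : ι → ℝ := fun i => if g i then 1 else -1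

lemma rad_sq {ι : Type*} (g : ι → Bool) (i : ι) : rad g i ^ 2 = 1 := by
  unfold rad; split_ifs <;> norm_num

lemma rad_ne_zero {ι : Type*} [Nonempty ι] (g : ι → Bool) : rad g ≠ 0 := by
  intro h
  have := rad_sq g (Classical.arbitrary ι)
  rw [h] at this
  norm_num at this

lemma rad_flip_sum {ι : Type*} [Fintype ι] (i : ι) (s : Finset ι) (hi : i ∉ s) (u : ι → ℝ)
    (H : ℝ → ℝ) : ∑ g : ι → Bool, rad g i * H (∑ j ∈ s, rad g j * u j) = 0 := by
  set e : (ι → Bool) → (ι → Bool) := fun g => Function.update g i (!g i) with he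
  have hinv : Function.Involutive e := by
    intro g
    ext j
    by_cases h : j = i
    · subst h; simp [he]
    · simp [he, h]
  have h1 : ∑ g : ι → Bool, rad g i * H (∑ j ∈ s, rad g j * u j) =
      ∑ g : ι → Bool, rad (e g) i * H (∑ j ∈ s, rad (e g) j * u j) :=
    (Equiv.sum_comp (Function.Involutive.toPerm e hinv)
      (fun g => rad g i * H (∑ j ∈ s, rad g j * u j))).symm
  have h2 : ∀ g : ι → Bool, rad (e g) i * H (∑ j ∈ s, rad (e g) j * u j) =
      - (rad g i * H (∑ j ∈ s, rad g j * u j)) := by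
    intro g
    have a1 : rad (e g) i = - rad g i := by
      simp only [rad, he, Function.update_self]
      cases g i <;> simp
    have a2 : ∑ j ∈ s, rad (e g) j * u j = ∑ j ∈ s, rad g j * u j := by
      refine Finset.sum_congr rfl fun j hj => ?_
      have : j ≠ i := fun h => hi (h ▸ hj)
      simp [rad, he, this]
    rw [a1, a2]; ring
  simp_rw [h2] at h1
  rw [Finset.sum_neg_distrib] at h1
  linarith

lemma rad_moments {ι : Type*} [Fintype ι] (u : ι → ℝ) (s : Finset ι) :
    ∑ g : ι → Bool, (∑ j ∈ s, rad g j * u j) ^ 2 =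
      (Fintype.card (ι → Bool) : ℝ) * ∑ j ∈ s, u j ^ 2 ∧
    ∑ g : ι → Bool, (∑ j ∈ s, rad g j * u j) ^ 4 ≤
      (Fintype.card (ι → Bool) : ℝ) * (3 * (∑ j ∈ s, u j ^ 2) ^ 2) := by
  induction s using Finset.induction_on with
  | empty => simp
  | insert i s hi ih =>
    obtain ⟨ih2, ih4⟩ := ih
    have f1 := rad_flip_sum i s hi u (fun x => x)
    have f3 := rad_flip_sum i s hi u (fun x => x ^ 3)
    set E : ℝ := (Fintype.card (ι → Bool) : ℝ) with hE
    have hE0 : 0 ≤ E := by positivity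
    have hc : ∀ c : ℝ, ∑ g : ι → Bool, c = E * c := by
      intro c; simp [hE]
    simp_rw [Finset.sum_insert hi]
    have e2 : ∀ g : ι → Bool, (rad g i * u i + ∑ j ∈ s, rad g j * u j) ^ 2 =
        u i ^ 2 + 2 * u i * (rad g i * (∑ j ∈ s, rad g j * u j))
          + (∑ j ∈ s, rad g j * u j) ^ 2 := by
      intro g
      have := rad_sq g i
      linear_combination u i ^ 2 * this
    have e4 : ∀ g : ι → Bool, (rad g i * u i + ∑ j ∈ s, rad g j * u j) ^ 4 =
        u i ^ 4 + 4 * u i ^ 3 * (rad g i * (∑ j ∈ s, rad g j * u j))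
          + 6 * u i ^ 2 * (∑ j ∈ s, rad g j * u j) ^ 2
          + 4 * u i * (rad g i * (∑ j ∈ s, rad g j * u j) ^ 3)
          + (∑ j ∈ s, rad g j * u j) ^ 4 := by
      intro g
      have := rad_sq g i
      linear_combination (u i ^ 4 * (rad g i ^ 2 + 1) + 4 * u i ^ 3 * rad g i *
        (∑ j ∈ s, rad g j * u j) + 6 * u i ^ 2 * (∑ j ∈ s, rad g j * u j) ^ 2) * this
    simp_rw [e2, e4, Finset.sum_add_distrib, ← Finset.mul_sum, hc, f1, f3, ih2]
    constructor
    · ring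
    · nlinarith [mul_nonneg hE0 (sq_nonneg (u i ^ 2))]

lemma rad_sum_sq {ι : Type*} [Fintype ι] (u : ι → ℝ) :
    ∑ g : ι → Bool, (rad g ⬝ᵥ u) ^ 2 = (Fintype.card (ι → Bool) : ℝ) * nsq u := by
  have := (rad_moments u Finset.univ).1
  simpa [dotProduct, nsq, sq] using this

lemma rad_sum_four {ι : Type*} [Fintype ι] (u : ι → ℝ) :
    ∑ g : ι → Bool, (rad g ⬝ᵥ u) ^ 4 ≤ (Fintype.card (ι → Bool) : ℝ) * (3 * nsq u ^ 2) := by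
  have := (rad_moments u Finset.univ).2
  have e : ∑ j, u j ^ 2 = nsq u := by simp [dotProduct, nsq, sq]
  rw [e] at this
  exact this


/-! ### Part 3: splitting lemma -/

lemma mul_neg_iff_pos_left {a b : ℝ} (ha : 0 < a) : a * b < 0 ↔ b < 0 := by
  constructor
  · intro h
    by_contra hb
    have := mul_nonneg ha.le (not_lt.1 hb)
    linarith
  · intro h
    exact mul_neg_of_pos_of_neg ha h

lemma split_pointwise {α : Type*} (S : Finset α) (hS : 0 < S.card) (a : α → ℝ) :
    ((S.filter fun p => 0 < a p).card : ℝ) ^ 2 + ((S.filter fun p => a p < 0).card : ℝ) ^ 2 ≤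
      (S.card : ℝ) ^ 2 - (S.card : ℝ) / 4 * (3 / 4 * (∑ p ∈ S, a p ^ 2)
        - 4 / 27 * (∑ p ∈ S, a p ^ 4) - 5 * (∑ p ∈ S, a p) ^ 2 / S.card - S.card / 20) := by
  set s : ℝ := (S.card : ℝ) with hs
  have hs0 : 0 < s := by rw [hs]; exact_mod_cast hS
  set mp : ℝ := ((S.filter fun p => 0 < a p).card : ℝ) with hmp
  set mn : ℝ := ((S.filter fun p => a p < 0).card : ℝ) with hmn
  have hsum : mp + mn ≤ s := by
    have hd : Disjoint (S.filter fun p => 0 < a p) (S.filter fun p => a p < 0) := by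
      rw [Finset.disjoint_filter]
      intro p _ h1 h2
      linarith
    have := Finset.card_le_card (Finset.union_subset (Finset.filter_subset (fun p => 0 < a p) S)
      (Finset.filter_subset (fun p => a p < 0) S))
    rw [Finset.card_union_of_disjoint hd] at this
    rw [hmp, hmn, hs]
    exact_mod_cast this
  have hmp0 : 0 ≤ mp := by rw [hmp]; positivity
  have hmn0 : 0 ≤ mn := by rw [hmn]; positivity
  set X := ∑ p ∈ S, a p with hX
  set Q := ∑ p ∈ S, a p ^ 2 with hQ
  set F := ∑ p ∈ S, a p ^ 4 with hF
  set A := ∑ p ∈ S, |a p| with hA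
  have h1 : A + X ≤ 4 * mp + Q / 4 := by
    have e : mp = ∑ p ∈ S, (if 0 < a p then (1 : ℝ) else 0) := by simp [hmp]
    rw [e, hA, hX, hQ, ← Finset.sum_add_distrib, Finset.mul_sum, Finset.sum_div,
      ← Finset.sum_add_distrib]
    refine Finset.sum_le_sum fun p _ => ?_
    split_ifs with h
    · rw [abs_of_pos h]; nlinarith [sq_nonneg (2 - a p / 2)]
    · rw [abs_of_nonpos (not_lt.1 h)]; nlinarith [sq_nonneg (a p)]
  have h2 : A - X ≤ 4 * mn + Q / 4 := by
    have e : mn = ∑ p ∈ S, (if a p < 0 then (1 : ℝ) else 0) := by simp [hmn]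
    rw [e, hA, hX, hQ, ← Finset.sum_sub_distrib, Finset.mul_sum, Finset.sum_div,
      ← Finset.sum_add_distrib]
    refine Finset.sum_le_sum fun p _ => ?_
    split_ifs with h
    · rw [abs_of_neg h]; nlinarith [sq_nonneg (2 + a p / 2)]
    · rw [abs_of_nonneg (not_lt.1 h)]; nlinarith [sq_nonneg (a p)]
  have h3 : Q - 4 / 27 * F ≤ A := by
    rw [hA, hQ, hF, Finset.mul_sum, ← Finset.sum_sub_distrib]
    refine Finset.sum_le_sum fun p _ => ?_
    have e2 : a p ^ 2 = |a p| ^ 2 := (sq_abs _).symm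
    have e4 : a p ^ 4 = |a p| ^ 4 := by
      rw [show (4 : ℕ) = 2 * 2 from rfl, pow_mul, pow_mul, sq_abs]
    rw [e2, e4]
    set t := |a p|
    have ht : 0 ≤ t := abs_nonneg _
    have : 0 ≤ t * ((t - 3 / 2) ^ 2 * (t + 3)) := by positivity
    nlinarith
  have h4 : |X| ≤ 5 * X ^ 2 / s + s / 20 := by
    have e : 5 * X ^ 2 / s + s / 20 - |X| = 5 / s * (|X| - s / 10) ^ 2 := by
      rw [← sq_abs X]; field_simp; ring
    have : 0 ≤ 5 / s * (|X| - s / 10) ^ 2 := by positivity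
    linarith
  have h5 := le_abs_self X
  have h6 := neg_abs_le X
  set B := 3 / 4 * Q - 4 / 27 * F - 5 * X ^ 2 / s - s / 20 with hB
  have h7 : B ≤ 4 * mp := by linarith
  have h8 : B ≤ 4 * mn := by linarith
  rcases le_or_gt B 0 with hB0 | hB0
  · nlinarith [mul_nonneg hmp0 hmn0]
  · nlinarith [mul_nonneg hmp0 hmn0]

lemma split_iso {α ι : Type*} [Fintype ι] [Nonempty ι] (r : ℕ) (W : Fin r → Matrix ι ι ℝ)
    (hW : ∀ b, (W b).det ≠ 0) (𝒮 : Finset (Finset α)) (J : α → Fin r × ι)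
    (hJ : Set.InjOn J (𝒮.biUnion id : Finset α)) (hr : 0 < r)
    (hS : ∀ S ∈ 𝒮, 200 * r ≤ S.card) :
    ∃ h : ι → ℝ, h ≠ 0 ∧
      ∑ S ∈ 𝒮, (((S.filter fun p => 0 < h ⬝ᵥ W (J p).1 (J p).2).card : ℝ) ^ 2 +
        ((S.filter fun p => h ⬝ᵥ W (J p).1 (J p).2 < 0).card : ℝ) ^ 2) ≤
      19 / 20 * ∑ S ∈ 𝒮, (S.card : ℝ) ^ 2 := by
  obtain ⟨T, hT, hiso⟩ := isotropic r W hW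
  have hWi : ∀ b i, W b i ≠ 0 := fun b i h => hW b (Matrix.det_eq_zero_of_row_eq_zero i (fun j => by
    rw [h]; rfl))
  set z : α → ι → ℝ := fun p => T.mulVec (W (J p).1 (J p).2) with hz
  have hz0 : ∀ p, 0 < nsq (z p) := fun p => nsq_pos (mulVec_ne_zero_of_det hT (hWi _ _))
  set y : α → ι → ℝ := fun p => (Real.sqrt (nsq (z p)))⁻¹ • z p with hy
  have hy1 : ∀ p, nsq (y p) = 1 := by
    intro p
    have hp := hz0 p
    simp only [hy]
    unfold nsq at hp ⊢
    rw [smul_dotProduct, dotProduct_smul, smul_eq_mul, smul_eq_mul, ← mul_assoc, ← mul_inv,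
      Real.mul_self_sqrt hp.le, inv_mul_cancel₀ hp.ne']
  have hyu : ∀ p u, (y p ⬝ᵥ u) ^ 2 = (z p ⬝ᵥ u) ^ 2 / nsq (z p) := by
    intro p u
    simp only [hy]
    rw [smul_dotProduct, smul_eq_mul, mul_pow, inv_pow, Real.sq_sqrt (hz0 p).le]
    field_simp
  have hSiso : ∀ S ∈ 𝒮, ∀ u, ∑ p ∈ S, (y p ⬝ᵥ u) ^ 2 ≤ 2 * r * nsq u := by
    intro S hSm u
    refine le_trans ?_ (hiso u)
    rw [← Fintype.sum_prod_type' (f := fun b i =>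
      (T.mulVec (W b i) ⬝ᵥ u) ^ 2 / nsq (T.mulVec (W b i)))]
    have hinj : Set.InjOn J S := hJ.mono (by
      intro p hp
      exact Finset.mem_coe.2 (Finset.mem_biUnion.2 ⟨S, hSm, hp⟩))
    have e : ∑ p ∈ S, (y p ⬝ᵥ u) ^ 2 = ∑ x ∈ S.image J,
        (T.mulVec (W x.1 x.2) ⬝ᵥ u) ^ 2 / nsq (T.mulVec (W x.1 x.2)) := by
      rw [Finset.sum_image hinj]
      exact Finset.sum_congr rfl fun p _ => hyu p u
    rw [e]
    exact Finset.sum_le_sum_of_subset_of_nonneg (Finset.subset_univ _)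
      fun x _ _ => div_nonneg (sq_nonneg _) (nsq_nonneg _)
  have hlen : ∀ S ∈ 𝒮, nsq (∑ p ∈ S, y p) ≤ 2 * r * S.card := by
    intro S hSm
    set s := ∑ p ∈ S, y p with hs
    have h1 : nsq s = ∑ p ∈ S, y p ⬝ᵥ s := by
      conv_lhs => unfold nsq
      conv_lhs => rw [hs]
      rw [sum_dotProduct, ← hs]
    have h2 : (∑ p ∈ S, y p ⬝ᵥ s) ^ 2 ≤ S.card * ∑ p ∈ S, (y p ⬝ᵥ s) ^ 2 :=
      sq_sum_le_card_mul_sum_sq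
    have h3 := hSiso S hSm s
    rw [← h1] at h2
    rcases (nsq_nonneg s).lt_or_eq with h | h
    · have : nsq s * nsq s ≤ (2 * r * S.card) * nsq s := by
        calc nsq s * nsq s = nsq s ^ 2 := by ring
          _ ≤ _ := h2
          _ ≤ S.card * (2 * r * nsq s) := by gcongr
          _ = _ := by ring
      exact le_of_mul_le_mul_right this h
    · rw [← h]; positivity
  set E : ℝ := (Fintype.card (ι → Bool) : ℝ) with hE
  have hE0 : 0 < E := by rw [hE]; exact_mod_cast Fintype.card_pos
  set C : (ι → Bool) → ℝ := fun g => ∑ S ∈ 𝒮,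
    (((S.filter fun p => 0 < rad g ⬝ᵥ y p).card : ℝ) ^ 2 +
      ((S.filter fun p => rad g ⬝ᵥ y p < 0).card : ℝ) ^ 2) with hC
  have hsum : ∑ g, C g ≤ ∑ g : ι → Bool, 19 / 20 * ∑ S ∈ 𝒮, (S.card : ℝ) ^ 2 := by
    simp only [hC]
    rw [Finset.sum_comm, Finset.sum_const, Finset.card_univ, nsmul_eq_mul, ← hE,
      Finset.mul_sum, Finset.mul_sum]
    refine Finset.sum_le_sum fun S hSm => ?_
    have hc1 := hS S hSm
    have hc0 : 0 < S.card := by omega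
    set s : ℝ := (S.card : ℝ) with hs
    have hs0 : 0 < s := by rw [hs]; exact_mod_cast hc0
    have hrs : 200 * (r : ℝ) ≤ s := by rw [hs]; exact_mod_cast hc1
    refine (Finset.sum_le_sum fun g _ => split_pointwise S hc0 (fun p => rad g ⬝ᵥ y p)).trans ?_
    have hQ : ∑ g : ι → Bool, ∑ p ∈ S, (rad g ⬝ᵥ y p) ^ 2 = E * s := by
      rw [Finset.sum_comm]
      simp_rw [rad_sum_sq, hy1]
      simp [hs, hE]; ring
    have hF : ∑ g : ι → Bool, ∑ p ∈ S, (rad g ⬝ᵥ y p) ^ 4 ≤ 3 * E * s := by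
      rw [Finset.sum_comm]
      refine (Finset.sum_le_sum fun p _ => rad_sum_four (y p)).trans ?_
      simp_rw [hy1]
      simp [hs, hE]
      apply le_of_eq; ring
    have hX : ∑ g : ι → Bool, (∑ p ∈ S, rad g ⬝ᵥ y p) ^ 2 ≤ E * (s ^ 2 / 100) := by
      simp_rw [← dotProduct_sum]
      rw [rad_sum_sq]
      have := hlen S hSm
      rw [← hE]
      refine mul_le_mul_of_nonneg_left ?_ hE0.le
      rw [← hs] at this
      nlinarith
    rw [← hs]
    have e : ∑ g : ι → Bool, (s ^ 2 - s / 4 * (3 / 4 * (∑ p ∈ S, (rad g ⬝ᵥ y p) ^ 2)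
        - 4 / 27 * (∑ p ∈ S, (rad g ⬝ᵥ y p) ^ 4) - 5 * (∑ p ∈ S, rad g ⬝ᵥ y p) ^ 2 / s - s / 20))
        = E * s ^ 2 - s / 4 * (3 / 4 * (∑ g : ι → Bool, ∑ p ∈ S, (rad g ⬝ᵥ y p) ^ 2)
        - 4 / 27 * (∑ g : ι → Bool, ∑ p ∈ S, (rad g ⬝ᵥ y p) ^ 4)
        - 5 * (∑ g : ι → Bool, (∑ p ∈ S, rad g ⬝ᵥ y p) ^ 2) / s - E * (s / 20)) := by
      simp only [Finset.sum_sub_distrib, ← Finset.mul_sum, ← Finset.sum_div, Finset.sum_const,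
        Finset.card_univ, nsmul_eq_mul, ← hE]
      rw [mul_div_assoc E]
    rw [e, hQ]
    have h5 : 5 * (∑ g : ι → Bool, (∑ p ∈ S, rad g ⬝ᵥ y p) ^ 2) / s ≤ 5 * (E * (s ^ 2 / 100)) / s := by
      gcongr
    have h6 : 5 * (E * (s ^ 2 / 100)) / s = E * s / 20 := by field_simp; norm_num
    rw [h6] at h5
    have h7 : E * s * (1 / 5) ≤ 3 / 4 * (E * s)
        - 4 / 27 * (∑ g : ι → Bool, ∑ p ∈ S, (rad g ⬝ᵥ y p) ^ 4)
        - 5 * (∑ g : ι → Bool, (∑ p ∈ S, rad g ⬝ᵥ y p) ^ 2) / s - E * (s / 20) := by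
      nlinarith [mul_pos hE0 hs0]
    have h8 := mul_le_mul_of_nonneg_left h7 (show 0 ≤ s / 4 by positivity)
    nlinarith
  obtain ⟨g, _, hg⟩ := Finset.exists_le_of_sum_le (Finset.univ_nonempty) hsum
  refine ⟨T.transpose.mulVec (rad g), ?_, ?_⟩
  · exact mulVec_ne_zero_of_det (by rwa [Matrix.det_transpose]) (rad_ne_zero g)
  · refine le_trans (le_of_eq ?_) hg
    simp only [hC]
    have e : ∀ p, rad g ⬝ᵥ y p = (Real.sqrt (nsq (z p)))⁻¹ *
        (T.transpose.mulVec (rad g) ⬝ᵥ W (J p).1 (J p).2) := by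
      intro p
      simp only [hy]
      rw [dotProduct_smul, smul_eq_mul, Matrix.mulVec_transpose, ← Matrix.dotProduct_mulVec]
    have hsq : ∀ p, 0 < (Real.sqrt (nsq (z p)))⁻¹ := fun p => inv_pos.2 (Real.sqrt_pos.2 (hz0 p))
    have e1 : ∀ p, (0 < rad g ⬝ᵥ y p) ↔ 0 < T.transpose.mulVec (rad g) ⬝ᵥ W (J p).1 (J p).2 := by
      intro p
      rw [e p]
      exact mul_pos_iff_of_pos_left (hsq p)
    have e2 : ∀ p, (rad g ⬝ᵥ y p < 0) ↔ T.transpose.mulVec (rad g) ⬝ᵥ W (J p).1 (J p).2 < 0 := by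
      intro p
      rw [e p]
      exact mul_neg_iff_pos_left (hsq p)
    simp_rw [e1, e2]

lemma det_add_smul_one_eventually {ι : Type*} [Fintype ι] (A : Matrix ι ι ℝ) :
    ∀ᶠ x : ℝ in nhdsWithin 0 (Set.Ioi 0), (A + x • (1 : Matrix ι ι ℝ)).det ≠ 0 := by
  have h1 : ∀ x : ℝ, (A + x • (1 : Matrix ι ι ℝ)).det = (-A).charpoly.eval x := by
    intro x
    rw [Matrix.eval_charpoly]
    congr 1
    rw [sub_neg_eq_add, add_comm, Matrix.smul_one_eq_diagonal]
    rfl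
  have h2 : (-A).charpoly ≠ 0 := (Matrix.charpoly_monic _).ne_zero
  have h3 : ((-A).charpoly.roots.toFinset : Set ℝ).Finite := Finset.finite_toSet _
  have h4 : ∀ᶠ x : ℝ in nhdsWithin 0 (Set.Ioi 0), x ∉ ((-A).charpoly.roots.toFinset : Set ℝ) := by
    have : nhdsWithin (0 : ℝ) (Set.Ioi 0) ≤ nhdsWithin 0 {0}ᶜ :=
      nhdsWithin_mono _ (fun x hx => ne_of_gt hx)
    refine this ?_
    have hf := h3.subset (Set.inter_subset_left (t := ({0}ᶜ : Set ℝ)))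
    have : ((((-A).charpoly.roots.toFinset : Set ℝ) ∩ {0}ᶜ)ᶜ) ∈ nhds (0 : ℝ) :=
      hf.isClosed.isOpen_compl.mem_nhds (by simp)
    rw [mem_nhdsWithin_iff_exists_mem_nhds_inter]
    refine ⟨_, this, ?_⟩
    rintro x ⟨hx1, hx2⟩ hx3
    exact hx1 ⟨hx3, hx2⟩
  filter_upwards [h4] with x hx
  rw [h1]
  intro h
  apply hx
  simp [h2, h]

lemma exists_vanish {α ι : Type*} [Fintype ι] (U : Finset α) (v : α → ι → ℝ)
    (hlt : U.card < Fintype.card ι) : ∃ h : ι → ℝ, h ≠ 0 ∧ ∀ p ∈ U, h ⬝ᵥ v p = 0 := by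
  let A : (ι → ℝ) →ₗ[ℝ] (U → ℝ) := LinearMap.pi fun p => (dotProductBilin ℝ ℝ).flip (v p)
  have hker : A.ker ≠ ⊥ := LinearMap.ker_ne_bot_of_finrank_lt (by simpa using hlt)
  obtain ⟨h, hh, hh0⟩ := (Submodule.ne_bot_iff _).1 hker
  refine ⟨h, hh0, ?_⟩
  intro p hp
  exact congrFun (LinearMap.mem_ker.1 hh) ⟨p, hp⟩

lemma exists_blocks {u M : ℕ} (hM : 0 < M) (h : M ≤ u) :
    ∃ r, 0 < r ∧ u ≤ r * M ∧ r * M ≤ 2 * u := by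
  refine ⟨u / M + 1, Nat.succ_pos _, ?_, ?_⟩
  · have h1 := Nat.div_add_mod u M
    have h2 := Nat.mod_lt u hM
    rw [add_mul, one_mul, mul_comm]
    omega
  · have := Nat.div_mul_le_self u M
    rw [add_mul, one_mul]
    omega

/-- **Splitting lemma** (a substitute for the polynomial ham sandwich theorem). -/
lemma split_lemma {α ι : Type*} [Fintype ι] [Nonempty ι] (𝒮 : Finset (Finset α))
    (v : α → ι → ℝ)
    (hS : ∀ S ∈ 𝒮, 400 * (𝒮.biUnion id).card ≤ S.card * Fintype.card ι) :
    ∃ h : ι → ℝ, h ≠ 0 ∧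
      ∑ S ∈ 𝒮, (((S.filter fun p => 0 < h ⬝ᵥ v p).card : ℝ) ^ 2 +
        ((S.filter fun p => h ⬝ᵥ v p < 0).card : ℝ) ^ 2) ≤
      19 / 20 * ∑ S ∈ 𝒮, (S.card : ℝ) ^ 2 := by
  set U := 𝒮.biUnion id with hU
  have hSU : ∀ S ∈ 𝒮, S ⊆ U := fun S hSm => Finset.subset_biUnion_of_mem id hSm
  have hM : 0 < Fintype.card ι := Fintype.card_pos
  rcases lt_or_ge U.card (Fintype.card ι) with hlt | hge
  · -- few points: vanish on all of them
    obtain ⟨h, hh0, hz⟩ := exists_vanish U v hlt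
    refine ⟨h, hh0, ?_⟩
    have : ∀ S ∈ 𝒮, (((S.filter fun p => 0 < h ⬝ᵥ v p).card : ℝ) ^ 2 +
        ((S.filter fun p => h ⬝ᵥ v p < 0).card : ℝ) ^ 2) = 0 := by
      intro S hSm
      have h1 : (S.filter fun p => 0 < h ⬝ᵥ v p) = ∅ := by
        rw [Finset.filter_eq_empty_iff]
        intro p hp
        rw [hz p (hSU S hSm hp)]; exact lt_irrefl _
      have h2 : (S.filter fun p => h ⬝ᵥ v p < 0) = ∅ := by
        rw [Finset.filter_eq_empty_iff]
        intro p hp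
        rw [hz p (hSU S hSm hp)]; exact lt_irrefl _
      rw [h1, h2]; simp
    rw [Finset.sum_eq_zero this]
    exact mul_nonneg (by norm_num) (Finset.sum_nonneg fun S _ => sq_nonneg _)
  obtain ⟨r, hr0, hrM, hrM2⟩ := exists_blocks hM hge
  have hS2 : ∀ S ∈ 𝒮, 200 * r ≤ S.card := by
    intro S hSm
    have h1 := hS S hSm
    have : 200 * r * Fintype.card ι ≤ S.card * Fintype.card ι := by nlinarith
    exact Nat.le_of_mul_le_mul_right this hM
  obtain ⟨J0⟩ : Nonempty (U ↪ Fin r × ι) :=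
    Function.Embedding.nonempty_of_card_le (by simpa using hrM)
  have : Nonempty (Fin r) := ⟨⟨0, hr0⟩⟩
  obtain ⟨J, hJU⟩ : ∃ J : α → Fin r × ι, ∀ p (h : p ∈ U), J p = J0 ⟨p, h⟩ :=
    ⟨fun p => if h : p ∈ U then J0 ⟨p, h⟩ else Classical.arbitrary _, fun p h => dif_pos h⟩
  have hJinj : Set.InjOn J (U : Finset α) := by
    intro p hp q hq hpq
    rw [hJU p hp, hJU q hq] at hpq
    simpa using J0.injective hpq
  obtain ⟨W0, hW0J⟩ : ∃ W0 : Fin r → Matrix ι ι ℝ, ∀ p ∈ U, W0 (J p).1 (J p).2 = v p := by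
    refine ⟨fun b i => if h : ∃ p : U, J0 p = (b, i) then v h.choose else 0, ?_⟩
    intro p hp
    have hex : ∃ q : U, J0 q = ((J p).1, (J p).2) := ⟨⟨p, hp⟩, by rw [hJU p hp]⟩
    have : hex.choose = ⟨p, hp⟩ := by
      apply J0.injective
      rw [hex.choose_spec, hJU p hp]
    show (if h : ∃ q : U, J0 q = ((J p).1, (J p).2) then v h.choose else 0) = v p
    rw [dif_pos hex, this]
  have hev : ∀ᶠ x : ℝ in nhdsWithin 0 (Set.Ioi 0), ∀ b, (W0 b + x • (1 : Matrix ι ι ℝ)).det ≠ 0 :=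
    Filter.eventually_all.2 fun b => det_add_smul_one_eventually (W0 b)
  have hstep : ∀ᶠ x : ℝ in nhdsWithin 0 (Set.Ioi 0), ∃ h : ι → ℝ, h ∈ Metric.sphere (0 : ι → ℝ) 1 ∧
      ∑ S ∈ 𝒮, (((S.filter fun p => 0 < h ⬝ᵥ (W0 (J p).1 + x • (1 : Matrix ι ι ℝ)) (J p).2).card : ℝ) ^ 2 +
        ((S.filter fun p => h ⬝ᵥ (W0 (J p).1 + x • (1 : Matrix ι ι ℝ)) (J p).2 < 0).card : ℝ) ^ 2) ≤
      19 / 20 * ∑ S ∈ 𝒮, (S.card : ℝ) ^ 2 := by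
    filter_upwards [hev] with x hx
    obtain ⟨h, hh0, hh⟩ := split_iso r (fun b => W0 b + x • (1 : Matrix ι ι ℝ)) hx 𝒮 J hJinj hr0 hS2
    have hn : 0 < ‖h‖ := norm_pos_iff.2 hh0
    refine ⟨‖h‖⁻¹ • h, ?_, ?_⟩
    · rw [mem_sphere_zero_iff_norm, norm_smul, norm_inv, norm_norm, inv_mul_cancel₀ hn.ne']
    · refine le_trans (le_of_eq ?_) hh
      have hi : 0 < ‖h‖⁻¹ := inv_pos.2 hn
      simp_rw [smul_dotProduct, smul_eq_mul, mul_pos_iff_of_pos_left hi, mul_neg_iff_pos_left hi]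
  obtain ⟨x, hx, hxs⟩ := Filter.exists_seq_forall_of_frequently hstep.frequently
  choose h hsph hh using hxs
  obtain ⟨h', hh', φ, hφ, hlim⟩ := (isCompact_sphere (0 : ι → ℝ) 1).tendsto_subseq hsph
  have hx0 : Filter.Tendsto (fun n => x (φ n)) Filter.atTop (nhds 0) :=
    (hx.mono_right nhdsWithin_le_nhds).comp hφ.tendsto_atTop
  have hdot : ∀ p ∈ U, Filter.Tendsto (fun n => h (φ n) ⬝ᵥ
      (W0 (J p).1 + x (φ n) • (1 : Matrix ι ι ℝ)) (J p).2) Filter.atTop (nhds (h' ⬝ᵥ v p)) := by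
    intro p hp
    have e : ∀ n, h (φ n) ⬝ᵥ (W0 (J p).1 + x (φ n) • (1 : Matrix ι ι ℝ)) (J p).2 =
        h (φ n) ⬝ᵥ (v p + x (φ n) • (1 : Matrix ι ι ℝ) (J p).2) := by
      intro n
      have : (W0 (J p).1 + x (φ n) • (1 : Matrix ι ι ℝ)) (J p).2 =
        W0 (J p).1 (J p).2 + x (φ n) • (1 : Matrix ι ι ℝ) (J p).2 := rfl
      rw [this, hW0J p hp]
    simp_rw [e]
    have h1 : Filter.Tendsto (fun n => v p + x (φ n) • (1 : Matrix ι ι ℝ) (J p).2) Filter.atTop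
        (nhds (v p)) := by
      have := (hx0.smul_const ((1 : Matrix ι ι ℝ) (J p).2)).const_add (v p)
      simpa using this
    unfold dotProduct
    refine tendsto_finsetSum _ fun i _ => ?_
    exact ((tendsto_pi_nhds.1 hlim) i).mul ((tendsto_pi_nhds.1 h1) i)
  have hpos : ∀ᶠ n in Filter.atTop, ∀ p ∈ U, (0 < h' ⬝ᵥ v p → 0 < h (φ n) ⬝ᵥ
      (W0 (J p).1 + x (φ n) • (1 : Matrix ι ι ℝ)) (J p).2) ∧ (h' ⬝ᵥ v p < 0 → h (φ n) ⬝ᵥ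
      (W0 (J p).1 + x (φ n) • (1 : Matrix ι ι ℝ)) (J p).2 < 0) := by
    rw [Filter.eventually_all_finset]
    intro p hp
    rw [Filter.eventually_and]
    constructor
    · by_cases hc : 0 < h' ⬝ᵥ v p
      · filter_upwards [(hdot p hp).eventually (lt_mem_nhds hc)] with n hn _ using hn
      · exact Filter.Eventually.of_forall fun n hn => absurd hn hc
    · by_cases hc : h' ⬝ᵥ v p < 0
      · filter_upwards [(hdot p hp).eventually (gt_mem_nhds hc)] with n hn _ using hn
      · exact Filter.Eventually.of_forall fun n hn => absurd hn hc
  obtain ⟨n, hn⟩ := hpos.exists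
  refine ⟨h', ?_, ?_⟩
  · intro h0
    rw [h0] at hh'
    simp at hh'
  · refine le_trans (Finset.sum_le_sum fun S hSm => ?_) (hh (φ n))
    have h1 : (S.filter fun p => 0 < h' ⬝ᵥ v p).card ≤ (S.filter fun p => 0 < h (φ n) ⬝ᵥ
        (W0 (J p).1 + x (φ n) • (1 : Matrix ι ι ℝ)) (J p).2).card := by
      apply Finset.card_le_card
      intro p hp
      rw [Finset.mem_filter] at hp ⊢
      exact ⟨hp.1, (hn p (hSU S hSm hp.1)).1 hp.2⟩
    have h2 : (S.filter fun p => h' ⬝ᵥ v p < 0).card ≤ (S.filter fun p => h (φ n) ⬝ᵥ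
        (W0 (J p).1 + x (φ n) • (1 : Matrix ι ι ℝ)) (J p).2 < 0).card := by
      apply Finset.card_le_card
      intro p hp
      rw [Finset.mem_filter] at hp ⊢
      exact ⟨hp.1, (hn p (hSU S hSm hp.1)).2 hp.2⟩
    gcongr


/-! ### Part 4: partition theorem -/

open MvPolynomial in
lemma exists_poly_of_coeffs (d D : ℕ) (h : (Fin d → Fin (D + 1)) → ℝ) (hh : h ≠ 0) :
    ∃ g : MvPolynomial (Fin d) ℝ, g ≠ 0 ∧ g.totalDegree ≤ d * D ∧
      ∀ p : Fin d → ℝ, eval p g = h ⬝ᵥ (fun a => ∏ i, p i ^ (a i : ℕ)) := by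
  set e : (Fin d → Fin (D + 1)) → (Fin d →₀ ℕ) :=
    fun a => Finsupp.equivFunOnFinite.symm (fun i => (a i : ℕ)) with he
  have hinj : Function.Injective e := by
    intro a b hab
    have h1 := Finsupp.equivFunOnFinite.symm.injective hab
    funext i
    exact Fin.ext (congrFun h1 i)
  refine ⟨∑ a, monomial (e a) (h a), ?_, ?_, ?_⟩
  · intro h0
    apply hh
    funext a
    have h1 := congrArg (coeff (e a)) h0
    rw [coeff_sum] at h1
    simp only [coeff_monomial, coeff_zero] at h1
    rw [Finset.sum_eq_single a] at h1
    · simpa using h1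
    · intro b _ hb
      rw [if_neg]
      intro hc
      exact hb (hinj hc)
    · simp
  · refine (totalDegree_finsetSum _ _).trans ?_
    refine Finset.sup_le fun a _ => ?_
    refine (totalDegree_monomial_le _ _).trans ?_
    rw [Finsupp.sum_fintype _ _ (fun _ => rfl)]
    calc ∑ i, e a i ≤ ∑ i : Fin d, D := Finset.sum_le_sum fun i _ => by
          have := (a i).2
          simp only [he, Finsupp.equivFunOnFinite_symm_apply_apply]
          omega
      _ = d * D := by simp
  · intro p
    rw [map_sum]
    unfold dotProduct
    refine Finset.sum_congr rfl fun a _ => ?_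
    rw [eval_monomial, Finsupp.prod_fintype _ _ (fun _ => pow_zero _)]
    rfl

/-- `σ` is a labelling which is constant along segments avoiding the zero set of `f`. -/
def SignLabel {d : ℕ} (f : MvPolynomial (Fin d) ℝ) (σ : (Fin d → ℝ) → List Bool) : Prop :=
  ∀ (a v : Fin d → ℝ) (s t : ℝ), s ≤ t →
    (∀ u ∈ Set.Icc s t, MvPolynomial.eval (a + u • v) f ≠ 0) → σ (a + s • v) = σ (a + t • v)

lemma continuous_eval_line {d : ℕ} (f : MvPolynomial (Fin d) ℝ) (a v : Fin d → ℝ) :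
    Continuous (fun u : ℝ => MvPolynomial.eval (a + u • v) f) :=
  (MvPolynomial.continuous_eval f).comp (by fun_prop)

lemma SignLabel.mul {d : ℕ} {f : MvPolynomial (Fin d) ℝ} {σ : (Fin d → ℝ) → List Bool}
    (h : SignLabel f σ) (g : MvPolynomial (Fin d) ℝ) :
    SignLabel (f * g) (fun p => decide (0 < MvPolynomial.eval p g) :: σ p) := by
  intro a v s t hst hu
  have hf : ∀ u ∈ Set.Icc s t, MvPolynomial.eval (a + u • v) f ≠ 0 := fun u hu' h0 =>
    hu u hu' (by rw [map_mul, h0, zero_mul])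
  have hg : ∀ u ∈ Set.Icc s t, MvPolynomial.eval (a + u • v) g ≠ 0 := fun u hu' h0 =>
    hu u hu' (by rw [map_mul, h0, mul_zero])
  have hs : s ∈ Set.Icc s t := ⟨le_rfl, hst⟩
  have ht : t ∈ Set.Icc s t := ⟨hst, le_rfl⟩
  have hc : ContinuousOn (fun u : ℝ => MvPolynomial.eval (a + u • v) g) (Set.Icc s t) :=
    (continuous_eval_line g a v).continuousOn
  have hkey : (0 < MvPolynomial.eval (a + s • v) g) ↔ (0 < MvPolynomial.eval (a + t • v) g) := by
    constructor
    · intro h1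
      by_contra h2
      obtain ⟨u, hu1, hu2⟩ := intermediate_value_Icc' hst hc ⟨not_lt.1 h2, h1.le⟩
      exact hg u hu1 hu2
    · intro h1
      by_contra h2
      obtain ⟨u, hu1, hu2⟩ := intermediate_value_Icc hst hc ⟨not_lt.1 h2, h1.le⟩
      exact hg u hu1 hu2
  simp only [h a v s t hst hf, hkey]

/-- The cell with label `c`. -/
def cell {d : ℕ} (P : Finset (Fin d → ℝ)) (f : MvPolynomial (Fin d) ℝ)
    (σ : (Fin d → ℝ) → List Bool) (c : List Bool) : Finset (Fin d → ℝ) :=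
  P.filter fun p => σ p = c ∧ MvPolynomial.eval p f ≠ 0

/-- Weight of a cell. -/
def wcell {d : ℕ} (P : Finset (Fin d → ℝ)) (f : MvPolynomial (Fin d) ℝ)
    (σ : (Fin d → ℝ) → List Bool) (τ : ℝ) (c : List Bool) : ℝ :=
  if τ < ((cell P f σ c).card : ℝ) then ((cell P f σ c).card : ℝ) ^ 2 else 0

lemma sum_card_cell_le {d : ℕ} (P : Finset (Fin d → ℝ)) (f : MvPolynomial (Fin d) ℝ)
    (σ : (Fin d → ℝ) → List Bool) (s : Finset (List Bool)) :
    ∑ c ∈ s, (cell P f σ c).card ≤ P.card := by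
  rw [← Finset.card_biUnion]
  · apply Finset.card_le_card
    intro p hp
    obtain ⟨c, _, hc⟩ := Finset.mem_biUnion.1 hp
    exact (Finset.mem_filter.1 hc).1
  · intro c _ c' _ hcc
    rw [Function.onFun, Finset.disjoint_left]
    intro p hp hp'
    exact hcc ((Finset.mem_filter.1 hp).2.1.symm.trans (Finset.mem_filter.1 hp').2.1)

lemma partition_step {d : ℕ} (P : Finset (Fin d → ℝ)) (f : MvPolynomial (Fin d) ℝ)
    (hf : f ≠ 0) (σ : (Fin d → ℝ) → List Bool) (hσ : SignLabel f σ) (τ : ℝ) (hτ : 0 < τ) (D : ℕ)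
    (hD : 400 * ∑ c ∈ P.image σ, wcell P f σ τ c ≤ (D + 1 : ℝ) ^ d * τ ^ 2) :
    ∃ (f' : MvPolynomial (Fin d) ℝ) (σ' : (Fin d → ℝ) → List Bool), f' ≠ 0 ∧ SignLabel f' σ' ∧
      f'.totalDegree ≤ f.totalDegree + d * D ∧
      ∑ c ∈ P.image σ', wcell P f' σ' τ c ≤ 19 / 20 * ∑ c ∈ P.image σ, wcell P f σ τ c := by
  set B : Finset (List Bool) := (P.image σ).filter fun c => τ < ((cell P f σ c).card : ℝ) with hB
  set 𝒮 : Finset (Finset (Fin d → ℝ)) := B.image (cell P f σ) with h𝒮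
  have hinj : Set.InjOn (cell P f σ) B := by
    intro c hc c' _ hcc
    have h1 : τ < ((cell P f σ c).card : ℝ) := (Finset.mem_filter.1 hc).2
    have h2 : 0 < (cell P f σ c).card := by
      have : (0 : ℝ) < ((cell P f σ c).card : ℝ) := hτ.trans h1
      exact_mod_cast this
    obtain ⟨p, hp⟩ := Finset.card_pos.1 h2
    have hp' := hp
    rw [hcc] at hp'
    exact (Finset.mem_filter.1 hp).2.1.symm.trans (Finset.mem_filter.1 hp').2.1
  set Φ := ∑ c ∈ P.image σ, wcell P f σ τ c with hΦ
  have hΦB : Φ = ∑ c ∈ B, ((cell P f σ c).card : ℝ) ^ 2 := by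
    rw [hΦ, hB, Finset.sum_filter]
    rfl
  have hU : ((𝒮.biUnion id).card : ℝ) * τ ≤ Φ := by
    have h1 : (𝒮.biUnion id).card ≤ ∑ c ∈ B, (cell P f σ c).card := by
      refine Finset.card_biUnion_le.trans ?_
      rw [h𝒮, Finset.sum_image hinj]
      rfl
    have h2 : ((𝒮.biUnion id).card : ℝ) ≤ ∑ c ∈ B, ((cell P f σ c).card : ℝ) := by
      exact_mod_cast h1
    calc ((𝒮.biUnion id).card : ℝ) * τ ≤ (∑ c ∈ B, ((cell P f σ c).card : ℝ)) * τ := by gcongr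
      _ = ∑ c ∈ B, ((cell P f σ c).card : ℝ) * τ := Finset.sum_mul ..
      _ ≤ ∑ c ∈ B, ((cell P f σ c).card : ℝ) ^ 2 := by
          refine Finset.sum_le_sum fun c hc => ?_
          have h1 : τ < ((cell P f σ c).card : ℝ) := (Finset.mem_filter.1 hc).2
          rw [sq]
          gcongr
      _ = Φ := hΦB.symm
  have hcond : ∀ S ∈ 𝒮, 400 * (𝒮.biUnion id).card ≤ S.card * Fintype.card (Fin d → Fin (D + 1)) := by
    intro S hS
    obtain ⟨c, hc, rfl⟩ := Finset.mem_image.1 hS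
    have h1 : τ < ((cell P f σ c).card : ℝ) := (Finset.mem_filter.1 hc).2
    have h2 : (400 * ((𝒮.biUnion id).card : ℝ)) * τ ≤ ((D + 1 : ℝ) ^ d * τ) * τ := by nlinarith
    have h3 := le_of_mul_le_mul_right h2 hτ
    have h4 : (400 * ((𝒮.biUnion id).card : ℝ)) ≤ (cell P f σ c).card * (D + 1 : ℝ) ^ d := by
      refine h3.trans ?_
      rw [mul_comm]
      gcongr
    rw [Fintype.card_fun, Fintype.card_fin, Fintype.card_fin]
    exact_mod_cast h4
  obtain ⟨h, hh0, hh⟩ := split_lemma 𝒮 (fun (p : Fin d → ℝ) (a : Fin d → Fin (D + 1)) =>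
    ∏ i, p i ^ (a i : ℕ)) (fun S hS => by convert hcond S hS)
  obtain ⟨g, hg0, hgD, hgev⟩ := exists_poly_of_coeffs d D h hh0
  simp_rw [← hgev] at hh
  refine ⟨f * g, _, mul_ne_zero hf hg0, hσ.mul g, ?_, ?_⟩
  · exact (MvPolynomial.totalDegree_mul _ _).trans (by omega)
  set σ' : (Fin d → ℝ) → List Bool := fun p => decide (0 < MvPolynomial.eval p g) :: σ p with hσ'
  have hw0 : ∀ c, 0 ≤ wcell P (f * g) σ' τ c := by
    intro c
    unfold wcell
    split_ifs
    · positivity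
    · exact le_rfl
  have hsub : P.image σ' ⊆ (P.image σ).biUnion fun c => {true :: c, false :: c} := by
    intro c hc
    obtain ⟨p, hp, rfl⟩ := Finset.mem_image.1 hc
    refine Finset.mem_biUnion.2 ⟨σ p, Finset.mem_image_of_mem _ hp, ?_⟩
    simp only [hσ']
    by_cases h0 : 0 < MvPolynomial.eval p g <;> simp [h0]
  have hstep1 : ∑ c ∈ P.image σ', wcell P (f * g) σ' τ c ≤
      ∑ c ∈ P.image σ, (wcell P (f * g) σ' τ (true :: c) + wcell P (f * g) σ' τ (false :: c)) := by
    refine (Finset.sum_le_sum_of_subset_of_nonneg hsub fun c _ _ => hw0 c).trans ?_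
    rw [Finset.sum_biUnion]
    · refine Finset.sum_le_sum fun c _ => ?_
      rw [Finset.sum_pair (by simp)]
    · intro c _ c' _ hcc
      rw [Function.onFun, Finset.disjoint_left]
      intro x hx hx'
      simp only [Finset.mem_insert, Finset.mem_singleton] at hx hx'
      rcases hx with rfl | rfl <;> rcases hx' with h1 | h1 <;> simp_all
  have ht : ∀ c, cell P (f * g) σ' (true :: c) ⊆
      (cell P f σ c).filter fun p => 0 < MvPolynomial.eval p g := by
    intro c p hp
    obtain ⟨hp1, hp2, hp3⟩ := Finset.mem_filter.1 hp
    simp only [hσ', List.cons.injEq, decide_eq_true_eq] at hp2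
    rw [map_mul] at hp3
    exact Finset.mem_filter.2 ⟨Finset.mem_filter.2 ⟨hp1, hp2.2, left_ne_zero_of_mul hp3⟩, hp2.1⟩
  have hf' : ∀ c, cell P (f * g) σ' (false :: c) ⊆
      (cell P f σ c).filter fun p => MvPolynomial.eval p g < 0 := by
    intro c p hp
    obtain ⟨hp1, hp2, hp3⟩ := Finset.mem_filter.1 hp
    simp only [hσ', List.cons.injEq, decide_eq_false_iff_not] at hp2
    rw [map_mul] at hp3
    exact Finset.mem_filter.2 ⟨Finset.mem_filter.2 ⟨hp1, hp2.2, left_ne_zero_of_mul hp3⟩,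
      lt_of_le_of_ne (not_lt.1 hp2.1) (right_ne_zero_of_mul hp3)⟩
  have hgen : ∀ c (A A' : Finset (Fin d → ℝ)), A ⊆ A' → A' ⊆ cell P f σ c →
      (if τ < (A.card : ℝ) then (A.card : ℝ) ^ 2 else 0) ≤
        if τ < ((cell P f σ c).card : ℝ) then (A'.card : ℝ) ^ 2 else 0 := by
    intro c A A' h1 h2
    have h3 : (A.card : ℝ) ≤ A'.card := by exact_mod_cast Finset.card_le_card h1
    have h4 : (A'.card : ℝ) ≤ (cell P f σ c).card := by exact_mod_cast Finset.card_le_card h2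
    split_ifs with h5 h6 h6
    · gcongr
    · exfalso; linarith
    · positivity
    · exact le_rfl
  have hstep2 : ∑ c ∈ P.image σ, (wcell P (f * g) σ' τ (true :: c) + wcell P (f * g) σ' τ (false :: c))
      ≤ ∑ c ∈ B, ((((cell P f σ c).filter fun p => 0 < MvPolynomial.eval p g).card : ℝ) ^ 2 +
        (((cell P f σ c).filter fun p => MvPolynomial.eval p g < 0).card : ℝ) ^ 2) := by
    rw [hB, Finset.sum_filter]
    refine Finset.sum_le_sum fun c _ => ?_
    have h1 := hgen c _ _ (ht c) (Finset.filter_subset _ _)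
    have h2 := hgen c _ _ (hf' c) (Finset.filter_subset _ _)
    by_cases h5 : τ < ((cell P f σ c).card : ℝ)
    · rw [if_pos h5] at h1 h2 ⊢
      exact add_le_add h1 h2
    · rw [if_neg h5] at h1 h2 ⊢
      have h3 := add_le_add h1 h2
      rw [add_zero] at h3
      exact h3
  refine hstep1.trans (hstep2.trans ?_)
  rw [h𝒮, Finset.sum_image hinj, Finset.sum_image hinj, ← hΦB] at hh
  exact hh

lemma partition_inner {d : ℕ} (hd : 0 < d) (P : Finset (Fin d → ℝ)) (τ : ℝ) (hτ : 0 < τ) (n : ℕ) :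
    ∀ (x : ℝ), 0 < x → x * (1 - 1 / (20 * d : ℝ)) ^ n < 1 →
    ∀ (f : MvPolynomial (Fin d) ℝ) (σ : (Fin d → ℝ) → List Bool), f ≠ 0 → SignLabel f σ →
    ∑ c ∈ P.image σ, wcell P f σ τ c ≤ x ^ d * τ ^ 2 →
    ∃ (f' : MvPolynomial (Fin d) ℝ) (σ' : (Fin d → ℝ) → List Bool), f' ≠ 0 ∧ SignLabel f' σ' ∧
      (f'.totalDegree : ℝ) ≤ f.totalDegree + 8040 * d ^ 2 * x ∧
      ∀ c, ((cell P f' σ' c).card : ℝ) ≤ τ := by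
  have hd1 : (1 : ℝ) ≤ d := by exact_mod_cast hd
  have hsmall : ∀ (x : ℝ), 0 < x → x < 1 →
    ∀ (f : MvPolynomial (Fin d) ℝ) (σ : (Fin d → ℝ) → List Bool), f ≠ 0 → SignLabel f σ →
    ∑ c ∈ P.image σ, wcell P f σ τ c ≤ x ^ d * τ ^ 2 →
    ∃ (f' : MvPolynomial (Fin d) ℝ) (σ' : (Fin d → ℝ) → List Bool), f' ≠ 0 ∧ SignLabel f' σ' ∧
      (f'.totalDegree : ℝ) ≤ f.totalDegree + 8040 * d ^ 2 * x ∧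
      ∀ c, ((cell P f' σ' c).card : ℝ) ≤ τ := by
    intro x hx hx1 f σ hf hσ hΦ
    refine ⟨f, σ, hf, hσ, by have : 0 ≤ 8040 * d ^ 2 * x := by positivity
                             linarith, ?_⟩
    intro c
    by_contra hc
    push Not at hc
    have h2 : 0 < (cell P f σ c).card := by
      have : (0 : ℝ) < ((cell P f σ c).card : ℝ) := hτ.trans hc
      exact_mod_cast this
    obtain ⟨p, hp⟩ := Finset.card_pos.1 h2
    obtain ⟨hp1, hp2, hp3⟩ := Finset.mem_filter.1 hp
    have hcm : c ∈ P.image σ := hp2 ▸ Finset.mem_image_of_mem _ hp1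
    have h3 : wcell P f σ τ c ≤ ∑ c ∈ P.image σ, wcell P f σ τ c :=
      Finset.single_le_sum (f := fun c => wcell P f σ τ c) (fun c _ => by
        unfold wcell
        split_ifs
        · positivity
        · exact le_rfl) hcm
    unfold wcell at h3
    rw [if_pos hc] at h3
    have h4 : x ^ d < 1 := pow_lt_one₀ hx.le hx1 hd.ne'
    have h5 : τ ^ 2 < ((cell P f σ c).card : ℝ) ^ 2 := by gcongr
    have h6 : x ^ d * τ ^ 2 ≤ 1 * τ ^ 2 := by gcongr
    have h7 : (∑ c ∈ P.image σ, if τ < ((cell P f σ c).card : ℝ) then ((cell P f σ c).card : ℝ) ^ 2 else 0)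
       = ∑ c ∈ P.image σ, wcell P f σ τ c := rfl
    rw [h7] at h3
    linarith
  set ρ : ℝ := 1 - 1 / (20 * d : ℝ) with hρ
  have hi0 : 0 < 1 / (20 * d : ℝ) := by positivity
  have hi1 : 1 / (20 * d : ℝ) ≤ 1 / 20 := by
    apply one_div_le_one_div_of_le <;> linarith
  have hρ0 : 0 < ρ := by linarith
  have hρd : 19 / 20 ≤ ρ ^ d := by
    have h1 := one_add_mul_le_pow (a := -(1 / (20 * d : ℝ))) (by linarith) d
    have h2 : (1 : ℝ) + d * -(1 / (20 * d : ℝ)) = 19 / 20 := by field_simp; norm_num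
    rw [h2] at h1
    rw [hρ, sub_eq_add_neg]
    exact h1
  induction n with
  | zero =>
    intro x hx hx1
    exact hsmall x hx (by simpa using hx1)
  | succ n ih =>
    intro x hx hx1 f σ hf hσ hΦ
    rcases lt_or_ge x 1 with h1 | h1
    · exact hsmall x hx h1 f σ hf hσ hΦ
    set D : ℕ := ⌈400 * x⌉₊ with hD
    have hDl : 400 * x ≤ D := Nat.le_ceil _
    have hDu : (D : ℝ) < 400 * x + 1 := Nat.ceil_lt_add_one (by positivity)
    have hpow : 400 * x ^ d ≤ (D + 1 : ℝ) ^ d := by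
      calc 400 * x ^ d ≤ 400 ^ d * x ^ d := by
            gcongr
            exact le_self_pow₀ (by norm_num) hd.ne'
        _ = (400 * x) ^ d := (mul_pow _ _ _).symm
        _ ≤ (D + 1 : ℝ) ^ d := by
            gcongr
            linarith
    obtain ⟨f1, σ1, hf1, hσ1, hdeg1, hΦ1⟩ := partition_step P f hf σ hσ τ hτ D (by
      calc 400 * ∑ c ∈ P.image σ, wcell P f σ τ c ≤ 400 * (x ^ d * τ ^ 2) := by gcongr
        _ = (400 * x ^ d) * τ ^ 2 := by ring
        _ ≤ _ := by gcongr)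
    obtain ⟨f2, σ2, hf2, hσ2, hdeg2, hc2⟩ := ih (x * ρ) (by positivity)
      (by rw [mul_assoc, ← pow_succ']; exact hx1) f1 σ1 hf1 hσ1 (by
        refine hΦ1.trans ?_
        have hx2 : 0 ≤ x ^ d * τ ^ 2 := by positivity
        calc _ ≤ 19 / 20 * (x ^ d * τ ^ 2) := by gcongr
          _ ≤ ρ ^ d * (x ^ d * τ ^ 2) := by gcongr
          _ = _ := by rw [mul_pow]; ring)
    refine ⟨f2, σ2, hf2, hσ2, ?_, hc2⟩
    have hdeg1' : (f1.totalDegree : ℝ) ≤ f.totalDegree + d * D := by exact_mod_cast hdeg1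
    have h3 : (d : ℝ) * D ≤ d * (401 * x) := by gcongr; linarith
    have h4 : 8040 * (d : ℝ) ^ 2 * (x * ρ) = 8040 * d ^ 2 * x - 402 * d * x := by
      rw [hρ]; field_simp; ring
    have h5 : 0 ≤ d * x := by positivity
    nlinarith

/-- **Partition theorem.** -/
theorem partition_thm {d : ℕ} (hd : 0 < d) (P : Finset (Fin d → ℝ)) (k : ℕ) :
    ∃ (f : MvPolynomial (Fin d) ℝ) (σ : (Fin d → ℝ) → List Bool), f ≠ 0 ∧ SignLabel f σ ∧
      (f.totalDegree : ℝ) ≤ 32160 * d ^ 2 * 2 ^ k ∧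
      ∀ c, ((cell P f σ c).card : ℝ) ≤ P.card / (2 ^ d) ^ k := by
  have htriv : SignLabel (1 : MvPolynomial (Fin d) ℝ) (fun _ => []) := fun _ _ _ _ _ _ => rfl
  rcases Nat.eq_zero_or_pos P.card with hP | hP
  · refine ⟨1, fun _ => [], one_ne_zero, htriv, ?_, ?_⟩
    · rw [MvPolynomial.totalDegree_one, Nat.cast_zero]; positivity
    · intro c
      have : (cell P 1 (fun _ => []) c).card ≤ P.card := Finset.card_le_card (Finset.filter_subset _ _)
      rw [hP] at this ⊢
      have h0 : (cell P 1 (fun _ => []) c).card = 0 := by omega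
      rw [h0]; simp
  induction k with
  | zero =>
    refine ⟨1, fun _ => [], one_ne_zero, htriv, ?_, ?_⟩
    · rw [MvPolynomial.totalDegree_one, Nat.cast_zero]; positivity
    · intro c
      have : (cell P 1 (fun _ => []) c).card ≤ P.card := Finset.card_le_card (Finset.filter_subset _ _)
      simpa using this
  | succ k ih =>
    obtain ⟨f, σ, hf, hσ, hdeg, hc⟩ := ih
    have hP0 : (0 : ℝ) < P.card := by exact_mod_cast hP
    obtain ⟨τ, hτ⟩ : ∃ τ : ℝ, τ = P.card / (2 ^ d) ^ (k + 1) := ⟨_, rfl⟩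
    have hτ0 : 0 < τ := by rw [hτ]; positivity
    rw [← hτ]
    have hcell : ∀ c, ((cell P f σ c).card : ℝ) ≤ 2 ^ d * τ := by
      intro c
      refine (hc c).trans (le_of_eq ?_)
      rw [hτ, pow_succ]
      field_simp
    have hm : (P.card : ℝ) = τ * (2 ^ d) ^ (k + 1) := by rw [hτ]; field_simp
    have hΦ : ∑ c ∈ P.image σ, wcell P f σ τ c ≤ ((2 : ℝ) ^ (k + 2)) ^ d * τ ^ 2 := by
      calc ∑ c ∈ P.image σ, wcell P f σ τ c ≤
            ∑ c ∈ P.image σ, (2 ^ d * τ) * ((cell P f σ c).card : ℝ) := by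
            refine Finset.sum_le_sum fun c _ => ?_
            unfold wcell
            split_ifs
            · rw [sq]
              exact mul_le_mul_of_nonneg_right (hcell c) (Nat.cast_nonneg _)
            · exact mul_nonneg (mul_nonneg (pow_nonneg zero_le_two d) hτ0.le) (Nat.cast_nonneg _)
        _ = (2 ^ d * τ) * ((∑ c ∈ P.image σ, (cell P f σ c).card : ℕ) : ℝ) := by
            rw [← Finset.mul_sum]; push_cast; rfl
        _ ≤ (2 ^ d * τ) * P.card := by
            gcongr
            exact sum_card_cell_le P f σ _
        _ = _ := by
            rw [hm, ← pow_mul, ← pow_mul]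
            ring
    have hex : ∃ n : ℕ, (2 : ℝ) ^ (k + 2) * (1 - 1 / (20 * d : ℝ)) ^ n < 1 := by
      have hd1 : (1 : ℝ) ≤ d := by exact_mod_cast hd
      have hi0 : 0 < 1 / (20 * d : ℝ) := by positivity
      have hi1 : 1 / (20 * d : ℝ) ≤ 1 / 20 := by
        apply one_div_le_one_div_of_le <;> linarith
      obtain ⟨n, hn⟩ := exists_pow_lt_of_lt_one (show (0 : ℝ) < 1 / 2 ^ (k + 2) by positivity)
        (show 1 - 1 / (20 * d : ℝ) < 1 by linarith)
      refine ⟨n, ?_⟩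
      rw [lt_div_iff₀ (by positivity)] at hn
      linarith
    obtain ⟨n, hn⟩ := hex
    obtain ⟨f', σ', hf', hσ', hdeg', hc'⟩ := partition_inner hd P τ hτ0 n _ (by positivity) hn f σ hf hσ hΦ
    refine ⟨f', σ', hf', hσ', ?_, hc'⟩
    refine hdeg'.trans ?_
    have h1 : (2 : ℝ) ^ (k + 2) = 4 * 2 ^ k := by ring
    have h2 : (2 : ℝ) ^ (k + 1) = 2 * 2 ^ k := by ring
    rw [h1, h2]
    linarith


/-! ### Part 5: tools for lines -/

/-- Restriction of a polynomial to a parametrized line. -/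
def restr {d : ℕ} (a v : Fin d → ℝ) : MvPolynomial (Fin d) ℝ →ₐ[ℝ] Polynomial ℝ :=
  MvPolynomial.aeval (fun i => Polynomial.C (a i) + Polynomial.C (v i) * Polynomial.X)

lemma restr_eval {d : ℕ} (a v : Fin d → ℝ) (f : MvPolynomial (Fin d) ℝ) (t : ℝ) :
    (restr a v f).eval t = MvPolynomial.eval (a + t • v) f := by
  induction f using MvPolynomial.induction_on with
  | C r => simp [restr]
  | add p q hp hq => simp [hp, hq]
  | mul_X p i hp =>
    rw [map_mul, Polynomial.eval_mul, hp, map_mul, MvPolynomial.eval_X]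
    simp [restr]
    left; ring

lemma restr_natDegree {d : ℕ} (a v : Fin d → ℝ) (f : MvPolynomial (Fin d) ℝ) :
    (restr a v f).natDegree ≤ f.totalDegree := by
  have := MvPolynomial.aeval_natDegree_le (m := f.totalDegree) f le_rfl
    (fun i => Polynomial.C (a i) + Polynomial.C (v i) * Polynomial.X) (n := 1) (fun i => by
      compute_degree)
  simpa [restr] using this

lemma restr_eq_zero_iff {d : ℕ} (a v : Fin d → ℝ) (f : MvPolynomial (Fin d) ℝ) :
    restr a v f = 0 ↔ ∀ t : ℝ, MvPolynomial.eval (a + t • v) f = 0 := by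
  constructor
  · intro h t
    rw [← restr_eval, h, Polynomial.eval_zero]
  · intro h
    apply Polynomial.funext
    intro t
    rw [restr_eval, h t, Polynomial.eval_zero]

/-- The zero set. -/
def zer {d : ℕ} (f : MvPolynomial (Fin d) ℝ) : Set (Fin d → ℝ) :=
  {x | MvPolynomial.eval x f = 0}

/-- Parametrized line. -/
def lin {d : ℕ} (a v : Fin d → ℝ) : Set (Fin d → ℝ) := {x | ∃ t : ℝ, x = a + t • v}

lemma isLine_iff {d : ℕ} {ℓ : Set (Fin d → ℝ)} : IsLine ℓ ↔ ∃ a v, v ≠ 0 ∧ ℓ = lin a v := Iff.rfl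

lemma mem_lin {d : ℕ} (a v : Fin d → ℝ) (t : ℝ) : a + t • v ∈ lin a v := ⟨t, rfl⟩

lemma lin_base_mem {d : ℕ} (a v : Fin d → ℝ) : a ∈ lin a v := ⟨0, by simp⟩

lemma lin_subset_zer {d : ℕ} (a v : Fin d → ℝ) (f : MvPolynomial (Fin d) ℝ) :
    lin a v ⊆ zer f ↔ restr a v f = 0 := by
  rw [restr_eq_zero_iff]
  constructor
  · intro h t
    exact h (mem_lin a v t)
  · rintro h x ⟨t, rfl⟩
    exact h t

lemma lin_param_inj {d : ℕ} {a v : Fin d → ℝ} (hv : v ≠ 0) {s t : ℝ}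
    (h : a + s • v = a + t • v) : s = t := by
  have h1 : (s - t) • v = 0 := by
    rw [sub_smul]
    exact sub_eq_zero.2 (add_left_cancel h)
  rcases smul_eq_zero.1 h1 with h2 | h2
  · linarith
  · exact absurd h2 hv

lemma lin_rebase {d : ℕ} {a v p : Fin d → ℝ} (hp : p ∈ lin a v) : lin a v = lin p v := by
  obtain ⟨t, rfl⟩ := hp
  ext x
  constructor
  · rintro ⟨s, rfl⟩
    exact ⟨s - t, by rw [add_assoc, ← add_smul]; congr 2; ring⟩
  · rintro ⟨s, rfl⟩
    exact ⟨t + s, by rw [add_assoc, ← add_smul]⟩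

lemma lin_smul {d : ℕ} {a v : Fin d → ℝ} {c : ℝ} (hc : c ≠ 0) : lin a (c • v) = lin a v := by
  ext x
  constructor
  · rintro ⟨s, rfl⟩
    exact ⟨s * c, by rw [smul_smul]⟩
  · rintro ⟨s, rfl⟩
    exact ⟨s / c, by rw [smul_smul]; congr 2; field_simp⟩

lemma line_eq_of_two {d : ℕ} {ℓ : Set (Fin d → ℝ)} (h : IsLine ℓ) {p q : Fin d → ℝ}
    (hp : p ∈ ℓ) (hq : q ∈ ℓ) (hpq : p ≠ q) : ℓ = lin p (q - p) := by
  obtain ⟨a, v, hv, rfl⟩ := isLine_iff.1 h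
  rw [lin_rebase hp] at hq ⊢
  obtain ⟨t, rfl⟩ := hq
  have ht : t ≠ 0 := by
    rintro rfl
    simp at hpq
  rw [add_sub_cancel_left, lin_smul ht]

lemma line_unique {d : ℕ} {ℓ ℓ' : Set (Fin d → ℝ)} (h : IsLine ℓ) (h' : IsLine ℓ')
    {p q : Fin d → ℝ} (hpq : p ≠ q) (hp : p ∈ ℓ) (hq : q ∈ ℓ) (hp' : p ∈ ℓ') (hq' : q ∈ ℓ') :
    ℓ = ℓ' := by
  rw [line_eq_of_two h hp hq hpq, line_eq_of_two h' hp' hq' hpq]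

/-! ### Incidence bookkeeping -/

lemma inc_eq_sum_lines {d : ℕ} (P : Finset (Fin d → ℝ)) (L : Finset (Set (Fin d → ℝ))) :
    Incidences P L = ∑ ℓ ∈ L, (P.filter fun p => p ∈ ℓ).card := by
  unfold Incidences
  simp_rw [Finset.card_filter]
  rw [Finset.sum_product_right]

lemma inc_eq_sum_points {d : ℕ} (P : Finset (Fin d → ℝ)) (L : Finset (Set (Fin d → ℝ))) :
    Incidences P L = ∑ p ∈ P, (L.filter fun ℓ => p ∈ ℓ).card := by
  unfold Incidences
  simp_rw [Finset.card_filter]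
  rw [Finset.sum_product]

lemma inc_split_points {d : ℕ} (P : Finset (Fin d → ℝ)) (L : Finset (Set (Fin d → ℝ)))
    (A : (Fin d → ℝ) → Prop) :
    Incidences P L = Incidences (P.filter A) L + Incidences (P.filter fun p => ¬ A p) L := by
  simp_rw [inc_eq_sum_points]
  rw [Finset.sum_filter_add_sum_filter_not]

lemma inc_split_lines {d : ℕ} (P : Finset (Fin d → ℝ)) (L : Finset (Set (Fin d → ℝ)))
    (A : Set (Fin d → ℝ) → Prop) :
    Incidences P L = Incidences P (L.filter A) + Incidences P (L.filter fun p => ¬ A p) := by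
  simp_rw [inc_eq_sum_lines]
  rw [Finset.sum_filter_add_sum_filter_not]

lemma inc_mono {d : ℕ} {P P' : Finset (Fin d → ℝ)} {L L' : Finset (Set (Fin d → ℝ))}
    (hP : P ⊆ P') (hL : L ⊆ L') : Incidences P L ≤ Incidences P' L' := by
  unfold Incidences
  exact Finset.card_le_card (Finset.filter_subset_filter _ (Finset.product_subset_product hP hL))

lemma inc_le_mul {d : ℕ} (P : Finset (Fin d → ℝ)) (L : Finset (Set (Fin d → ℝ))) :
    Incidences P L ≤ P.card * L.card := by
  unfold Incidences
  exact (Finset.card_filter_le _ _).trans (Finset.card_product _ _).le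

lemma kst_abstract {α β : Type*} (A : Finset α) (B : Finset β) (R : α → β → Prop)
    (h : ∀ a ∈ A, ∀ a' ∈ A, a ≠ a' → ∀ b ∈ B, ∀ b' ∈ B, R a b → R a' b → R a b' → R a' b' → b = b') :
    ∑ b ∈ B, (A.filter fun a => R a b).card ≤ B.card + A.card ^ 2 := by
  have h1 : ∀ b ∈ B, (A.filter fun a => R a b).card ≤ 1 + (A.filter fun a => R a b).offDiag.card := by
    intro b _
    rw [Finset.offDiag_card]
    set k := (A.filter fun a => R a b).card
    rcases k with _ | _ | k
    · omega
    · omega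
    · have : (k + 1 + 1) * (k + 1 + 1) = k * k + 4 * k + 4 := by ring
      omega
  refine (Finset.sum_le_sum h1).trans ?_
  rw [Finset.sum_add_distrib, Finset.sum_const, smul_eq_mul, mul_one]
  gcongr
  rw [← Finset.card_biUnion]
  · rw [sq, ← Finset.card_product]
    apply Finset.card_le_card
    intro x hx
    obtain ⟨b, hb, hx⟩ := Finset.mem_biUnion.1 hx
    rw [Finset.mem_offDiag] at hx
    exact Finset.mem_product.2 ⟨(Finset.mem_filter.1 hx.1).1, (Finset.mem_filter.1 hx.2.1).1⟩
  · intro b hb b' hb' hbb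
    rw [Function.onFun, Finset.disjoint_left]
    intro x hx hx'
    rw [Finset.mem_offDiag] at hx hx'
    have e1 := Finset.mem_filter.1 hx.1
    have e2 := Finset.mem_filter.1 hx.2.1
    have e3 := Finset.mem_filter.1 hx'.1
    have e4 := Finset.mem_filter.1 hx'.2.1
    exact hbb (h _ e1.1 _ e2.1 hx.2.2 _ hb _ hb' e1.2 e2.2 e3.2 e4.2)

lemma kst1 {d : ℕ} (P : Finset (Fin d → ℝ)) (L : Finset (Set (Fin d → ℝ)))
    (hL : ∀ ℓ ∈ L, IsLine ℓ) : Incidences P L ≤ L.card + P.card ^ 2 := by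
  rw [inc_eq_sum_lines]
  apply kst_abstract P L (fun p ℓ => p ∈ ℓ)
  intro p _ q _ hpq ℓ hℓ ℓ' hℓ' h1 h2 h3 h4
  exact line_unique (hL ℓ hℓ) (hL ℓ' hℓ') hpq h1 h2 h3 h4

lemma kst2 {d : ℕ} (P : Finset (Fin d → ℝ)) (L : Finset (Set (Fin d → ℝ)))
    (hL : ∀ ℓ ∈ L, IsLine ℓ) : Incidences P L ≤ P.card + L.card ^ 2 := by
  rw [inc_eq_sum_points]
  apply kst_abstract L P (fun ℓ p => p ∈ ℓ)
  intro ℓ hℓ ℓ' hℓ' hne p _ q _ h1 h2 h3 h4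
  by_contra hpq
  exact hne (line_unique (hL ℓ hℓ) (hL ℓ' hℓ') hpq h1 h3 h2 h4)

/-! ### Lines against zero sets -/

lemma card_points_line_zer {d : ℕ} (P : Finset (Fin d → ℝ)) {a v : Fin d → ℝ}
    (f : MvPolynomial (Fin d) ℝ) (hf : restr a v f ≠ 0) :
    (P.filter fun p => p ∈ lin a v ∧ p ∈ zer f).card ≤ f.totalDegree := by
  have h1 : (P.filter fun p => p ∈ lin a v ∧ p ∈ zer f) ⊆
      (restr a v f).roots.toFinset.image (fun t => a + t • v) := by
    intro p hp
    obtain ⟨_, ⟨t, rfl⟩, h2⟩ := Finset.mem_filter.1 hp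
    refine Finset.mem_image.2 ⟨t, ?_, rfl⟩
    rw [Multiset.mem_toFinset, Polynomial.mem_roots hf, Polynomial.IsRoot.def, restr_eval]
    exact h2
  calc _ ≤ _ := Finset.card_le_card h1
    _ ≤ (restr a v f).roots.toFinset.card := Finset.card_image_le
    _ ≤ Multiset.card (restr a v f).roots := Multiset.toFinset_card_le _
    _ ≤ (restr a v f).natDegree := Polynomial.card_roots' _
    _ ≤ _ := restr_natDegree _ _ _

lemma card_points_line_zer' {d : ℕ} (P : Finset (Fin d → ℝ)) {ℓ : Set (Fin d → ℝ)} (hℓ : IsLine ℓ)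
    (f : MvPolynomial (Fin d) ℝ) (hf : ¬ ℓ ⊆ zer f) :
    (P.filter fun p => p ∈ ℓ ∧ p ∈ zer f).card ≤ f.totalDegree := by
  obtain ⟨a, v, hv, rfl⟩ := isLine_iff.1 hℓ
  exact card_points_line_zer P f (fun h => hf ((lin_subset_zer a v f).2 h))

lemma card_image_le_card_image {α β γ : Type*} [DecidableEq β] [DecidableEq γ] (S : Finset α) (f : α → β) (g : α → γ)
    (h : ∀ x ∈ S, ∀ y ∈ S, g x = g y → f x = f y) : (S.image f).card ≤ (S.image g).card := by
  have hex : ∀ b : S.image f, ∃ x ∈ S, f x = b := fun b => Finset.mem_image.1 b.2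
  choose r hr hfr using hex
  rw [← Finset.card_attach]
  refine Finset.card_le_card_of_injOn (fun b => g (r b)) ?_ ?_
  · intro b _
    exact Finset.mem_coe.2 (Finset.mem_image_of_mem _ (hr b))
  · intro b _ b' _ hbb
    apply Subtype.ext
    rw [← hfr b, ← hfr b']
    exact h _ (hr b) _ (hr b') hbb

lemma card_labels_le {d : ℕ} (P : Finset (Fin d → ℝ)) {ℓ : Set (Fin d → ℝ)} (hℓ : IsLine ℓ)
    (f : MvPolynomial (Fin d) ℝ) (σ : (Fin d → ℝ) → List Bool) (hσ : SignLabel f σ) :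
    ((P.filter fun p => p ∈ ℓ ∧ p ∉ zer f).image σ).card ≤ f.totalDegree + 1 := by
  obtain ⟨a, v, hv, rfl⟩ := isLine_iff.1 hℓ
  by_cases hf : restr a v f = 0
  · have h1 : (P.filter fun p => p ∈ lin a v ∧ p ∉ zer f) = ∅ := by
      rw [Finset.filter_eq_empty_iff]
      rintro p _ ⟨h1, h2⟩
      exact h2 ((lin_subset_zer a v f).2 hf h1)
    rw [h1]; simp
  have hex : ∀ p : Fin d → ℝ, ∃ t : ℝ, p ∈ lin a v → p = a + t • v := by
    intro p
    by_cases hp : p ∈ lin a v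
    · obtain ⟨t, ht⟩ := hp
      exact ⟨t, fun _ => ht⟩
    · exact ⟨0, fun h => absurd h hp⟩
  choose T hT using hex
  set R := (restr a v f).roots.toFinset with hR
  have hmono : ∀ p q, p ∈ lin a v → p ∉ zer f → q ∈ lin a v → q ∉ zer f → T p ≤ T q →
      (R.filter fun r => r < T p).card = (R.filter fun r => r < T q).card → σ p = σ q := by
    intro p q hp hpz hq hqz hle hcard
    have hsub : (R.filter fun r => r < T p) ⊆ (R.filter fun r => r < T q) := by
      intro r hr
      rw [Finset.mem_filter] at hr ⊢
      exact ⟨hr.1, hr.2.trans_le hle⟩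
    have heq := Finset.eq_of_subset_of_card_le hsub hcard.ge
    rw [hT p hp, hT q hq]
    apply hσ a v _ _ hle
    intro u hu h0
    have hur : u ∈ R := by
      rw [hR, Multiset.mem_toFinset, Polynomial.mem_roots hf, Polynomial.IsRoot.def, restr_eval]
      exact h0
    have huq : u < T q := by
      refine lt_of_le_of_ne hu.2 ?_
      rintro rfl
      apply hqz
      rw [hT q hq]
      exact h0
    have : u ∈ (R.filter fun r => r < T p) := by
      rw [heq]
      exact Finset.mem_filter.2 ⟨hur, huq⟩
    exact absurd (Finset.mem_filter.1 this).2 (not_lt.2 hu.1)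
  refine (card_image_le_card_image _ σ (fun p => (R.filter fun r => r < T p).card) ?_).trans ?_
  · intro p hp q hq hpq
    obtain ⟨_, hp1, hp2⟩ := Finset.mem_filter.1 hp
    obtain ⟨_, hq1, hq2⟩ := Finset.mem_filter.1 hq
    rcases le_total (T p) (T q) with h | h
    · exact hmono p q hp1 hp2 hq1 hq2 h hpq
    · exact (hmono q p hq1 hq2 hp1 hp2 h hpq.symm).symm
  · have hRc : R.card ≤ f.totalDegree := by
      calc R.card ≤ Multiset.card (restr a v f).roots := Multiset.toFinset_card_le _
        _ ≤ (restr a v f).natDegree := Polynomial.card_roots' _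
        _ ≤ _ := restr_natDegree _ _ _
    calc _ ≤ (Finset.range (f.totalDegree + 1)).card := by
          apply Finset.card_le_card
          intro c hc
          obtain ⟨p, _, rfl⟩ := Finset.mem_image.1 hc
          rw [Finset.mem_range]
          have := Finset.card_filter_le R (fun r => r < T p)
          omega
      _ = _ := Finset.card_range _

/-- Decomposition of incidences with respect to a partition. -/
lemma cell_decomp {d : ℕ} (P : Finset (Fin d → ℝ)) (L : Finset (Set (Fin d → ℝ)))
    (hL : ∀ ℓ ∈ L, IsLine ℓ) (f : MvPolynomial (Fin d) ℝ) (σ : (Fin d → ℝ) → List Bool)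
    (hσ : SignLabel f σ) :
    ∃ Lc : List Bool → Finset (Set (Fin d → ℝ)), (∀ c, Lc c ⊆ L) ∧
      ∑ c ∈ P.image σ, (Lc c).card ≤ L.card * (f.totalDegree + 1) ∧
      Incidences P L ≤ ∑ c ∈ P.image σ, Incidences (cell P f σ c) (Lc c) +
        L.card * f.totalDegree +
        Incidences (P.filter fun p => p ∈ zer f) (L.filter fun ℓ => ℓ ⊆ zer f) := by
  refine ⟨fun c => L.filter fun ℓ => ∃ p ∈ cell P f σ c, p ∈ ℓ, fun c => Finset.filter_subset _ _,
    ?_, ?_⟩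
  · calc ∑ c ∈ P.image σ, (L.filter fun ℓ => ∃ p ∈ cell P f σ c, p ∈ ℓ).card
        = ∑ ℓ ∈ L, ((P.image σ).filter fun c => ∃ p ∈ cell P f σ c, p ∈ ℓ).card := by
          simp_rw [Finset.card_filter]
          rw [Finset.sum_comm]
      _ ≤ ∑ ℓ ∈ L, (f.totalDegree + 1) := by
          refine Finset.sum_le_sum fun ℓ hℓ => ?_
          refine le_trans (Finset.card_le_card ?_) (card_labels_le P (hL ℓ hℓ) f σ hσ)
          intro c hc
          obtain ⟨_, p, hp, hpl⟩ := Finset.mem_filter.1 hc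
          obtain ⟨hp1, hp2, hp3⟩ := Finset.mem_filter.1 hp
          exact Finset.mem_image.2 ⟨p, Finset.mem_filter.2 ⟨hp1, hpl, hp3⟩, hp2⟩
      _ = _ := by rw [Finset.sum_const, smul_eq_mul]
  · rw [inc_split_points P L (fun p => p ∈ zer f),
      inc_split_lines (P.filter fun p => p ∈ zer f) L (fun ℓ => ℓ ⊆ zer f)]
    have h1 : Incidences (P.filter fun p => p ∈ zer f) (L.filter fun ℓ => ¬ ℓ ⊆ zer f) ≤
        L.card * f.totalDegree := by
      rw [inc_eq_sum_lines]
      calc _ ≤ ∑ ℓ ∈ L.filter fun ℓ => ¬ ℓ ⊆ zer f, f.totalDegree := by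
            refine Finset.sum_le_sum fun ℓ hℓ => ?_
            obtain ⟨h1, h2⟩ := Finset.mem_filter.1 hℓ
            rw [Finset.filter_filter]
            refine le_trans (le_of_eq ?_) (card_points_line_zer' P (hL ℓ h1) f h2)
            congr 1
            ext p
            simp only [Finset.mem_filter]
            tauto
        _ = (L.filter fun ℓ => ¬ ℓ ⊆ zer f).card * f.totalDegree := by
            rw [Finset.sum_const, smul_eq_mul]
        _ ≤ _ := Nat.mul_le_mul_right _ (Finset.card_filter_le _ _)
    have h2 : Incidences (P.filter fun p => p ∉ zer f) L ≤
        ∑ c ∈ P.image σ, Incidences (cell P f σ c) (L.filter fun ℓ => ∃ p ∈ cell P f σ c, p ∈ ℓ) := by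
      have h3 : ∀ c, Incidences (cell P f σ c) (L.filter fun ℓ => ∃ p ∈ cell P f σ c, p ∈ ℓ) =
          ∑ p ∈ cell P f σ c, (L.filter fun ℓ => p ∈ ℓ).card := by
        intro c
        rw [inc_eq_sum_points]
        refine Finset.sum_congr rfl fun p hp => ?_
        rw [Finset.filter_filter]
        congr 1
        ext ℓ
        simp only [Finset.mem_filter]
        constructor
        · rintro ⟨h1, h2, h3⟩
          exact ⟨h1, h3⟩
        · rintro ⟨h1, h2⟩
          exact ⟨h1, ⟨p, hp, h2⟩, h2⟩
      simp_rw [h3]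
      rw [inc_eq_sum_points, ← Finset.sum_fiberwise_of_maps_to (t := P.image σ) (g := σ)
        (fun p hp => Finset.mem_image_of_mem _ (Finset.mem_filter.1 hp).1)]
      refine Finset.sum_le_sum fun c _ => ?_
      apply Finset.sum_le_sum_of_subset
      intro p hp
      rw [Finset.mem_filter, Finset.mem_filter] at hp
      exact Finset.mem_filter.2 ⟨hp.1.1, hp.2, hp.1.2⟩
    beta_reduce
    omega

/-! ### Hyperplanes -/

/-- The affine polynomial `∑ aᵢ xᵢ + c`. -/
def aff {d : ℕ} (a : Fin d → ℝ) (c : ℝ) : MvPolynomial (Fin d) ℝ :=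
  ∑ i, MvPolynomial.C (a i) * MvPolynomial.X i + MvPolynomial.C c

lemma eval_aff {d : ℕ} (a : Fin d → ℝ) (c : ℝ) (x : Fin d → ℝ) :
    MvPolynomial.eval x (aff a c) = ∑ i, a i * x i + c := by
  simp [aff]

lemma aff_totalDegree_le {d : ℕ} (a : Fin d → ℝ) (c : ℝ) : (aff a c).totalDegree ≤ 1 := by
  unfold aff
  refine (MvPolynomial.totalDegree_add _ _).trans (max_le ?_ (by simp))
  refine (MvPolynomial.totalDegree_finsetSum _ _).trans (Finset.sup_le fun i _ => ?_)
  refine (MvPolynomial.totalDegree_mul _ _).trans ?_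
  simp

lemma aff_dvd {d : ℕ} {a : Fin d → ℝ} (ha : a ≠ 0) (c : ℝ) (f : MvPolynomial (Fin d) ℝ)
    (h : ∀ x, ∑ i, a i * x i + c = 0 → MvPolynomial.eval x f = 0) : aff a c ∣ f := by
  obtain ⟨i0, hi0⟩ := Function.ne_iff.1 ha
  simp only [Pi.zero_apply] at hi0
  set w : Fin d → MvPolynomial (Fin d) ℝ := fun j => if j = i0 then
    MvPolynomial.X j - MvPolynomial.C (a i0)⁻¹ * aff a c else MvPolynomial.X j with hw
  have h1 : MvPolynomial.aeval w f = 0 := by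
    apply MvPolynomial.funext
    intro x
    rw [map_zero]
    have e : MvPolynomial.eval x (MvPolynomial.aeval w f) =
        MvPolynomial.eval (fun j => MvPolynomial.eval x (w j)) f := by
      rw [MvPolynomial.aeval_def, MvPolynomial.eval₂_eq_eval_map, MvPolynomial.algebraMap_eq]
      rw [MvPolynomial.eval_map, MvPolynomial.eval₂_comp_left (MvPolynomial.eval x)]
      rw [← MvPolynomial.eval₂_id]
      congr 1
      ext r
      simp
    rw [e]
    apply h
    have e2 : ∀ j, a j * MvPolynomial.eval x (w j) = a j * x j -
        if j = i0 then (∑ i, a i * x i + c) else 0 := by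
      intro j
      simp only [hw]
      split_ifs with hj
      · subst hj
        rw [map_sub, map_mul, eval_aff, MvPolynomial.eval_X, MvPolynomial.eval_C]
        field_simp
      · simp
    simp_rw [e2]
    rw [Finset.sum_sub_distrib, Finset.sum_ite_eq' Finset.univ i0]
    simp
  have h2 : (Ideal.Quotient.mkₐ ℝ (Ideal.span {aff a c})).comp (MvPolynomial.aeval w) =
      Ideal.Quotient.mkₐ ℝ (Ideal.span {aff a c}) := by
    apply MvPolynomial.algHom_ext
    intro j
    rw [AlgHom.comp_apply, MvPolynomial.aeval_X]
    simp only [hw]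
    split_ifs
    · rw [map_sub, map_mul]
      have : Ideal.Quotient.mkₐ ℝ (Ideal.span {aff a c}) (aff a c) = 0 := by
        rw [Ideal.Quotient.mkₐ_eq_mk]
        exact Ideal.Quotient.eq_zero_iff_mem.2 (Ideal.mem_span_singleton_self _)
      rw [this, mul_zero, sub_zero]
    · rfl
  have h3 := congrArg (fun φ => φ f) h2
  simp only [AlgHom.comp_apply] at h3
  rw [h1, map_zero, Ideal.Quotient.mkₐ_eq_mk] at h3
  exact Ideal.mem_span_singleton.1 (Ideal.Quotient.eq_zero_iff_mem.1 h3.symm)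

lemma aff_ne_zero {d : ℕ} {a : Fin d → ℝ} (ha : a ≠ 0) (c : ℝ) : aff a c ≠ 0 := by
  obtain ⟨i0, hi0⟩ := Function.ne_iff.1 ha
  simp only [Pi.zero_apply] at hi0
  intro h
  have h1 := eval_aff a c (Pi.single i0 1)
  have h2 := eval_aff a c 0
  rw [h] at h1 h2
  simp [Pi.single_apply] at h1 h2
  rw [← h2, add_zero] at h1
  exact hi0 h1.symm

lemma aff_totalDegree {d : ℕ} {a : Fin d → ℝ} (ha : a ≠ 0) (c : ℝ) : (aff a c).totalDegree = 1 := by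
  refine le_antisymm (aff_totalDegree_le a c) ?_
  by_contra h
  have h0 : (aff a c).totalDegree = 0 := by omega
  obtain ⟨i0, hi0⟩ := Function.ne_iff.1 ha
  simp only [Pi.zero_apply] at hi0
  have h3 := (MvPolynomial.totalDegree_eq_zero_iff_eq_C).1 h0
  have h1 := eval_aff a c (Pi.single i0 1)
  have h2 := eval_aff a c 0
  rw [h3] at h1 h2
  simp [Pi.single_apply] at h1 h2
  rw [h2] at h1
  apply hi0
  linarith

/-! ### Part 6: Szemerédi–Trotter -/

lemma lin_eq_aff2 {a v : Fin 2 → ℝ} (hv : v ≠ 0) (x : Fin 2 → ℝ) :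
    x ∈ lin a v ↔ ∑ i, (![- v 1, v 0] : Fin 2 → ℝ) i * x i + (v 1 * a 0 - v 0 * a 1) = 0 := by
  rw [Fin.sum_univ_two]
  simp only [Matrix.cons_val_zero, Matrix.cons_val_one]
  constructor
  · rintro ⟨t, rfl⟩
    simp only [Pi.add_apply, Pi.smul_apply, smul_eq_mul]
    ring
  · intro h
    by_cases h0 : v 0 = 0
    · have h1 : v 1 ≠ 0 := by
        intro h1
        apply hv
        funext i
        fin_cases i <;> simp [h0, h1]
      refine ⟨(x 1 - a 1) / v 1, ?_⟩
      funext i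
      fin_cases i
      · simp only [Fin.zero_eta, Pi.add_apply, Pi.smul_apply, smul_eq_mul, h0, mul_zero, add_zero]
        rw [h0] at h
        have : v 1 * (a 0 - x 0) = 0 := by linarith
        rcases mul_eq_zero.1 this with h2 | h2
        · exact absurd h2 h1
        · linarith
      · simp only [Fin.mk_one, Pi.add_apply, Pi.smul_apply, smul_eq_mul]
        field_simp
        ring
    · refine ⟨(x 0 - a 0) / v 0, ?_⟩
      funext i
      fin_cases i
      · simp only [Fin.zero_eta, Pi.add_apply, Pi.smul_apply, smul_eq_mul]
        field_simp
        ring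
      · simp only [Fin.mk_one, Pi.add_apply, Pi.smul_apply, smul_eq_mul]
        field_simp
        linarith

lemma card_lines_zer2 (L : Finset (Set (Fin 2 → ℝ))) : ∀ (f : MvPolynomial (Fin 2) ℝ), f ≠ 0 →
    (∀ ℓ ∈ L, IsLine ℓ) → (∀ ℓ ∈ L, ℓ ⊆ zer f) → L.card ≤ f.totalDegree := by
  induction L using Finset.induction_on with
  | empty => intro f _ _ _; simp
  | insert ℓ L hℓ ih =>
    intro f hf hL hz
    obtain ⟨a, v, hv, rfl⟩ := isLine_iff.1 (hL ℓ (Finset.mem_insert_self _ _))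
    have hn : (![- v 1, v 0] : Fin 2 → ℝ) ≠ 0 := by
      intro h
      apply hv
      have h0 := congrFun h 0
      have h1 := congrFun h 1
      simp at h0 h1
      funext i
      fin_cases i <;> simp [h0, h1]
    obtain ⟨g, hg⟩ := aff_dvd hn (v 1 * a 0 - v 0 * a 1) f (fun x hx =>
      hz _ (Finset.mem_insert_self _ _) ((lin_eq_aff2 hv x).2 hx))
    have hg0 : g ≠ 0 := by
      rintro rfl
      exact hf (by rw [hg, mul_zero])
    have hdeg : f.totalDegree = 1 + g.totalDegree := by
      rw [hg, MvPolynomial.totalDegree_mul_of_isDomain (aff_ne_zero hn _) hg0, aff_totalDegree hn]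
    have := ih g hg0 (fun ℓ' h' => hL ℓ' (Finset.mem_insert_of_mem h')) (by
      intro ℓ' h'
      have hne : ℓ' ≠ lin a v := by
        rintro rfl
        exact hℓ h'
      obtain ⟨a', v', hv', rfl⟩ := isLine_iff.1 (hL ℓ' (Finset.mem_insert_of_mem h'))
      rw [lin_subset_zer]
      have hz' := (lin_subset_zer a' v' f).1 (hz _ (Finset.mem_insert_of_mem h'))
      rw [hg, map_mul] at hz'
      rcases mul_eq_zero.1 hz' with h1 | h1
      · exfalso
        rw [restr_eq_zero_iff] at h1
        have hsub : ∀ t : ℝ, a' + t • v' ∈ lin a v := by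
          intro t
          rw [lin_eq_aff2 hv, ← eval_aff]
          exact h1 t
        apply hne
        refine line_unique (p := a' + (0 : ℝ) • v') (q := a' + (1 : ℝ) • v') ⟨a', v', hv', rfl⟩
          ⟨a, v, hv, rfl⟩ ?_ (mem_lin _ _ _) (mem_lin _ _ _) (hsub 0) (hsub 1)
        intro h
        exact zero_ne_one (lin_param_inj hv' h)
      · exact h1)
    rw [Finset.card_insert_of_notMem hℓ, hdeg]
    omega

lemma st2 (P : Finset (Fin 2 → ℝ)) (L : Finset (Set (Fin 2 → ℝ))) (hL : ∀ ℓ ∈ L, IsLine ℓ)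
    (a b : ℝ) (ha : 0 ≤ a) (hb : 0 ≤ b) (hm : a ^ 3 = P.card) (hn : b ^ 3 = L.card) :
    (Incidences P L : ℝ) ≤ 10 ^ 11 * (a ^ 2 * b ^ 2 + a ^ 3 + b ^ 3) := by
  have hab : 0 ≤ a ^ 2 * b ^ 2 := by positivity
  have ha3 : 0 ≤ a ^ 3 := by positivity
  have hb3 : 0 ≤ b ^ 3 := by positivity
  have k1 : (Incidences P L : ℝ) ≤ b ^ 3 + (a ^ 3) ^ 2 := by
    rw [hm, hn]; exact_mod_cast kst1 P L hL
  have k2 : (Incidences P L : ℝ) ≤ a ^ 3 + (b ^ 3) ^ 2 := by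
    rw [hm, hn]; exact_mod_cast kst2 P L hL
  rcases lt_or_ge (b ^ 2) a with h1 | h1
  · have : (b ^ 3) ^ 2 ≤ a ^ 3 := by
      calc (b ^ 3) ^ 2 = (b ^ 2) ^ 3 := by ring
        _ ≤ a ^ 3 := by gcongr
    linarith
  rcases lt_or_ge (a ^ 2) b with h2 | h2
  · have : (a ^ 3) ^ 2 ≤ b ^ 3 := by
      calc (a ^ 3) ^ 2 = (a ^ 2) ^ 3 := by ring
        _ ≤ b ^ 3 := by gcongr
    linarith
  rcases hb.eq_or_lt with h0 | hb0
  · rw [← h0] at h1 k2 ⊢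
    have : a = 0 := by nlinarith
    rw [this] at k2 ⊢
    simpa using k2
  obtain ⟨k, hk1, hk2⟩ := exists_nat_pow_near (x := a ^ 2 / b) (y := (2 : ℝ))
    ((one_le_div hb0).2 h2) (by norm_num)
  obtain ⟨f, σ, hf, hσ, hdeg, hcell⟩ := partition_thm (by norm_num : 0 < 2) P k
  obtain ⟨T, hT⟩ : ∃ T : ℝ, T = 2 ^ k := ⟨_, rfl⟩
  have hT1 : 1 ≤ T := by rw [hT]; exact one_le_pow₀ (by norm_num)
  rw [le_div_iff₀ hb0, ← hT] at hk1
  rw [div_lt_iff₀ hb0, pow_succ (2 : ℝ) k, ← hT] at hk2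
  have hT4 : ((2 : ℝ) ^ 2) ^ k = T ^ 2 := by rw [hT, ← pow_mul, ← pow_mul, mul_comm]
  rw [← hT] at hdeg
  rw [hT4] at hcell
  obtain ⟨Lc, hLc, hsum, hdec⟩ := cell_decomp P L hL f σ hσ
  obtain ⟨Δ, hΔ⟩ : ∃ Δ : ℝ, Δ = f.totalDegree := ⟨_, rfl⟩
  have hΔ0 : 0 ≤ Δ := by rw [hΔ]; positivity
  rw [← hΔ] at hdeg
  have hdeg' : Δ ≤ 128640 * T := by norm_num at hdeg; linarith
  -- lines contained in the curve
  have e1 : (Incidences (P.filter fun p => p ∈ zer f) (L.filter fun ℓ => ℓ ⊆ zer f) : ℝ) ≤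
      a ^ 3 + Δ ^ 2 := by
    have i1 := kst2 (P.filter fun p => p ∈ zer f) (L.filter fun ℓ => ℓ ⊆ zer f)
      (fun ℓ hℓ => hL ℓ (Finset.mem_filter.1 hℓ).1)
    have i2 := card_lines_zer2 (L.filter fun ℓ => ℓ ⊆ zer f) f hf
      (fun ℓ hℓ => hL ℓ (Finset.mem_filter.1 hℓ).1) (fun ℓ hℓ => (Finset.mem_filter.1 hℓ).2)
    have i3 := Finset.card_filter_le P (fun p => p ∈ zer f)
    have i4 : Incidences (P.filter fun p => p ∈ zer f) (L.filter fun ℓ => ℓ ⊆ zer f) ≤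
      P.card + f.totalDegree ^ 2 := i1.trans (by gcongr)
    rw [hm, hΔ]
    exact_mod_cast i4
  -- cells
  have e2 : ((∑ c ∈ P.image σ, Incidences (cell P f σ c) (Lc c) : ℕ) : ℝ) ≤
      b ^ 3 * (Δ + 1) + a ^ 3 / T ^ 2 * a ^ 3 := by
    have i1 : ∀ c ∈ P.image σ, (Incidences (cell P f σ c) (Lc c) : ℝ) ≤
        (Lc c).card + a ^ 3 / T ^ 2 * (cell P f σ c).card := by
      intro c _
      have j1 : (Incidences (cell P f σ c) (Lc c) : ℝ) ≤ (Lc c).card + ((cell P f σ c).card : ℝ) ^ 2 := by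
        exact_mod_cast kst1 (cell P f σ c) (Lc c) (fun ℓ hℓ => hL ℓ (hLc c hℓ))
      have j2 := hcell c
      rw [← hm] at j2
      have j3 : (0 : ℝ) ≤ (cell P f σ c).card := by positivity
      nlinarith
    push_cast
    refine (Finset.sum_le_sum i1).trans ?_
    rw [Finset.sum_add_distrib, ← Finset.mul_sum]
    refine add_le_add ?_ ?_
    · rw [hn, hΔ]
      exact_mod_cast hsum
    · have j4 : (∑ c ∈ P.image σ, ((cell P f σ c).card : ℝ)) ≤ a ^ 3 := by
        rw [hm]
        exact_mod_cast sum_card_cell_le P f σ _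
      have j5 : 0 ≤ a ^ 3 / T ^ 2 := by positivity
      exact mul_le_mul_of_nonneg_left j4 j5
  have e3 : (Incidences P L : ℝ) ≤ (b ^ 3 * (Δ + 1) + a ^ 3 / T ^ 2 * a ^ 3) + b ^ 3 * Δ +
      (a ^ 3 + Δ ^ 2) := by
    have i1 : (Incidences P L : ℝ) ≤ ((∑ c ∈ P.image σ, Incidences (cell P f σ c) (Lc c) : ℕ) : ℝ) +
        b ^ 3 * Δ +
        (Incidences (P.filter fun p => p ∈ zer f) (L.filter fun ℓ => ℓ ⊆ zer f) : ℝ) := by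
      rw [hn, hΔ]; exact_mod_cast hdec
    linarith
  have e4 : b ^ 3 * T ≤ a ^ 2 * b ^ 2 := by
    calc b ^ 3 * T = b ^ 2 * (T * b) := by ring
      _ ≤ b ^ 2 * a ^ 2 := by gcongr
      _ = _ := by ring
  have e5 : b ^ 3 * Δ ≤ 128640 * (a ^ 2 * b ^ 2) := by
    calc b ^ 3 * Δ ≤ b ^ 3 * (128640 * T) := by gcongr
      _ = 128640 * (b ^ 3 * T) := by ring
      _ ≤ _ := by gcongr
  have e6 : a ^ 3 / T ^ 2 * a ^ 3 ≤ 4 * (a ^ 2 * b ^ 2) := by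
    rw [div_mul_eq_mul_div, div_le_iff₀ (by positivity)]
    calc a ^ 3 * a ^ 3 = a ^ 2 * (a ^ 2) ^ 2 := by ring
      _ ≤ a ^ 2 * (T * 2 * b) ^ 2 := by gcongr
      _ = _ := by ring
  have e7 : T ^ 2 ≤ a ^ 2 * b ^ 2 := by
    have i1 : T ^ 2 * b ^ 2 ≤ (a ^ 2 * b ^ 2) * b ^ 2 := by
      calc T ^ 2 * b ^ 2 = (T * b) ^ 2 := by ring
        _ ≤ (a ^ 2) ^ 2 := by gcongr
        _ = a ^ 2 * a ^ 2 := by ring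
        _ ≤ a ^ 2 * (b ^ 2) ^ 2 := by gcongr
        _ = _ := by ring
    exact le_of_mul_le_mul_right i1 (by positivity)
  have e8 : Δ ^ 2 ≤ 128640 ^ 2 * (a ^ 2 * b ^ 2) := by
    calc Δ ^ 2 ≤ (128640 * T) ^ 2 := by gcongr
      _ = 128640 ^ 2 * T ^ 2 := by ring
      _ ≤ _ := by gcongr
  linarith

/-! ### Szemerédi–Trotter in space by projection -/

lemma cross_zero {v u : Fin 3 → ℝ} (hv : v ≠ 0) (h0 : v 1 * u 2 - v 2 * u 1 = 0)
    (h1 : v 2 * u 0 - v 0 * u 2 = 0) (h2 : v 0 * u 1 - v 1 * u 0 = 0) : ∃ t : ℝ, u = t • v := by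
  obtain ⟨i, hi⟩ := Function.ne_iff.1 hv
  simp only [Pi.zero_apply] at hi
  refine ⟨u i / v i, ?_⟩
  funext j
  simp only [Pi.smul_apply, smul_eq_mul]
  field_simp
  fin_cases i <;> fin_cases j <;> simp at hi ⊢ <;> linarith

/-- The projection along `(s, s², 1)`. -/
def proj (s : ℝ) (x : Fin 3 → ℝ) : Fin 2 → ℝ := ![x 0 - s * x 2, x 1 - s ^ 2 * x 2]

lemma proj_add (s : ℝ) (x y : Fin 3 → ℝ) : proj s (x + y) = proj s x + proj s y := by
  funext i
  fin_cases i <;> simp [proj] <;> ring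

lemma proj_smul (s t : ℝ) (x : Fin 3 → ℝ) : proj s (t • x) = t • proj s x := by
  funext i
  fin_cases i <;> simp [proj] <;> ring

lemma proj_eq_iff (s : ℝ) (x y : Fin 3 → ℝ) : proj s x = proj s y ↔
    (x 0 - s * x 2 = y 0 - s * y 2 ∧ x 1 - s ^ 2 * x 2 = y 1 - s ^ 2 * y 2) := by
  constructor
  · intro h
    exact ⟨by simpa [proj] using congrFun h 0, by simpa [proj] using congrFun h 1⟩
  · rintro ⟨h1, h2⟩
    funext i
    fin_cases i <;> simp [proj, h1, h2]

lemma proj_lin (s : ℝ) (a v : Fin 3 → ℝ) : (Set.image (proj s) (lin a v)) = lin (proj s a) (proj s v) := by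
  ext x
  constructor
  · rintro ⟨_, ⟨t, rfl⟩, rfl⟩
    exact ⟨t, by rw [proj_add, proj_smul]⟩
  · rintro ⟨t, rfl⟩
    exact ⟨a + t • v, ⟨t, rfl⟩, by rw [proj_add, proj_smul]⟩

lemma bad_points {x y : Fin 3 → ℝ} (h : x ≠ y) : {s : ℝ | proj s x = proj s y}.Finite := by
  apply (Set.finite_singleton ((x 0 - y 0) / (x 2 - y 2))).subset
  intro s hs
  obtain ⟨h1, h2⟩ := (proj_eq_iff s x y).1 hs
  have h3 : x 2 - y 2 ≠ 0 := by
    intro h3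
    apply h
    have h4 : x 2 = y 2 := by linarith
    rw [h4] at h1 h2
    funext i
    fin_cases i
    · simp; linarith
    · simp; linarith
    · exact h4
  rw [Set.mem_singleton_iff, eq_div_iff h3]
  linarith

lemma finite_roots_quadratic {a b c : ℝ} (h : ¬ (a = 0 ∧ b = 0 ∧ c = 0)) :
    {s : ℝ | a * s ^ 2 + b * s + c = 0}.Finite := by
  set p : Polynomial ℝ := Polynomial.C a * Polynomial.X ^ 2 + Polynomial.C b * Polynomial.X +
    Polynomial.C c with hp
  have hp0 : p ≠ 0 := by
    intro h0
    apply h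
    have h1 := congrArg (fun q => Polynomial.coeff q 2) h0
    have h2 := congrArg (fun q => Polynomial.coeff q 1) h0
    have h3 := congrArg (fun q => Polynomial.coeff q 0) h0
    simp [hp, Polynomial.coeff_X, Polynomial.coeff_C] at h1 h2 h3
    exact ⟨h1, h2, h3⟩
  apply (p.roots.toFinset.finite_toSet).subset
  intro s hs
  rw [Finset.mem_coe, Multiset.mem_toFinset, Polynomial.mem_roots hp0, Polynomial.IsRoot.def]
  simpa [hp] using hs

lemma bad_point_line {a v y : Fin 3 → ℝ} (hv : v ≠ 0) (hy : y ∉ lin a v) :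
    {s : ℝ | proj s y ∈ (Set.image (proj s) (lin a v))}.Finite := by
  set u := y - a with hu
  refine (finite_roots_quadratic (a := v 2 * u 0 - v 0 * u 2) (b := v 1 * u 2 - v 2 * u 1)
    (c := v 0 * u 1 - v 1 * u 0) ?_).subset ?_
  · rintro ⟨h1, h0, h2⟩
    obtain ⟨t, ht⟩ := cross_zero hv h0 h1 h2
    apply hy
    exact ⟨t, by rw [← ht, hu]; abel⟩
  · rintro s ⟨x, ⟨t, rfl⟩, hx⟩
    obtain ⟨h1, h2⟩ := (proj_eq_iff s _ _).1 hx
    have hy0 : y 0 = u 0 + a 0 := by simp [hu]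
    have hy1 : y 1 = u 1 + a 1 := by simp [hu]
    have hy2 : y 2 = u 2 + a 2 := by simp [hu]
    simp only [Pi.add_apply, Pi.smul_apply, smul_eq_mul, hy0, hy1, hy2] at h1 h2
    have e0 : u 0 - t * v 0 = s * (u 2 - t * v 2) := by linarith
    have e1 : u 1 - t * v 1 = s ^ 2 * (u 2 - t * v 2) := by linarith
    have e2 : u 2 - t * v 2 ≠ 0 := by
      intro e2
      rw [e2, mul_zero] at e0 e1
      apply hy
      refine ⟨t, ?_⟩
      funext i
      fin_cases i
      · simp [hy0]; linarith
      · simp [hy1]; linarith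
      · simp [hy2]; linarith
    rw [Set.mem_ofPred_eq]
    apply mul_right_cancel₀ e2
    rw [zero_mul]
    linear_combination (-(v 2 * u 0 - v 0 * u 2)) * e1 - (v 1 * u 2 - v 2 * u 1) * e0

lemma exists_proj (P : Finset (Fin 3 → ℝ)) (L : Finset (Set (Fin 3 → ℝ)))
    (hL : ∀ ℓ ∈ L, IsLine ℓ) : ∃ s : ℝ, (Set.InjOn (proj s) P) ∧
      (∀ ℓ ∈ L, IsLine ((Set.image (proj s) (ℓ)))) ∧ Set.InjOn (fun ℓ => (Set.image (proj s) (ℓ))) (L : Set (Set (Fin 3 → ℝ))) := by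
  have f1 : (⋃ x ∈ P, ⋃ y ∈ P, {s : ℝ | x ≠ y ∧ proj s x = proj s y}).Finite := by
    refine P.finite_toSet.biUnion fun x _ => P.finite_toSet.biUnion fun y _ => ?_
    by_cases h : x = y
    · simp [h]
    · exact (bad_points h).subset fun s hs => hs.2
  have f2 : (⋃ ℓ ∈ L, {s : ℝ | ¬ IsLine ((Set.image (proj s) (ℓ)))}).Finite := by
    refine L.finite_toSet.biUnion fun ℓ hℓ => ?_
    obtain ⟨a, v, hv, rfl⟩ := isLine_iff.1 (hL ℓ hℓ)
    refine (bad_points hv).subset ?_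
    intro s hs
    by_contra h
    apply hs
    refine ⟨proj s a, proj s v, ?_, proj_lin s a v⟩
    intro h0
    apply h
    rw [Set.mem_ofPred_eq, h0]
    funext i
    fin_cases i <;> simp [proj]
  have f3 : (⋃ ℓ ∈ L, ⋃ ℓ' ∈ L, {s : ℝ | ℓ ≠ ℓ' ∧ (Set.image (proj s) (ℓ)) = (Set.image (proj s) (ℓ'))}).Finite := by
    refine L.finite_toSet.biUnion fun ℓ hℓ => L.finite_toSet.biUnion fun ℓ' hℓ' => ?_
    by_cases h : ℓ = ℓ'
    · simp [h]
    have hex : ∃ y ∈ ℓ', y ∉ ℓ := by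
      by_contra hcon
      push Not at hcon
      obtain ⟨a', v', hv', hl⟩ := isLine_iff.1 (hL ℓ' hℓ')
      apply h
      refine line_unique (p := a' + (0 : ℝ) • v') (q := a' + (1 : ℝ) • v') (hL _ hℓ) (hL _ hℓ') ?_
        (hcon _ (hl ▸ mem_lin _ _ _)) (hcon _ (hl ▸ mem_lin _ _ _)) (hl ▸ mem_lin _ _ _)
        (hl ▸ mem_lin _ _ _)
      intro h
      exact zero_ne_one (lin_param_inj hv' h)
    obtain ⟨y, hy', hy⟩ := hex
    obtain ⟨a, v, hv, rfl⟩ := isLine_iff.1 (hL ℓ hℓ)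
    refine (bad_point_line hv hy).subset ?_
    rintro s ⟨_, hs⟩
    rw [Set.mem_ofPred_eq, hs]
    exact Set.mem_image_of_mem _ hy'
  obtain ⟨s, hs⟩ := ((f1.union f2).union f3).exists_notMem
  simp only [Set.mem_union, not_or, Set.mem_iUnion, not_exists, Set.mem_ofPred_eq, not_and, not_not] at hs
  obtain ⟨⟨h1, h2⟩, h3⟩ := hs
  refine ⟨s, ?_, h2, ?_⟩
  · intro x hx y hy hxy
    by_contra hne
    exact h1 x hx y hy hne hxy
  · intro x hx y hy hxy
    by_contra hne
    exact h3 x hx y hy hne hxy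

lemma st3 (P : Finset (Fin 3 → ℝ)) (L : Finset (Set (Fin 3 → ℝ))) (hL : ∀ ℓ ∈ L, IsLine ℓ)
    (a b : ℝ) (ha : 0 ≤ a) (hb : 0 ≤ b) (hm : a ^ 3 = P.card) (hn : b ^ 3 = L.card) :
    (Incidences P L : ℝ) ≤ 10 ^ 11 * (a ^ 2 * b ^ 2 + a ^ 3 + b ^ 3) := by
  obtain ⟨s, hs1, hs2, hs3⟩ := exists_proj P L hL
  have c1 : (P.image (proj s)).card = P.card := Finset.card_image_of_injOn hs1
  have c2 : (L.image (fun ℓ => (Set.image (proj s) (ℓ)))).card = L.card := Finset.card_image_of_injOn hs3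
  have key := st2 (P.image (proj s)) (L.image (fun ℓ => (Set.image (proj s) (ℓ)))) (by
    intro ℓ hℓ
    obtain ⟨ℓ0, h0, rfl⟩ := Finset.mem_image.1 hℓ
    exact hs2 ℓ0 h0) a b ha hb (by rw [c1, hm]) (by rw [c2, hn])
  refine le_trans ?_ key
  rw [Nat.cast_le]
  unfold Incidences
  refine Finset.card_le_card_of_injOn (fun x => (proj s x.1, (Set.image (proj s) (x.2)))) ?_ ?_
  · rintro ⟨p, ℓ⟩ h
    rw [Finset.mem_coe, Finset.mem_filter, Finset.mem_product] at h
    rw [Finset.mem_coe, Finset.mem_filter, Finset.mem_product]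
    exact ⟨⟨Finset.mem_image_of_mem _ h.1.1, Finset.mem_image_of_mem _ h.1.2⟩,
      Set.mem_image_of_mem _ h.2⟩
  · rintro ⟨p, ℓ⟩ h ⟨p', ℓ'⟩ h' heq
    rw [Finset.mem_coe, Finset.mem_filter, Finset.mem_product] at h h'
    rw [Prod.mk.injEq] at heq
    rw [Prod.mk.injEq]
    exact ⟨hs1 h.1.1 h'.1.1 heq.1, hs3 h.1.2 h'.1.2 heq.2⟩

/-! ### Part 8: a Bezout-type bound for lines -/

abbrev VD (k : ℕ) := MvPolynomial.restrictTotalDegree (Fin 3) ℝ k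

lemma finrank_VD (k : ℕ) : Module.finrank ℝ (VD k) = (k + 3).choose 3 := by
  classical
  have hb := Module.finrank_eq_nat_card_basis (MvPolynomial.basisRestrictSupport (σ := Fin 3) ℝ
    {n : Fin 3 →₀ ℕ | (n.sum fun _ e => e) ≤ k})
  change Module.finrank ℝ (MvPolynomial.restrictSupport ℝ {n : Fin 3 →₀ ℕ | (n.sum fun _ e => e) ≤ k}) = _
  rw [hb]
  have hs : {n : Fin 3 →₀ ℕ | (n.sum fun _ e => e) ≤ k} =
      (((Finset.range (k+1)).biUnion (fun i => (Finset.univ : Finset (Fin 3)).finsuppAntidiag i) :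
        Finset (Fin 3 →₀ ℕ)) : Set (Fin 3 →₀ ℕ)) := by
    ext n
    simp only [Set.mem_ofPred_eq, Finset.coe_biUnion, Set.mem_iUnion, Finset.mem_coe,
      Finset.mem_finsuppAntidiag, Finset.mem_range, Finset.subset_univ, and_true, exists_prop]
    rw [Finsupp.sum_fintype _ _ (by simp)]
    constructor
    · intro h
      exact ⟨_, Nat.lt_succ_of_le h, rfl⟩
    · rintro ⟨i, hi, h⟩
      have : (Finset.univ.sum fun i => n i) = i := h
      omega
  rw [hs, Nat.card_coe_set_eq, Set.ncard_coe_finset, Finset.card_biUnion]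
  · simp only [Finset.card_finsuppAntidiag_nat_eq_multichoose]
    simpa using Nat.sum_range_multichoose k 3
  · intro i _ j _ hij
    rw [Function.onFun, Finset.disjoint_left]
    intro n hn hn'
    rw [Finset.mem_finsuppAntidiag] at hn hn'
    exact hij (hn.1.symm.trans hn'.1)

lemma choose3 (k : ℕ) : 6 * (k + 3).choose 3 = (k+1)*(k+2)*(k+3) := by
  induction k with
  | zero => simp
  | succ k ih =>
    have h2 : 2 * (k+3).choose 2 = (k+2)*(k+3) := by
      have := Nat.triangle_succ (k+2)
      rw [Nat.choose_two_right]
      have h := Nat.even_mul_pred_self (k+3)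
      rw [Nat.mul_div_cancel' h.two_dvd]
      simp; ring
    have : (k+1+3).choose 3 = (k+3).choose 2 + (k+3).choose 3 := Nat.choose_succ_succ _ _
    rw [this]
    nlinarith

/-- A plane containing one line and not another. -/
lemma exists_sep_plane {a v a' v' : Fin 3 → ℝ} (hv : v ≠ 0) (hv' : v' ≠ 0)
    (h : lin a v ≠ lin a' v') :
    ∃ A : MvPolynomial (Fin 3) ℝ, A.totalDegree ≤ 1 ∧ restr a' v' A = 0 ∧ restr a v A ≠ 0 := by
  obtain ⟨p, hp, hp'⟩ : ∃ p, p ∈ lin a v ∧ p ∉ lin a' v' := by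
    by_contra hcon
    push Not at hcon
    apply h
    have hne : a ≠ a + (1:ℝ) • v := by
      intro h; apply hv; simpa using h
    exact line_unique (isLine_iff.2 ⟨a, v, hv, rfl⟩) (isLine_iff.2 ⟨a', v', hv', rfl⟩) hne
      (lin_base_mem _ _) (mem_lin _ _ 1) (hcon _ (lin_base_mem _ _)) (hcon _ (mem_lin _ _ 1))
  obtain ⟨w, hw1, hw2⟩ : ∃ w : Fin 3 → ℝ, (∑ i, w i * v' i = 0) ∧ ∑ i, w i * (p i - a' i) ≠ 0 := by
    by_contra hcon
    push Not at hcon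
    apply hp'
    have e0 := hcon ![0, - v' 2, v' 1] (by simp [Fin.sum_univ_three]; ring)
    have e1 := hcon ![v' 2, 0, - v' 0] (by simp [Fin.sum_univ_three]; ring)
    have e2 := hcon ![- v' 1, v' 0, 0] (by simp [Fin.sum_univ_three]; ring)
    simp [Fin.sum_univ_three] at e0 e1 e2
    obtain ⟨t, ht⟩ := cross_zero (v := v') (u := p - a') hv' (by simp; linarith) (by simp; linarith)
      (by simp; linarith)
    exact ⟨t, by rw [← ht]; simp⟩
  refine ⟨aff w (-∑ i, w i * a' i), aff_totalDegree_le _ _, ?_, ?_⟩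
  · rw [restr_eq_zero_iff]
    intro t
    rw [eval_aff]
    simp only [Fin.sum_univ_three, Pi.add_apply, Pi.smul_apply, smul_eq_mul] at hw1 ⊢
    linear_combination t * hw1
  · rw [Ne, restr_eq_zero_iff]
    obtain ⟨t, rfl⟩ := hp
    intro hh
    apply hw2
    have := hh t
    rw [eval_aff] at this
    simp only [Fin.sum_univ_three, Pi.add_apply, Pi.smul_apply, smul_eq_mul] at this ⊢
    linear_combination this

lemma exists_param {a v : Fin 3 → ℝ} (hv : v ≠ 0) :
    ∃ A : MvPolynomial (Fin 3) ℝ, A.totalDegree ≤ 1 ∧ restr a v A = Polynomial.X := by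
  obtain ⟨j, hj⟩ := Function.ne_iff.1 hv
  simp only [Pi.zero_apply] at hj
  refine ⟨MvPolynomial.C (v j)⁻¹ * (MvPolynomial.X j - MvPolynomial.C (a j)), ?_, ?_⟩
  · refine (MvPolynomial.totalDegree_mul _ _).trans ?_
    rw [MvPolynomial.totalDegree_C, zero_add]
    refine (MvPolynomial.totalDegree_sub _ _).trans ?_
    simp
  · apply Polynomial.funext
    intro t
    rw [restr_eval]
    simp
    field_simp

lemma totalDegree_aeval_le (A : MvPolynomial (Fin 3) ℝ) (hA : A.totalDegree ≤ 1)
    (u : Polynomial ℝ) : (Polynomial.aeval A u).totalDegree ≤ u.natDegree := by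
  rw [Polynomial.aeval_eq_sum_range]
  refine MvPolynomial.totalDegree_finsetSum_le ?_
  intro i hi
  refine (MvPolynomial.totalDegree_smul_le _ _).trans ((MvPolynomial.totalDegree_pow _ _).trans ?_)
  have := Finset.mem_range.1 hi
  nlinarith

lemma bezout_count {ι : Type} [Fintype ι] (a v : ι → Fin 3 → ℝ) (hv : ∀ i, v i ≠ 0)
    (hinj : ∀ i j, i ≠ j → lin (a i) (v i) ≠ lin (a j) (v j))
    (f g : MvPolynomial (Fin 3) ℝ) (hf : Prime f) (hg : ¬ f ∣ g)
    (hfz : ∀ i, restr (a i) (v i) f = 0) (hgz : ∀ i, restr (a i) (v i) g = 0) (j : ℕ)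
    (N : ℕ) (hN : N = Fintype.card ι) (d e : ℕ) (hd : d = f.totalDegree) (he : e = g.totalDegree)
    (k : ℕ) (hk : k = N + j) :
    N * (j + d + e + 1) + (k + e + 3).choose 3 + (k + d + 3).choose 3
      ≤ (k + d + e + 3).choose 3 + (k + 3).choose 3 := by
  classical
  have hsep : ∀ i i', ∃ A : MvPolynomial (Fin 3) ℝ, A.totalDegree ≤ 1 ∧
      (i ≠ i' → restr (a i') (v i') A = 0 ∧ restr (a i) (v i) A ≠ 0) := by
    intro i i'
    by_cases h : i = i'
    · exact ⟨0, by simp, fun h' => absurd h h'⟩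
    · obtain ⟨A, h1, h2, h3⟩ := exists_sep_plane (hv i) (hv i') (hinj i i' h)
      exact ⟨A, h1, fun _ => ⟨h2, h3⟩⟩
  choose A hA1 hA2 using hsep
  have hpar := fun i => exists_param (a := a i) (hv i)
  choose Λ hΛ1 hΛ2 using hpar
  obtain ⟨Q, hQ⟩ : ∃ Q : ι → MvPolynomial (Fin 3) ℝ,
    Q = fun i => ∏ i' ∈ Finset.univ.erase i, A i i' := ⟨_, rfl⟩
  have hQd : ∀ i, (Q i).totalDegree ≤ N := by
    intro i
    rw [hQ]
    refine (MvPolynomial.totalDegree_finsetProd _ _).trans ?_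
    refine (Finset.sum_le_card_nsmul _ _ 1 (fun x _ => hA1 i x)).trans ?_
    rw [hN, smul_eq_mul, mul_one]
    exact Finset.card_le_univ _
  have hQ0 : ∀ i i', i ≠ i' → restr (a i') (v i') (Q i) = 0 := by
    intro i i' h
    rw [hQ, map_prod]
    exact Finset.prod_eq_zero (Finset.mem_erase.2 ⟨h.symm, Finset.mem_univ _⟩) (hA2 i i' h).1
  have hQ1 : ∀ i, restr (a i) (v i) (Q i) ≠ 0 := by
    intro i
    rw [hQ, map_prod, Finset.prod_ne_zero_iff]
    intro i' h
    exact (hA2 i i' (Finset.mem_erase.1 h).1.symm).2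
  have hf0 : f ≠ 0 := hf.ne_zero
  have hg0 : g ≠ 0 := by rintro rfl; exact hg (dvd_zero _)
  obtain ⟨r, hr⟩ : ∃ r, r = j + d + e + 1 := ⟨_, rfl⟩
  let Φ : ((ι → Polynomial.degreeLT ℝ r) × VD (k+e) × VD (k+d)) →ₗ[ℝ] MvPolynomial (Fin 3) ℝ :=
    { toFun := fun x => (∑ i, Q i * Polynomial.aeval (Λ i) (x.1 i : Polynomial ℝ)) +
        f * (x.2.1 : MvPolynomial (Fin 3) ℝ) + g * (x.2.2 : MvPolynomial (Fin 3) ℝ)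
      map_add' := by
        intro x y
        simp only [Prod.fst_add, Prod.snd_add, Pi.add_apply, Submodule.coe_add, map_add, mul_add,
          Finset.sum_add_distrib]
        ring
      map_smul' := by
        intro c x
        simp only [Prod.smul_fst, Prod.smul_snd, Pi.smul_apply, Submodule.coe_smul, map_smul,
          mul_smul_comm, smul_add, Finset.smul_sum, RingHom.id_apply] }
  have hΦ : ∀ x, Φ x = (∑ i, Q i * Polynomial.aeval (Λ i) (x.1 i : Polynomial ℝ)) +
        f * (x.2.1 : MvPolynomial (Fin 3) ℝ) + g * (x.2.2 : MvPolynomial (Fin 3) ℝ) := fun _ => rfl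
  have hran : LinearMap.range Φ ≤ VD (k+d+e) := by
    rintro _ ⟨x, rfl⟩
    rw [hΦ]
    refine Submodule.add_mem _ (Submodule.add_mem _ (Submodule.sum_mem _ ?_) ?_) ?_
    · intro i _
      rw [MvPolynomial.mem_restrictTotalDegree]
      refine (MvPolynomial.totalDegree_mul _ _).trans ?_
      have h1 := totalDegree_aeval_le (Λ i) (hΛ1 i) (x.1 i : Polynomial ℝ)
      have h2 : (x.1 i : Polynomial ℝ).natDegree < r ∨ (x.1 i : Polynomial ℝ) = 0 := by
        by_cases h : (x.1 i : Polynomial ℝ) = 0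
        · exact Or.inr h
        · left
          exact (Polynomial.natDegree_lt_iff_degree_lt h).2 (Polynomial.mem_degreeLT.1 (x.1 i).2)
      have h3 := hQd i
      rcases h2 with h2 | h2
      · omega
      · rw [h2] at h1 ⊢
        simp at h1 ⊢
        omega
    · rw [MvPolynomial.mem_restrictTotalDegree]
      refine (MvPolynomial.totalDegree_mul _ _).trans ?_
      have := (MvPolynomial.mem_restrictTotalDegree _ _ _).1 x.2.1.2
      omega
    · rw [MvPolynomial.mem_restrictTotalDegree]
      refine (MvPolynomial.totalDegree_mul _ _).trans ?_
      have := (MvPolynomial.mem_restrictTotalDegree _ _ _).1 x.2.2.2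
      omega
  let Ψ : (LinearMap.ker Φ) →ₗ[ℝ] MvPolynomial (Fin 3) ℝ :=
    { toFun := fun x => (x.1.2.2 : MvPolynomial (Fin 3) ℝ)
      map_add' := by intros; rfl
      map_smul' := by intros; rfl }
  have hker : ∀ x, Φ x = 0 → x.1 = 0 ∧
      f * (x.2.1 : MvPolynomial (Fin 3) ℝ) + g * (x.2.2 : MvPolynomial (Fin 3) ℝ) = 0 := by
    intro x hx
    have h1 : x.1 = 0 := by
      funext i
      have := congrArg (restr (a i) (v i)) hx
      rw [hΦ] at this
      simp only [map_add, map_mul, hfz, hgz, zero_mul, add_zero, map_zero, map_sum] at this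
      rw [Finset.sum_eq_single i] at this
      · rw [← Polynomial.aeval_algHom_apply, hΛ2, Polynomial.aeval_X_left_apply] at this
        have := (mul_eq_zero.1 this).resolve_left (hQ1 i)
        exact Subtype.ext this
      · intro i' _ h
        rw [hQ0 i' i h, zero_mul]
      · simp
    refine ⟨h1, ?_⟩
    rw [hΦ, h1] at hx
    simpa using hx
  have hΨinj : Function.Injective Ψ := by
    rw [injective_iff_map_eq_zero]
    rintro ⟨⟨u, x, y⟩, hx⟩ hy
    have hy' : (y : MvPolynomial (Fin 3) ℝ) = 0 := hy
    obtain ⟨h1, h2⟩ := hker _ hx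
    simp only at h1 h2
    rw [hy', mul_zero, add_zero] at h2
    have hx0 := (mul_eq_zero.1 h2).resolve_left hf0
    have e1 : x = 0 := Subtype.ext hx0
    have e2 : y = 0 := Subtype.ext hy'
    subst h1 e1 e2
    rfl
  have hΨran : LinearMap.range Ψ ≤ (VD k).map (LinearMap.mulLeft ℝ f) := by
    rintro _ ⟨⟨⟨u, x, y⟩, hx⟩, rfl⟩
    obtain ⟨h1, h2⟩ := hker _ hx
    simp only at h1 h2
    have hdvd : f ∣ g * (y : MvPolynomial (Fin 3) ℝ) :=
      ⟨-x, by linear_combination h2⟩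
    obtain ⟨c, hc⟩ := (hf.dvd_or_dvd hdvd).resolve_left hg
    refine ⟨c, ?_, hc.symm⟩
    have hyd := (MvPolynomial.mem_restrictTotalDegree _ _ _).1 y.2
    refine (MvPolynomial.mem_restrictTotalDegree _ _ _).2 ?_
    by_cases hc0 : c = 0
    · simp [hc0]
    rw [hc, MvPolynomial.totalDegree_mul_of_isDomain hf0 hc0] at hyd
    omega
  have hkd : Module.finrank ℝ (LinearMap.ker Φ) ≤ (k+3).choose 3 := by
    rw [← LinearMap.finrank_range_of_inj hΨinj]
    refine (Submodule.finrank_mono hΨran).trans ((Submodule.finrank_map_le _ _).trans ?_)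
    rw [finrank_VD]
  have hrd : Module.finrank ℝ (LinearMap.range Φ) ≤ (k+d+e+3).choose 3 := by
    rw [← finrank_VD]
    exact Submodule.finrank_mono hran
  have htot := LinearMap.finrank_range_add_finrank_ker Φ
  have hdom : Module.finrank ℝ ((ι → Polynomial.degreeLT ℝ r) × VD (k+e) × VD (k+d)) =
      N * r + ((k+e+3).choose 3 + (k+d+3).choose 3) := by
    rw [Module.finrank_prod, Module.finrank_prod, finrank_VD, finrank_VD, Module.finrank_pi_fintype]
    have : Module.finrank ℝ (Polynomial.degreeLT ℝ r) = r := by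
      rw [LinearEquiv.finrank_eq (Polynomial.degreeLTEquiv ℝ r)]; simp
    rw [this]
    simp [hN]
  rw [hdom] at htot
  rw [← hr]
  omega

lemma bezout_lines (L : Finset (Set (Fin 3 → ℝ))) (hL : ∀ ℓ ∈ L, IsLine ℓ)
    (f g : MvPolynomial (Fin 3) ℝ) (hf : Prime f) (hg : ¬ f ∣ g)
    (hfz : ∀ ℓ ∈ L, ℓ ⊆ zer f) (hgz : ∀ ℓ ∈ L, ℓ ⊆ zer g) :
    L.card ≤ f.totalDegree * g.totalDegree := by
  have h1 : ∀ i : L, ∃ a v, v ≠ 0 ∧ (i : Set (Fin 3 → ℝ)) = lin a v := fun i => isLine_iff.1 (hL i i.2)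
  choose a v hv he using h1
  by_contra hcon
  push Not at hcon
  obtain ⟨d, hd⟩ : ∃ d, d = f.totalDegree := ⟨_, rfl⟩
  obtain ⟨e, he'⟩ : ∃ e, e = g.totalDegree := ⟨_, rfl⟩
  obtain ⟨N, hN⟩ : ∃ N, N = L.card := ⟨_, rfl⟩
  rw [← hd, ← he', ← hN] at hcon
  have key := bezout_count a v hv
    (by
      intro i j hij
      rw [← he, ← he]
      exact fun h => hij (Subtype.ext h))
    f g hf hg
    (by intro i; rw [← lin_subset_zer, ← he]; exact hfz i i.2)
    (by intro i; rw [← lin_subset_zer, ← he]; exact hgz i i.2)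
    (d*e*(N+2+d+e)+1) N (by simp [hN]) d e hd he' _ rfl
  obtain ⟨j, hj⟩ : ∃ j, j = d*e*(N+2+d+e)+1 := ⟨_, rfl⟩
  rw [← hj] at key
  have c1 := choose3 (N+j+e)
  have c2 := choose3 (N+j+d)
  have c3 := choose3 (N+j+d+e)
  have c4 := choose3 (N+j)
  have key2 : 6 * (N*(j+d+e+1)) + (N+j+e+1)*(N+j+e+2)*(N+j+e+3) + (N+j+d+1)*(N+j+d+2)*(N+j+d+3)
     ≤ (N+j+d+e+1)*(N+j+d+e+2)*(N+j+d+e+3) + (N+j+1)*(N+j+2)*(N+j+3) := by omega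
  have key3 : 6 * (N*(j+d+e+1)) ≤ 3*(d*e)*(2*(N+j) + 4 + (d+e)) := by
    zify at key2 ⊢
    linarith
  have h3 : (d*e+1) * j ≤ N * (j+d+e+1) := Nat.mul_le_mul hcon (by omega)
  have h4 : 2*((d*e+1)*j) ≤ (d*e)*(2*(N+j)+4+(d+e)) := by linarith
  have h5 : 2 * j ≤ d*e*(2*N+4+(d+e)) := by nlinarith
  have h6 : d*e*(2*N+4+(d+e)) ≤ 2*(d*e*(N+2+d+e)) := by nlinarith [Nat.zero_le (d*e*(d+e))]
  omega


/-! ### Part 9: rich points on a line in a surface -/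

open MvPolynomial (pderiv) in
lemma pderiv_comm' (i j : Fin 3) (f : MvPolynomial (Fin 3) ℝ) :
    pderiv i (pderiv j f) = pderiv j (pderiv i f) := by
  have h : ⁅(pderiv i : Derivation ℝ (MvPolynomial (Fin 3) ℝ) (MvPolynomial (Fin 3) ℝ)),
      (pderiv j : Derivation ℝ (MvPolynomial (Fin 3) ℝ) (MvPolynomial (Fin 3) ℝ))⁆ = 0 := by
    apply MvPolynomial.derivation_ext
    intro k
    rw [Derivation.commutator_apply]
    by_cases h1 : k = i <;> by_cases h2 : k = j <;>
      simp [h1, h2, MvPolynomial.pderiv_X, Pi.single_apply] <;> split_ifs <;> simp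
  have := congrArg (fun D => D f) h
  simp only [Derivation.commutator_apply, Derivation.coe_zero, Pi.zero_apply] at this
  exact sub_eq_zero.1 this

open MvPolynomial (pderiv) in
lemma derivative_restr (a v : Fin 3 → ℝ) (f : MvPolynomial (Fin 3) ℝ) :
    Polynomial.derivative (restr a v f) = ∑ i, Polynomial.C (v i) * restr a v (pderiv i f) := by
  induction f using MvPolynomial.induction_on with
  | C r => simp [restr]
  | add p q hp hq => simp [hp, hq, mul_add, Finset.sum_add_distrib]
  | mul_X p j hp =>
    rw [map_mul, Polynomial.derivative_mul, hp]
    have h1 : restr a v (MvPolynomial.X j) = Polynomial.C (a j) + Polynomial.C (v j) * Polynomial.X := by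
      simp [restr]
    have h2 : Polynomial.derivative (restr a v (MvPolynomial.X j)) = Polynomial.C (v j) := by
      rw [h1]; simp
    rw [h2]
    simp only [MvPolynomial.pderiv_mul, map_add, map_mul, mul_add, Finset.sum_add_distrib]
    rw [Finset.sum_mul]
    congr 1
    · refine Finset.sum_congr rfl fun i _ => by ring
    · rw [Finset.sum_eq_single j]
      · simp; ring
      · intro b _ hb
        rw [MvPolynomial.pderiv_X_of_ne hb.symm]; simp
      · simp

open MvPolynomial (pderiv) in
lemma totalDegree_pderiv_lt (i : Fin 3) (f : MvPolynomial (Fin 3) ℝ) (h : pderiv i f ≠ 0) :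
    (pderiv i f).totalDegree + 1 ≤ f.totalDegree := by
  obtain ⟨m, hm, hm'⟩ := Finset.exists_mem_eq_sup (pderiv i f).support
    (MvPolynomial.support_nonempty.2 h) (fun s => s.sum fun _ e => e)
  have h1 : (pderiv i f).totalDegree = m.sum fun _ e => e := hm'
  rw [MvPolynomial.mem_support_iff, MvPolynomial.coeff_pderiv] at hm
  have h2 : m + Finsupp.single i 1 ∈ f.support := by
    rw [MvPolynomial.mem_support_iff]
    exact left_ne_zero_of_mul hm
  have h3 := MvPolynomial.le_totalDegree h2
  rw [Finsupp.sum_add_index' (by simp) (by simp), Finsupp.sum_single_index (by simp)] at h3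
  omega

open MvPolynomial (pderiv) in
lemma exists_pderiv_ne_zero (f : MvPolynomial (Fin 3) ℝ) (hf : f.totalDegree ≠ 0) :
    ∃ i, pderiv i f ≠ 0 := by
  by_contra hcon
  push Not at hcon
  apply hf
  have : f = MvPolynomial.C (MvPolynomial.eval 0 f) := by
    apply MvPolynomial.funext
    intro x
    rw [MvPolynomial.eval_C]
    have h1 := derivative_restr 0 x f
    simp only [hcon, map_zero, mul_zero, Finset.sum_const_zero] at h1
    have h2 := Polynomial.eq_C_of_derivative_eq_zero h1
    have e0 := restr_eval 0 x f 0
    have e1 := restr_eval 0 x f 1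
    rw [h2] at e0 e1
    simp at e0 e1
    rw [← e1, e0]; simp
  rw [this, MvPolynomial.totalDegree_C]

lemma prop_of_wronskian (p q : Polynomial ℝ) (hq : q ≠ 0) (h : Polynomial.wronskian p q = 0) :
    ∃ c : ℝ, p = Polynomial.C c * q := by
  obtain ⟨q', p', g, hco, hq', hp'⟩ := UniqueFactorizationMonoid.exists_reduced_factors q hq p
  have hg : g ≠ 0 := by rintro rfl; simp at hq'; exact hq hq'.symm
  have hco' : IsCoprime p' q' := hco.symm.isCoprime
  have hw : Polynomial.wronskian p' q' = 0 := by
    have : g ^ 2 * Polynomial.wronskian p' q' = 0 := by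
      rw [← h, ← hp', ← hq']
      simp only [Polynomial.wronskian, Polynomial.derivative_mul]
      ring
    exact (mul_eq_zero.1 this).resolve_left (pow_ne_zero _ hg)
  obtain ⟨h1, h2⟩ := hco'.wronskian_eq_zero_iff.1 hw
  have e1 := Polynomial.eq_C_of_derivative_eq_zero h1
  have e2 := Polynomial.eq_C_of_derivative_eq_zero h2
  have hne : q'.coeff 0 ≠ 0 := by
    intro h; rw [h] at e2; simp at e2; rw [e2] at hq'; simp at hq'; exact hq hq'.symm
  refine ⟨p'.coeff 0 / q'.coeff 0, ?_⟩
  rw [← hp', ← hq', e1, e2]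
  simp only [Polynomial.coeff_C_zero]
  rw [mul_left_comm, ← Polynomial.C_mul, div_mul_cancel₀ _ hne]

lemma sum_sq3 {x y z : ℝ} (h : x^2+y^2+z^2 = 0) : x = 0 ∧ y = 0 ∧ z = 0 := by
  refine ⟨?_, ?_, ?_⟩ <;> nlinarith [sq_nonneg x, sq_nonneg y, sq_nonneg z]

/-- Pointwise algebra: three lines through a point force the Hessian image parallel to the gradient. -/
lemma hess_par (G x v u w : Fin 3 → ℝ) (H : Fin 3 → Fin 3 → ℝ) (hH : ∀ i j, H i j = H j i)
    (hx : ∀ i, x i = ∑ j, v j * H j i)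
    (hv : v ≠ 0) (hu : u ≠ 0) (huv : ∀ t : ℝ, u ≠ t • v) (hwv : ∀ t : ℝ, w ≠ t • v)
    (hwu : ∀ t : ℝ, w ≠ t • u)
    (gv : ∑ i, v i * G i = 0) (gu : ∑ i, u i * G i = 0) (gw : ∑ i, w i * G i = 0)
    (qv : ∑ i, v i * ∑ j, v j * H j i = 0) (qu : ∑ i, u i * ∑ j, u j * H j i = 0)
    (qw : ∑ i, w i * ∑ j, w j * H j i = 0) (i k : Fin 3) : G i * x k = x i * G k := by
  by_cases hG : G = 0
  · simp [hG]
  obtain ⟨c, hc⟩ : ∃ c : Fin 3 → ℝ, c = ![v 1 * u 2 - v 2 * u 1, v 2 * u 0 - v 0 * u 2,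
    v 0 * u 1 - v 1 * u 0] := ⟨_, rfl⟩
  have c0 : c 0 = v 1 * u 2 - v 2 * u 1 := by rw [hc]; rfl
  have c1 : c 1 = v 2 * u 0 - v 0 * u 2 := by rw [hc]; rfl
  have c2 : c 2 = v 0 * u 1 - v 1 * u 0 := by rw [hc]; rfl
  have hcne : c ≠ 0 := by
    intro h
    obtain ⟨t, ht⟩ := cross_zero (v := v) (u := u) hv (by rw [← c0, h]; rfl) (by rw [← c1, h]; rfl)
      (by rw [← c2, h]; rfl)
    exact huv t ht
  simp only [Fin.sum_univ_three] at *
  have par : ∀ y : Fin 3 → ℝ, v 0 * y 0 + v 1 * y 1 + v 2 * y 2 = 0 →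
      u 0 * y 0 + u 1 * y 1 + u 2 * y 2 = 0 → ∃ t : ℝ, y = t • c := by
    intro y h1 h2
    apply cross_zero hcne
    · rw [c1, c2]; linear_combination u 0 * h1 - v 0 * h2
    · rw [c0, c2]; linear_combination u 1 * h1 - v 1 * h2
    · rw [c0, c1]; linear_combination u 2 * h1 - v 2 * h2
  obtain ⟨lam, hlam⟩ := par G gv gu
  have hlam0 : lam ≠ 0 := by
    rintro rfl; apply hG; rw [hlam, zero_smul]
  have cw : w 0 * c 0 + w 1 * c 1 + w 2 * c 2 = 0 := by
    rw [hlam] at gw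
    simp only [Pi.smul_apply, smul_eq_mul] at gw
    have : lam * (w 0 * c 0 + w 1 * c 1 + w 2 * c 2) = 0 := by linear_combination gw
    exact (mul_eq_zero.1 this).resolve_left hlam0
  obtain ⟨s, hs⟩ : ∃ s, s = c 0 ^2 + c 1 ^2 + c 2 ^ 2 := ⟨_, rfl⟩
  have hs0 : s ≠ 0 := by
    intro h
    apply hcne
    rw [hs] at h
    obtain ⟨z0, z1, z2⟩ := sum_sq3 h
    funext i; fin_cases i <;> assumption
  obtain ⟨α, hα⟩ : ∃ α, α = (w 1 * u 2 - w 2 * u 1) * c 0 + (w 2 * u 0 - w 0 * u 2) * c 1 +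
    (w 0 * u 1 - w 1 * u 0) * c 2 := ⟨_, rfl⟩
  obtain ⟨β, hβ⟩ : ∃ β, β = (v 1 * w 2 - v 2 * w 1) * c 0 + (v 2 * w 0 - v 0 * w 2) * c 1 +
    (v 0 * w 1 - v 1 * w 0) * c 2 := ⟨_, rfl⟩
  have w0 : s * w 0 = α * v 0 + β * u 0 := by
    have : s * w 0 = α * v 0 + β * u 0 + (w 0 * c 0 + w 1 * c 1 + w 2 * c 2) * c 0 := by
      rw [hs, hα, hβ, c0, c1, c2]; ring
    rw [this, cw]; ring
  have w1 : s * w 1 = α * v 1 + β * u 1 := by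
    have : s * w 1 = α * v 1 + β * u 1 + (w 0 * c 0 + w 1 * c 1 + w 2 * c 2) * c 1 := by
      rw [hs, hα, hβ, c0, c1, c2]; ring
    rw [this, cw]; ring
  have w2 : s * w 2 = α * v 2 + β * u 2 := by
    have : s * w 2 = α * v 2 + β * u 2 + (w 0 * c 0 + w 1 * c 1 + w 2 * c 2) * c 2 := by
      rw [hs, hα, hβ, c0, c1, c2]; ring
    rw [this, cw]; ring
  have hα0 : α ≠ 0 := by
    intro h
    rw [h] at w0 w1 w2
    apply hwu (β / s)
    funext i
    fin_cases i
    · simp; field_simp; linarith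
    · simp; field_simp; linarith
    · simp; field_simp; linarith
  have hβ0 : β ≠ 0 := by
    intro h
    rw [h] at w0 w1 w2
    apply hwv (α / s)
    funext i
    fin_cases i
    · simp; field_simp; linarith
    · simp; field_simp; linarith
    · simp; field_simp; linarith
  have hxv : v 0 * x 0 + v 1 * x 1 + v 2 * x 2 = 0 := by
    rw [hx, hx, hx]; exact qv
  have h10 := hH 1 0
  have h20 := hH 2 0
  have h21 := hH 2 1
  have hxu : u 0 * x 0 + u 1 * x 1 + u 2 * x 2 = 0 := by
    have key : α * β * 2 * (u 0 * x 0 + u 1 * x 1 + u 2 * x 2) = 0 := by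
      rw [hx, hx, hx]
      rw [h10, h20, h21] at qv qu qw ⊢
      have e : (s * w 0) * ((s * w 0) * H 0 0 + (s * w 1) * H 0 1 + (s * w 2) * H 0 2) +
        (s * w 1) * ((s * w 0) * H 0 1 + (s * w 1) * H 1 1 + (s * w 2) * H 1 2) +
        (s * w 2) * ((s * w 0) * H 0 2 + (s * w 1) * H 1 2 + (s * w 2) * H 2 2) = 0 := by
        linear_combination s^2 * qw
      rw [w0, w1, w2] at e
      linear_combination e - α^2 * qv - β^2 * qu
    have : α * β * 2 ≠ 0 := by positivity
    exact (mul_eq_zero.1 key).resolve_left this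
  obtain ⟨mu, hmu⟩ := par x hxv hxu
  rw [hlam, hmu]
  simp only [Pi.smul_apply, smul_eq_mul]
  ring


/-! ### Part 10: at most `2 d` rich points on a nonsingular line -/

open MvPolynomial (pderiv)

lemma line_first {p u : Fin 3 → ℝ} {f : MvPolynomial (Fin 3) ℝ} (h : restr p u f = 0) :
    ∑ i, u i * MvPolynomial.eval p (pderiv i f) = 0 := by
  have h1 := derivative_restr p u f
  rw [h, Polynomial.derivative_zero] at h1
  have h2 := congrArg (Polynomial.eval 0) h1
  simp only [Polynomial.eval_zero, Polynomial.eval_finsetSum, Polynomial.eval_mul,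
    Polynomial.eval_C, restr_eval, zero_smul, add_zero] at h2
  exact h2.symm

lemma deriv_eval (p u : Fin 3 → ℝ) (f : MvPolynomial (Fin 3) ℝ) (t : ℝ) :
    (Polynomial.derivative (restr p u f)).eval t =
      ∑ i, u i * MvPolynomial.eval (p + t • u) (pderiv i f) := by
  rw [derivative_restr]
  simp only [Polynomial.eval_finsetSum, Polynomial.eval_mul, Polynomial.eval_C, restr_eval]

lemma line_second {p u : Fin 3 → ℝ} {f : MvPolynomial (Fin 3) ℝ} (h : restr p u f = 0) :
    ∑ i, u i * ∑ j, u j * MvPolynomial.eval p (pderiv j (pderiv i f)) = 0 := by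
  have h1 := derivative_restr p u f
  rw [h, Polynomial.derivative_zero] at h1
  have h2 := congrArg (fun q => Polynomial.eval 0 (Polynomial.derivative q)) h1
  simp only [Polynomial.derivative_zero, Polynomial.eval_zero, Polynomial.derivative_sum,
    Polynomial.eval_finsetSum, Polynomial.derivative_C_mul, Polynomial.eval_mul,
    Polynomial.eval_C, deriv_eval, zero_smul, add_zero] at h2
  exact h2.symm

/-- `t` is the parameter of a point of the line through which two further lines of the surface pass. -/
def RichAt (f : MvPolynomial (Fin 3) ℝ) (a v : Fin 3 → ℝ) (t : ℝ) : Prop :=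
  ∃ u w : Fin 3 → ℝ, (u ≠ 0) ∧ (∀ s : ℝ, u ≠ s • v) ∧ (∀ s : ℝ, w ≠ s • v) ∧ (∀ s : ℝ, w ≠ s • u) ∧
    restr (a + t • v) u f = 0 ∧ restr (a + t • v) w f = 0

lemma restr_shift {a v : Fin 3 → ℝ} {f : MvPolynomial (Fin 3) ℝ} (h : restr a v f = 0) (t : ℝ) :
    restr (a + t • v) v f = 0 := by
  rw [restr_eq_zero_iff] at h ⊢
  intro s
  rw [add_assoc, ← add_smul]
  exact h _

lemma wronskian_rich {f : MvPolynomial (Fin 3) ℝ} {a v : Fin 3 → ℝ} (hv : v ≠ 0)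
    (hf : restr a v f = 0) {t : ℝ} (h : RichAt f a v t) (i k : Fin 3) :
    (Polynomial.wronskian (restr a v (pderiv i f)) (restr a v (pderiv k f))).eval t = 0 := by
  obtain ⟨u, w, hu, huv, hwv, hwu, h1, h2⟩ := h
  have h0 := restr_shift hf t
  have := hess_par (fun i => MvPolynomial.eval (a + t • v) (pderiv i f))
    (fun i => ∑ j, v j * MvPolynomial.eval (a + t • v) (pderiv j (pderiv i f))) v u w
    (fun j i => MvPolynomial.eval (a + t • v) (pderiv j (pderiv i f)))
    (fun i j => by rw [pderiv_comm']) (fun i => rfl) hv hu huv hwv hwu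
    (line_first h0) (line_first h1) (line_first h2) (line_second h0) (line_second h1)
    (line_second h2) i k
  simp only [Polynomial.wronskian, Polynomial.eval_sub, Polynomial.eval_mul, deriv_eval, restr_eval]
  exact sub_eq_zero.2 this

lemma card_le_of_roots (S : Finset ℝ) (p : Polynomial ℝ) (hp : p ≠ 0) (h : ∀ t ∈ S, p.eval t = 0) :
    S.card ≤ p.natDegree := by
  by_contra hcon
  push Not at hcon
  exact hp (Polynomial.eq_zero_of_natDegree_lt_card_of_eval_eq_zero' p S h hcon)

lemma plane_fill (f : MvPolynomial (Fin 3) ℝ) (a v w : Fin 3 → ℝ) (S : Finset ℝ) (γ : ℝ → ℝ)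
    (h : ∀ t ∈ S, ∀ s : ℝ, MvPolynomial.eval (a + s • w + (t + s * γ t) • v) f = 0)
    (hS : f.totalDegree < S.card) (s t : ℝ) : MvPolynomial.eval (a + s • w + t • v) f = 0 := by
  obtain ⟨B, hB⟩ : ∃ B : Finset ℝ, B = (S ×ˢ S).image (fun x => (x.2 - x.1) / (γ x.1 - γ x.2)) :=
    ⟨_, rfl⟩
  have hgood : ∀ s : ℝ, s ∉ B → restr (a + s • w) v f = 0 := by
    intro s hs
    by_contra hne
    have hinj : Set.InjOn (fun t => t + s * γ t) S := by
      intro x hx y hy hxy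
      simp only at hxy
      by_cases hg : γ x = γ y
      · rw [hg] at hxy; linarith
      · exfalso
        apply hs
        rw [hB]
        refine Finset.mem_image.2 ⟨(x, y), Finset.mem_product.2 ⟨hx, hy⟩, ?_⟩
        have : γ x - γ y ≠ 0 := sub_ne_zero.2 hg
        rw [div_eq_iff this]
        linarith
    have := card_le_of_roots (S.image (fun t => t + s * γ t)) _ hne (by
      intro x hx
      obtain ⟨t, ht, rfl⟩ := Finset.mem_image.1 hx
      rw [restr_eval]
      exact h t ht s)
    rw [Finset.card_image_of_injOn hinj] at this
    have := restr_natDegree (a + s • w) v f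
    omega
  have h2 : restr (a + t • v) w f = 0 := by
    apply Polynomial.eq_zero_of_infinite_isRoot
    refine Set.Infinite.mono ?_ (Set.Finite.infinite_compl B.finite_toSet)
    intro s hs
    have := hgood s (fun h => hs (Finset.mem_coe.2 h))
    rw [restr_eq_zero_iff] at this
    rw [Set.mem_ofPred_eq, Polynomial.IsRoot.def, restr_eval, add_right_comm]
    exact this t
  rw [restr_eq_zero_iff] at h2
  rw [add_right_comm]
  exact h2 s

lemma exists_comb {N v u : Fin 3 → ℝ} (hN : N ≠ 0) (hv : v ≠ 0) (h : ∑ i, v i * N i = 0)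
    (hu : ∑ i, u i * N i = 0) :
    ∃ α β : ℝ, u = α • v + β • ![N 1 * v 2 - N 2 * v 1, N 2 * v 0 - N 0 * v 2,
      N 0 * v 1 - N 1 * v 0] := by
  simp only [Fin.sum_univ_three] at h hu
  obtain ⟨n, hn⟩ : ∃ n, n = N 0 ^2 + N 1 ^2 + N 2 ^ 2 := ⟨_, rfl⟩
  obtain ⟨m, hm⟩ : ∃ n, n = v 0 ^2 + v 1 ^2 + v 2 ^ 2 := ⟨_, rfl⟩
  have hn0 : n ≠ 0 := by
    intro h
    rw [hn] at h
    obtain ⟨z0, z1, z2⟩ := sum_sq3 h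
    apply hN; funext i; fin_cases i <;> assumption
  have hm0 : m ≠ 0 := by
    intro h
    rw [hm] at h
    obtain ⟨z0, z1, z2⟩ := sum_sq3 h
    apply hv; funext i; fin_cases i <;> assumption
  obtain ⟨c, hc⟩ : ∃ c : Fin 3 → ℝ, c = ![N 1 * v 2 - N 2 * v 1, N 2 * v 0 - N 0 * v 2,
      N 0 * v 1 - N 1 * v 0] := ⟨_, rfl⟩
  have c0 : c 0 = N 1 * v 2 - N 2 * v 1 := by rw [hc]; rfl
  have c1 : c 1 = N 2 * v 0 - N 0 * v 2 := by rw [hc]; rfl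
  have c2 : c 2 = N 0 * v 1 - N 1 * v 0 := by rw [hc]; rfl
  have hcne : c ≠ 0 := by
    intro hz
    obtain ⟨t, ht⟩ := cross_zero (v := N) (u := v) hN (by rw [← c0, hz]; rfl)
      (by rw [← c1, hz]; rfl) (by rw [← c2, hz]; rfl)
    have : t * n = 0 := by
      rw [hn, ← h, ht]; simp; ring
    have ht0 := (mul_eq_zero.1 this).resolve_right hn0
    apply hv; rw [ht, ht0, zero_smul]
  obtain ⟨α, hα⟩ : ∃ α, α = (u 0 * v 0 + u 1 * v 1 + u 2 * v 2)/m := ⟨_, rfl⟩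
  have hα' : α * (v 0 ^2 + v 1 ^2 + v 2 ^ 2) = u 0 * v 0 + u 1 * v 1 + u 2 * v 2 := by
    rw [← hm, hα]; field_simp
  obtain ⟨t, ht⟩ := cross_zero (v := c) (u := u - α • v) hcne
    (by rw [c1, c2]; simp only [Pi.sub_apply, Pi.smul_apply, smul_eq_mul]
        linear_combination v 0 * (hu - α * h) + N 0 * hα')
    (by rw [c0, c2]; simp only [Pi.sub_apply, Pi.smul_apply, smul_eq_mul]
        linear_combination v 1 * (hu - α * h) + N 1 * hα')
    (by rw [c0, c1]; simp only [Pi.sub_apply, Pi.smul_apply, smul_eq_mul]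
        linear_combination v 2 * (hu - α * h) + N 2 * hα')
  refine ⟨α, t, ?_⟩
  rw [← hc, ← ht]
  abel

lemma rich_le (f : MvPolynomial (Fin 3) ℝ)
    (hpl : ∀ (n : Fin 3 → ℝ) (c : ℝ), n ≠ 0 → ∃ x, ∑ i, n i * x i + c = 0 ∧ MvPolynomial.eval x f ≠ 0)
    {a v : Fin 3 → ℝ} (hv : v ≠ 0) (hf : restr a v f = 0) (k : Fin 3)
    (hk : restr a v (pderiv k f) ≠ 0) (S : Finset ℝ) (hS : ∀ t ∈ S, RichAt f a v t) :
    S.card ≤ 2 * f.totalDegree := by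
  have hdeg : ∀ i, (restr a v (pderiv i f)).natDegree ≤ f.totalDegree := by
    intro i
    by_cases h0 : pderiv i f = 0
    · simp [h0]
    · have := totalDegree_pderiv_lt i f h0
      have := restr_natDegree a v (pderiv i f)
      omega
  by_cases hW : ∃ i, Polynomial.wronskian (restr a v (pderiv i f)) (restr a v (pderiv k f)) ≠ 0
  · obtain ⟨i, hi⟩ := hW
    have h1 := card_le_of_roots S _ hi (fun t ht => wronskian_rich hv hf (hS t ht) i k)
    have h2 := Polynomial.natDegree_wronskian_lt_add hi
    have := hdeg i
    have := hdeg k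
    omega
  push Not at hW
  have hprop := fun i => prop_of_wronskian _ _ hk (hW i)
  choose N hN using hprop
  have hNk : N k = 1 := by
    have := hN k
    have h2 : (Polynomial.C (N k) - 1) * restr a v (pderiv k f) = 0 := by
      linear_combination -this
    have h3 := (mul_eq_zero.1 h2).resolve_right hk
    have h4 := congrArg (Polynomial.eval 0) h3
    simp at h4
    linarith
  have hN0 : N ≠ 0 := by
    intro h; rw [h] at hNk; simp at hNk
  have hvN : ∑ i, v i * N i = 0 := by
    have h1 := derivative_restr a v f
    rw [hf, Polynomial.derivative_zero] at h1
    have h2 : Polynomial.C (∑ i, v i * N i) * restr a v (pderiv k f) = 0 := by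
      rw [h1, map_sum, Finset.sum_mul]
      refine Finset.sum_congr rfl fun i _ => ?_
      rw [hN i, map_mul, mul_assoc]
    have h3 := (mul_eq_zero.1 h2).resolve_right hk
    exact Polynomial.C_eq_zero.1 h3
  obtain ⟨w, hw⟩ : ∃ w : Fin 3 → ℝ, w = ![N 1 * v 2 - N 2 * v 1, N 2 * v 0 - N 0 * v 2,
      N 0 * v 1 - N 1 * v 0] := ⟨_, rfl⟩
  have hsplit := Finset.card_filter_add_card_filter_not (s := S) (fun t => (restr a v (pderiv k f)).eval t = 0)
  have hS1 : (S.filter (fun t => (restr a v (pderiv k f)).eval t = 0)).card ≤ f.totalDegree :=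
    (card_le_of_roots _ _ hk (fun t ht => (Finset.mem_filter.1 ht).2)).trans (hdeg k)
  have hS2 : (S.filter (fun t => ¬ (restr a v (pderiv k f)).eval t = 0)).card ≤ f.totalDegree := by
    by_contra hcon
    push Not at hcon
    have hγ : ∀ t, ∃ g : ℝ, t ∈ (S.filter (fun t => ¬ (restr a v (pderiv k f)).eval t = 0)) →
        ∀ s : ℝ, MvPolynomial.eval (a + s • w + (t + s * g) • v) f = 0 := by
      intro t
      by_cases ht : t ∈ (S.filter (fun t => ¬ (restr a v (pderiv k f)).eval t = 0))
      swap
      · exact ⟨0, fun h => absurd h ht⟩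
      obtain ⟨htS, hne⟩ := Finset.mem_filter.1 ht
      obtain ⟨u, _, hu, huv, -, -, h1, -⟩ := hS t htS
      have huN : ∑ i, u i * N i = 0 := by
        have h2 := line_first h1
        have h3 : ∀ i, MvPolynomial.eval (a + t • v) (pderiv i f) =
            N i * (restr a v (pderiv k f)).eval t := by
          intro i
          rw [← restr_eval, hN i, Polynomial.eval_mul, Polynomial.eval_C]
        simp only [h3] at h2
        have h4 : (∑ i, u i * N i) * (restr a v (pderiv k f)).eval t = 0 := by
          rw [← h2, Finset.sum_mul]
          exact Finset.sum_congr rfl fun i _ => by ring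
        exact (mul_eq_zero.1 h4).resolve_right hne
      obtain ⟨α, β, hab⟩ := exists_comb hN0 hv hvN huN
      rw [← hw] at hab
      have hβ : β ≠ 0 := by
        rintro rfl
        apply huv α
        rw [hab]; simp
      refine ⟨α / β, fun _ s => ?_⟩
      rw [restr_eq_zero_iff] at h1
      have := h1 (s / β)
      rw [hab] at this
      convert this using 2
      have hs : s = s / β * β := by field_simp
      congr 1
      funext i
      simp only [Pi.add_apply, Pi.smul_apply, smul_eq_mul]
      linear_combination w i * hs
    choose γ hγ using hγ
    have hfill := plane_fill f a v w _ γ (fun t ht s => hγ t ht s) hcon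
    obtain ⟨x, hx1, hx2⟩ := hpl N (-∑ i, N i * a i) hN0
    have hxa : ∑ i, (x - a) i * N i = 0 := by
      simp only [Fin.sum_univ_three, Pi.sub_apply] at hx1 ⊢
      linear_combination hx1
    obtain ⟨α, β, hab⟩ := exists_comb hN0 hv hvN hxa
    rw [← hw] at hab
    apply hx2
    have := hfill β α
    have e : x = a + β • w + α • v := by
      have : x = a + (x - a) := by abel
      rw [this, hab]; abel
    rw [e]; exact this
  omega


/-! ### Part 11: lines and points on a surface -/

lemma lin_ne_dir {p u v : Fin 3 → ℝ} (hu : u ≠ 0) (h : lin p u ≠ lin p v) (s : ℝ) : u ≠ s • v := by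
  intro hs
  have hs0 : s ≠ 0 := by rintro rfl; apply hu; rw [hs, zero_smul]
  apply h
  rw [hs, lin_smul hs0]

lemma rich_points_line (f : MvPolynomial (Fin 3) ℝ)
    (hpl : ∀ (n : Fin 3 → ℝ) (c : ℝ), n ≠ 0 → ∃ x, ∑ i, n i * x i + c = 0 ∧ MvPolynomial.eval x f ≠ 0)
    (L : Finset (Set (Fin 3 → ℝ))) (hL : ∀ ℓ ∈ L, IsLine ℓ) (hLz : ∀ ℓ ∈ L, ℓ ⊆ zer f)
    (ℓ : Set (Fin 3 → ℝ)) (hℓ : ℓ ∈ L) (k : Fin 3) (hk : ¬ ℓ ⊆ zer (MvPolynomial.pderiv k f))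
    (Q : Finset (Fin 3 → ℝ)) (hQ : ∀ p ∈ Q, p ∈ ℓ ∧ 3 ≤ (L.filter fun ℓ' => p ∈ ℓ').card) :
    Q.card ≤ 2 * f.totalDegree := by
  obtain ⟨a, v, hv, hav⟩ := isLine_iff.1 (hL ℓ hℓ)
  have hτ : ∀ p, ∃ t : ℝ, p ∈ Q → p = a + t • v := by
    intro p
    by_cases hp : p ∈ Q
    · have := (hQ p hp).1
      rw [hav] at this
      obtain ⟨t, ht⟩ := this
      exact ⟨t, fun _ => ht⟩
    · exact ⟨0, fun h => absurd h hp⟩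
  choose τ hτ using hτ
  have hinj : Set.InjOn τ Q := by
    intro p hp q hq h
    rw [hτ p hp, hτ q hq, h]
  rw [← Finset.card_image_of_injOn hinj]
  apply rich_le f hpl hv (a := a) (by rw [← lin_subset_zer, ← hav]; exact hLz ℓ hℓ) k
    (by rw [Ne, ← lin_subset_zer, ← hav]; exact hk)
  intro t ht
  obtain ⟨p, hp, rfl⟩ := Finset.mem_image.1 ht
  have hpt := hτ p hp
  obtain ⟨hpℓ, h3⟩ := hQ p hp
  have h2 : 1 < ((L.filter fun ℓ' => p ∈ ℓ').erase ℓ).card := by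
    rw [Finset.card_erase_of_mem (Finset.mem_filter.2 ⟨hℓ, hpℓ⟩)]
    omega
  obtain ⟨ℓ1, hℓ1, ℓ2, hℓ2, hne⟩ := Finset.one_lt_card.1 h2
  obtain ⟨hn1, hm1⟩ := Finset.mem_erase.1 hℓ1
  obtain ⟨hn2, hm2⟩ := Finset.mem_erase.1 hℓ2
  obtain ⟨hm1, hp1⟩ := Finset.mem_filter.1 hm1
  obtain ⟨hm2, hp2⟩ := Finset.mem_filter.1 hm2
  obtain ⟨a1, u, hu, h1⟩ := isLine_iff.1 (hL ℓ1 hm1)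
  obtain ⟨a2, w, hw, h2⟩ := isLine_iff.1 (hL ℓ2 hm2)
  have e0 : ℓ = lin p v := by rw [hav]; exact lin_rebase (hav ▸ hpℓ)
  have e1 : ℓ1 = lin p u := by rw [h1]; exact lin_rebase (h1 ▸ hp1)
  have e2 : ℓ2 = lin p w := by rw [h2]; exact lin_rebase (h2 ▸ hp2)
  refine ⟨u, w, hu, lin_ne_dir (p := p) hu ?_, lin_ne_dir (p := p) hw ?_, lin_ne_dir (p := p) hw ?_, ?_, ?_⟩
  · rw [← e0, ← e1]; exact hn1
  · rw [← e0, ← e2]; exact hn2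
  · rw [← e1, ← e2]; exact hne.symm
  · rw [← hpt, ← lin_subset_zer, ← e1]; exact hLz _ hm1
  · rw [← hpt, ← lin_subset_zer, ← e2]; exact hLz _ hm2

lemma amgm_aux {a b x y : ℝ} (ha : 0 ≤ a) (hb : 0 ≤ b) (hx : 0 ≤ x) (hy : 0 ≤ y)
    (h : b ^ 3 ≤ x ^ 2 * y) : a ^ 2 * b ^ 2 ≤ x * a ^ 3 + y * b ^ 3 := by
  have hX : 0 ≤ x * a ^ 3 := by positivity
  have hY : 0 ≤ y * b ^ 3 := by positivity
  refine le_of_pow_le_pow_left₀ (n := 3) (by norm_num) (by positivity) ?_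
  calc (a ^ 2 * b ^ 2) ^ 3 = a ^ 6 * b ^ 3 * b ^ 3 := by ring
    _ ≤ a ^ 6 * b ^ 3 * (x ^ 2 * y) := by gcongr
    _ = (x * a ^ 3) ^ 2 * (y * b ^ 3) := by ring
    _ ≤ (x * a ^ 3 + y * b ^ 3) ^ 3 := by
      obtain ⟨X, hXe⟩ : ∃ X, X = x * a ^ 3 := ⟨_, rfl⟩
      obtain ⟨Y, hYe⟩ : ∃ Y, Y = y * b ^ 3 := ⟨_, rfl⟩
      rw [← hXe] at hX ⊢
      rw [← hYe] at hY ⊢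
      have : (X + Y)^3 = X^2*Y + (X^3 + 2 * X^2*Y + 3*X*Y^2+Y^3) := by ring
      rw [this]
      have : 0 ≤ X^3 + 2 * X^2*Y + 3*X*Y^2+Y^3 := by positivity
      linarith

lemma exists_cbrt (n : ℕ) : ∃ a : ℝ, 0 ≤ a ∧ a ^ 3 = n :=
  ⟨(n : ℝ) ^ ((1:ℝ)/3), by positivity, by
    rw [← Real.rpow_natCast, ← Real.rpow_mul (by positivity)]; norm_num⟩

/-- The surface lemma for an irreducible polynomial. -/
lemma surface_irred (f : MvPolynomial (Fin 3) ℝ) (hf : Irreducible f)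
    (P : Finset (Fin 3 → ℝ)) (L : Finset (Set (Fin 3 → ℝ))) (hL : ∀ ℓ ∈ L, IsLine ℓ)
    (hLz : ∀ ℓ ∈ L, ℓ ⊆ zer f) (q : ℕ)
    (hq : ∀ π : Set (Fin 3 → ℝ), IsPlane π → (L.filter fun ℓ => ℓ ⊆ π).card ≤ q)
    (x y : ℝ) (hx : 0 ≤ x) (hy : 0 ≤ y) (hxy : (q : ℝ) ≤ x ^ 2 * y) :
    ∃ P' ⊆ P, ∃ L' ⊆ L, L'.card ≤ f.totalDegree ^ 2 ∧
      (Incidences P L : ℝ) ≤ 10 ^ 11 * (L.card * f.totalDegree + x * P.card + y * L.card +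
        (P.card - P'.card)) + Incidences P' L' := by
  have hdeg : f.totalDegree ≠ 0 := by
    intro h
    rw [MvPolynomial.totalDegree_eq_zero_iff_eq_C] at h
    rcases eq_or_ne (MvPolynomial.coeff 0 f) 0 with h0 | h0
    · rw [h0, map_zero] at h; exact hf.ne_zero h
    · apply hf.not_isUnit
      rw [h]
      exact (isUnit_iff_ne_zero.2 h0).map MvPolynomial.C
  have hdeg1 : (1:ℝ) ≤ f.totalDegree := by exact_mod_cast Nat.one_le_iff_ne_zero.2 hdeg
  by_cases hpl : ∃ (n : Fin 3 → ℝ) (c : ℝ), n ≠ 0 ∧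
      ∀ z, ∑ i, n i * z i + c = 0 → MvPolynomial.eval z f = 0
  · obtain ⟨n, c, hn, hz⟩ := hpl
    have hdvd := aff_dvd hn c f hz
    have hass : Associated (aff n c) f := by
      refine ((Irreducible.dvd_iff hf).1 hdvd).resolve_left ?_ |>.symm
      intro hu
      have := (MvPolynomial.isUnit_iff_totalDegree_of_isReduced.1 hu).2
      rw [aff_totalDegree hn c] at this
      omega
    have hpz : zer f ⊆ {z | ∑ i, n i * z i + c = 0} := by
      intro z hz'
      obtain ⟨w, hw⟩ := hass.symm.dvd
      have h1 : MvPolynomial.eval z f = 0 := hz'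
      rw [Set.mem_ofPred_eq, ← eval_aff, hw, map_mul, h1, zero_mul]
    have hLq : L.card ≤ q := by
      refine le_trans (le_of_eq ?_) (hq _ ⟨n, c, hn, rfl⟩)
      rw [Finset.filter_true_of_mem]
      intro ℓ hℓ
      exact (hLz ℓ hℓ).trans hpz
    refine ⟨∅, by simp, ∅, by simp, by simp, ?_⟩
    obtain ⟨a, ha, ha3⟩ := exists_cbrt P.card
    obtain ⟨b, hb, hb3⟩ := exists_cbrt L.card
    have h1 := st3 P L hL a b ha hb ha3 hb3
    have h2 : a ^ 2 * b ^ 2 ≤ x * a ^ 3 + y * b ^ 3 := amgm_aux ha hb hx hy (by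
      rw [hb3]
      exact le_trans (by exact_mod_cast hLq) hxy)
    have h3 : b^3 ≤ b^3 * f.totalDegree := le_mul_of_one_le_right (by positivity) hdeg1
    rw [← ha3, ← hb3]
    have h4 : (0:ℝ) ≤ Incidences (∅ : Finset (Fin 3 → ℝ)) ∅ := by positivity
    simp only [Finset.card_empty, Nat.cast_zero, sub_zero]
    nlinarith
  push Not at hpl
  obtain ⟨k, hk⟩ := exists_pderiv_ne_zero f hdeg
  obtain ⟨A, hA⟩ : ∃ A : Set (Fin 3 → ℝ) → Prop, ∀ ℓ, A ℓ ↔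
    ∀ i, ℓ ⊆ zer (MvPolynomial.pderiv i f) := ⟨_, fun _ => Iff.rfl⟩
  obtain ⟨B, hB⟩ : ∃ B : (Fin 3 → ℝ) → Prop, ∀ p, B p ↔
    3 ≤ (L.filter fun ℓ' => p ∈ ℓ').card := ⟨_, fun _ => Iff.rfl⟩
  obtain ⟨P', hP'⟩ : ∃ P' : Finset (Fin 3 → ℝ),
    P' = P.filter B := ⟨_, rfl⟩
  obtain ⟨L', hL'⟩ : ∃ L' : Finset (Set (Fin 3 → ℝ)),
    L' = L.filter A := ⟨_, rfl⟩
  refine ⟨P', hP' ▸ Finset.filter_subset _ _, L', hL' ▸ Finset.filter_subset _ _, ?_, ?_⟩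
  · have hd := totalDegree_pderiv_lt k f hk
    have hnd : ¬ f ∣ MvPolynomial.pderiv k f := by
      rintro ⟨g, hg⟩
      have hg0 : g ≠ 0 := by rintro rfl; rw [mul_zero] at hg; exact hk hg
      have := congrArg MvPolynomial.totalDegree hg
      rw [MvPolynomial.totalDegree_mul_of_isDomain hf.ne_zero hg0] at this
      omega
    have := bezout_lines L' (fun ℓ h => hL ℓ (by rw [hL'] at h; exact (Finset.mem_filter.1 h).1))
      f _ hf.prime hnd (fun ℓ h => hLz ℓ (by rw [hL'] at h; exact (Finset.mem_filter.1 h).1))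
      (fun ℓ h => by rw [hL'] at h; exact (hA _).1 (Finset.mem_filter.1 h).2 k)
    refine this.trans ?_
    rw [sq]
    exact Nat.mul_le_mul_left _ (by omega)
  · have s1 := inc_split_points P L B
    have s2 := inc_split_lines P' L A
    rw [← hL'] at s2
    rw [← hP'] at s1
    have hcard := Finset.card_filter_add_card_filter_not (s := P)
      B
    rw [← hP'] at hcard
    have b1 : Incidences (P.filter fun p => ¬ B p) L ≤
        (P.filter fun p => ¬ B p).card * 2 := by
      rw [inc_eq_sum_points, ← smul_eq_mul]
      apply Finset.sum_le_card_nsmul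
      intro p hp
      have := (Finset.mem_filter.1 hp).2
      rw [hB] at this
      omega
    have b2 : Incidences P' (L.filter fun ℓ => ¬ A ℓ) ≤
        L.card * (2 * f.totalDegree) := by
      rw [inc_eq_sum_lines]
      refine le_trans (Finset.sum_le_card_nsmul _ _ (2 * f.totalDegree) ?_) ?_
      · intro ℓ hℓ
        obtain ⟨h1, h2⟩ := Finset.mem_filter.1 hℓ
        rw [hA] at h2
        push Not at h2
        obtain ⟨i, hi⟩ := h2
        apply rich_points_line f hpl L hL hLz ℓ h1 i hi
        intro p hp
        obtain ⟨hp1, hp2⟩ := Finset.mem_filter.1 hp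
        rw [hP'] at hp1
        exact ⟨hp2, (hB _).1 (Finset.mem_filter.1 hp1).2⟩
      · rw [smul_eq_mul]
        exact Nat.mul_le_mul_right _ (Finset.card_filter_le _ _)
    have tot : Incidences P L ≤ (P.filter fun p => ¬ B p).card * 2
      + L.card * (2 * f.totalDegree) + Incidences P' L' := by omega
    have tot' : (Incidences P L : ℝ) ≤ ((P.card : ℝ) - P'.card) * 2
      + L.card * (2 * f.totalDegree) + Incidences P' L' := by
      have e : ((P.card : ℝ) - P'.card) = ((P.filter fun p => ¬ B p).card : ℕ) := by
        rw [← hcard]; push_cast; ring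
      rw [e]
      exact_mod_cast tot
    have p1 : (0:ℝ) ≤ (P.card : ℝ) - P'.card := by
      rw [sub_nonneg]; exact_mod_cast Finset.card_le_card (hP' ▸ Finset.filter_subset _ _)
    have p2 : (0:ℝ) ≤ L.card * f.totalDegree := by positivity
    have p3 : (0:ℝ) ≤ x * P.card + y * L.card := by positivity
    linarith

/-- The surface lemma. -/
lemma surface (f : MvPolynomial (Fin 3) ℝ) : f ≠ 0 →
    ∀ (P : Finset (Fin 3 → ℝ)) (L : Finset (Set (Fin 3 → ℝ))), (∀ ℓ ∈ L, IsLine ℓ) →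
    (∀ p ∈ P, p ∈ zer f) → (∀ ℓ ∈ L, ℓ ⊆ zer f) → ∀ q : ℕ,
    (∀ π : Set (Fin 3 → ℝ), IsPlane π → (L.filter fun ℓ => ℓ ⊆ π).card ≤ q) →
    ∀ (x y : ℝ), 0 ≤ x → 0 ≤ y → ((q : ℝ) ≤ x ^ 2 * y) →
    ∃ P' ⊆ P, ∃ L' ⊆ L, L'.card ≤ f.totalDegree ^ 2 ∧
      (Incidences P L : ℝ) ≤ 10 ^ 11 * (L.card * f.totalDegree + x * P.card + y * L.card +
        (P.card - P'.card)) + Incidences P' L' := by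
  induction f using WfDvdMonoid.induction_on_irreducible with
  | zero => intro h; exact absurd rfl h
  | unit u hu =>
    intro _ P L hL hPz hLz q hq x y hx hy hxy
    have hP : P = ∅ := by
      rw [Finset.eq_empty_iff_forall_notMem]
      intro p hp
      have h1 : MvPolynomial.eval p u = 0 := hPz p hp
      exact (hu.map (MvPolynomial.eval p)).ne_zero h1
    refine ⟨∅, by simp, ∅, by simp, by simp, ?_⟩
    subst hP
    have : Incidences (∅ : Finset (Fin 3 → ℝ)) L = 0 := by simp [Incidences]
    rw [this]
    push_cast
    have : (0:ℝ) ≤ L.card * u.totalDegree + y * L.card := by positivity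
    have h4 : (0:ℝ) ≤ Incidences (∅ : Finset (Fin 3 → ℝ)) ∅ := by positivity
    simp only [Finset.card_empty, Nat.cast_zero, sub_zero, mul_zero, add_zero]
    linarith
  | mul g i hg hi ih =>
    intro _ P L hL hPz hLz q hq x y hx hy hxy
    obtain ⟨P1, hP1⟩ : ∃ P1 : Finset (Fin 3 → ℝ), P1 = P.filter (fun p => p ∈ zer i) := ⟨_, rfl⟩
    obtain ⟨P2, hP2⟩ : ∃ P1 : Finset (Fin 3 → ℝ), P1 = P.filter (fun p => ¬ p ∈ zer i) := ⟨_, rfl⟩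
    obtain ⟨L1, hL1⟩ : ∃ L1 : Finset (Set (Fin 3 → ℝ)), L1 = L.filter (fun ℓ => ℓ ⊆ zer i) := ⟨_, rfl⟩
    obtain ⟨L2, hL2⟩ : ∃ L1 : Finset (Set (Fin 3 → ℝ)), L1 = L.filter (fun ℓ => ¬ ℓ ⊆ zer i) := ⟨_, rfl⟩
    have hL1s : L1 ⊆ L := hL1 ▸ Finset.filter_subset _ _
    have hL2s : L2 ⊆ L := hL2 ▸ Finset.filter_subset _ _
    have hP1s : P1 ⊆ P := hP1 ▸ Finset.filter_subset _ _
    have hP2s : P2 ⊆ P := hP2 ▸ Finset.filter_subset _ _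
    have cP : P1.card + P2.card = P.card := by
      rw [hP1, hP2]; exact Finset.card_filter_add_card_filter_not _
    have cL : L1.card + L2.card = L.card := by
      rw [hL1, hL2]; exact Finset.card_filter_add_card_filter_not _
    have hqs : ∀ M ⊆ L, ∀ π : Set (Fin 3 → ℝ), IsPlane π → (M.filter fun ℓ => ℓ ⊆ π).card ≤ q :=
      fun M hM π hπ => (Finset.card_le_card (Finset.filter_subset_filter _ hM)).trans (hq π hπ)
    obtain ⟨P1', hP1', L1', hL1', hc1, hI1⟩ := surface_irred i hi P1 L1 (fun ℓ h => hL ℓ (hL1s h))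
      (fun ℓ h => by rw [hL1] at h; exact (Finset.mem_filter.1 h).2) q (hqs L1 hL1s) x y hx hy hxy
    obtain ⟨P2', hP2', L2', hL2', hc2, hI2⟩ := ih hg P2 L2 (fun ℓ h => hL ℓ (hL2s h))
      (by
        intro p hp
        have h1 : MvPolynomial.eval p (i * g) = 0 := hPz p (hP2s hp)
        rw [hP2] at hp
        have h2 : ¬ MvPolynomial.eval p i = 0 := (Finset.mem_filter.1 hp).2
        rw [map_mul] at h1
        exact (mul_eq_zero.1 h1).resolve_left h2)
      (by
        intro ℓ hℓ
        have h1 := hLz ℓ (hL2s hℓ)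
        have h3 := hL ℓ (hL2s hℓ)
        rw [hL2] at hℓ
        have h2 := (Finset.mem_filter.1 hℓ).2
        obtain ⟨a, v, hv, rfl⟩ := isLine_iff.1 h3
        rw [lin_subset_zer] at h1 h2 ⊢
        rw [map_mul] at h1
        exact (mul_eq_zero.1 h1).resolve_left h2) q (hqs L2 hL2s) x y hx hy hxy
    have hdeg : (i * g).totalDegree = i.totalDegree + g.totalDegree :=
      MvPolynomial.totalDegree_mul_of_isDomain hi.ne_zero hg
    have hdisP : Disjoint P1' P2' := by
      refine Finset.disjoint_of_subset_left hP1' (Finset.disjoint_of_subset_right hP2' ?_)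
      rw [hP1, hP2]
      exact Finset.disjoint_filter_filter_not _ _ _
    refine ⟨P1' ∪ P2', Finset.union_subset (hP1'.trans hP1s) (hP2'.trans hP2s), L1' ∪ L2',
      Finset.union_subset (hL1'.trans hL1s) (hL2'.trans hL2s), ?_, ?_⟩
    · refine (Finset.card_union_le _ _).trans ?_
      rw [hdeg]
      nlinarith [Nat.zero_le (i.totalDegree * g.totalDegree)]
    · have t1 := inc_split_points P L (fun p => p ∈ zer i)
      have t2 := inc_split_lines P1 L (fun ℓ => ℓ ⊆ zer i)
      have t3 := inc_split_lines P2 L (fun ℓ => ℓ ⊆ zer i)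
      rw [← hP1, ← hP2] at t1
      rw [← hL1, ← hL2] at t2 t3
      have z1 : Incidences P2 L1 = 0 := by
        rw [inc_eq_sum_lines]
        apply Finset.sum_eq_zero
        intro ℓ hℓ
        rw [hL1] at hℓ
        rw [Finset.card_eq_zero, Finset.filter_eq_empty_iff]
        intro p hp hpl
        rw [hP2] at hp
        exact (Finset.mem_filter.1 hp).2 ((Finset.mem_filter.1 hℓ).2 hpl)
      have z2 : Incidences P1 L2 ≤ L2.card * i.totalDegree := by
        rw [inc_eq_sum_lines, ← smul_eq_mul]
        apply Finset.sum_le_card_nsmul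
        intro ℓ hℓ
        have h3 := hL ℓ (hL2s hℓ)
        rw [hL2] at hℓ
        refine le_trans (Finset.card_le_card ?_) (card_points_line_zer' P h3 i (Finset.mem_filter.1 hℓ).2)
        intro p hp
        obtain ⟨h4, h5⟩ := Finset.mem_filter.1 hp
        rw [hP1] at h4
        obtain ⟨h6, h7⟩ := Finset.mem_filter.1 h4
        exact Finset.mem_filter.2 ⟨h6, h5, h7⟩
      have z3 : Incidences P1' L1' + Incidences P2' L2' ≤ Incidences (P1' ∪ P2') (L1' ∪ L2') := by
        rw [inc_eq_sum_points (P1' ∪ P2'), Finset.sum_union hdisP, ← inc_eq_sum_points,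
          ← inc_eq_sum_points]
        exact add_le_add (inc_mono subset_rfl Finset.subset_union_left)
          (inc_mono subset_rfl Finset.subset_union_right)
      have tot : Incidences P L ≤ Incidences P1 L1 + L2.card * i.totalDegree + Incidences P2 L2 := by
        omega
      have tot' : (Incidences P L : ℝ) ≤ Incidences P1 L1 + L2.card * i.totalDegree + Incidences P2 L2 := by
        exact_mod_cast tot
      have z3' : (Incidences P1' L1' : ℝ) + Incidences P2' L2' ≤ Incidences (P1' ∪ P2') (L1' ∪ L2') := by
        exact_mod_cast z3
      rw [hdeg, Finset.card_union_of_disjoint hdisP, ← cP, ← cL]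
      push_cast
      have n1 : (0:ℝ) ≤ L1.card * g.totalDegree := by positivity
      have n2 : (0:ℝ) ≤ L2.card * i.totalDegree := by positivity
      linarith


/-! ### Part 12: one step of the recursion -/

lemma step (P : Finset (Fin 3 → ℝ)) (L : Finset (Set (Fin 3 → ℝ))) (hL : ∀ ℓ ∈ L, IsLine ℓ) (q : ℕ)
    (hq : ∀ π : Set (Fin 3 → ℝ), IsPlane π → (L.filter fun ℓ => ℓ ⊆ π).card ≤ q)
    (x y : ℝ) (hx : 0 ≤ x) (hy : 0 ≤ y) (hxy : (q : ℝ) ≤ x ^ 2 * y) (k : ℕ)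
    (X Y : ℝ) (hX : 0 ≤ X) (hY : 0 ≤ Y) (hXY : (P.card : ℝ) / 8 ^ k ≤ X * Y ^ 2) :
    ∃ P' ⊆ P, ∃ L' ⊆ L, (L'.card : ℝ) ≤ (289440 * 2 ^ k) ^ 2 ∧
      (Incidences P L : ℝ) ≤ 10 ^ 12 * (X * (P.card - P'.card) +
        (Y + 2) * (L.card * (289440 * 2 ^ k)) + x * P.card + y * L.card +
        (P.card - P'.card)) + Incidences P' L' := by
  obtain ⟨f, σ, hf0, hσ, hdeg, hcell⟩ := partition_thm (d := 3) (by norm_num) P k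
  obtain ⟨Lc, hLc, hsum, hI⟩ := cell_decomp P L hL f σ hσ
  obtain ⟨PZ, hPZ⟩ : ∃ Q : Finset (Fin 3 → ℝ), Q = P.filter (fun p => p ∈ zer f) := ⟨_, rfl⟩
  obtain ⟨PO, hPO⟩ : ∃ Q : Finset (Fin 3 → ℝ), Q = P.filter (fun p => ¬ p ∈ zer f) := ⟨_, rfl⟩
  obtain ⟨LZ, hLZ⟩ : ∃ Q : Finset (Set (Fin 3 → ℝ)), Q = L.filter (fun ℓ => ℓ ⊆ zer f) := ⟨_, rfl⟩
  rw [← hPZ, ← hLZ] at hI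
  have hLZs : LZ ⊆ L := hLZ ▸ Finset.filter_subset _ _
  have hPZs : PZ ⊆ P := hPZ ▸ Finset.filter_subset _ _
  have cP : PZ.card + PO.card = P.card := by
    rw [hPZ, hPO]; exact Finset.card_filter_add_card_filter_not _
  obtain ⟨P', hP', L', hL', hL'c, hS⟩ := surface f hf0 PZ LZ (fun ℓ h => hL ℓ (hLZs h))
    (fun p hp => by rw [hPZ] at hp; exact (Finset.mem_filter.1 hp).2)
    (fun ℓ hℓ => by rw [hLZ] at hℓ; exact (Finset.mem_filter.1 hℓ).2) q
    (fun π hπ => (Finset.card_le_card (Finset.filter_subset_filter _ hLZs)).trans (hq π hπ))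
    x y hx hy hxy
  obtain ⟨Δ, hΔ⟩ : ∃ Δ : ℝ, Δ = 289440 * 2 ^ k := ⟨_, rfl⟩
  have hdeg' : (f.totalDegree : ℝ) ≤ Δ := by
    rw [hΔ]; refine hdeg.trans (le_of_eq ?_); norm_num
  have hΔ1 : 1 ≤ Δ := by
    have : (1:ℝ) ≤ 2 ^ k := one_le_pow₀ (by norm_num)
    rw [hΔ]; linarith
  refine ⟨P', hP'.trans hPZs, L', hL'.trans hLZs, ?_, ?_⟩
  · rw [← hΔ]
    have : (L'.card : ℝ) ≤ (f.totalDegree : ℝ) ^ 2 := by exact_mod_cast hL'c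
    exact this.trans (by gcongr)
  rw [← hΔ]
  have hcells : ∀ c, (Incidences (cell P f σ c) (Lc c) : ℝ) ≤
      10 ^ 11 * ((X + 1) * (cell P f σ c).card + (Y + 1) * (Lc c).card) := by
    intro c
    obtain ⟨a, ha, ha3⟩ := exists_cbrt (cell P f σ c).card
    obtain ⟨b, hb, hb3⟩ := exists_cbrt (Lc c).card
    have h1 := st3 (cell P f σ c) (Lc c) (fun ℓ h => hL ℓ (hLc c h)) a b ha hb ha3 hb3
    have h2 : b ^ 2 * a ^ 2 ≤ Y * b ^ 3 + X * a ^ 3 := by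
      apply amgm_aux hb ha hY hX
      rw [ha3]
      have h3 := hcell c
      have e : ((2:ℝ) ^ 3) ^ k = 8 ^ k := by norm_num
      rw [e] at h3
      linarith
    rw [← ha3, ← hb3]
    linarith
  have hsumP : (∑ c ∈ P.image σ, ((cell P f σ c).card : ℝ)) ≤ PO.card := by
    have h1 := sum_card_cell_le PO f σ (P.image σ)
    have h2 : ∀ c, cell PO f σ c = cell P f σ c := by
      intro c
      ext p
      have hz : p ∈ zer f ↔ MvPolynomial.eval p f = 0 := Iff.rfl
      have hp : p ∈ PO ↔ p ∈ P ∧ ¬ p ∈ zer f := by rw [hPO]; exact Finset.mem_filter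
      simp only [cell, Finset.mem_filter]
      tauto
    simp only [h2] at h1
    exact_mod_cast h1
  have hsumL : (∑ c ∈ P.image σ, ((Lc c).card : ℝ)) ≤ L.card * (f.totalDegree + 1) := by
    exact_mod_cast hsum
  have hI' : (Incidences P L : ℝ) ≤ ∑ c ∈ P.image σ, (Incidences (cell P f σ c) (Lc c) : ℝ) +
        L.card * f.totalDegree + Incidences PZ LZ := by
    exact_mod_cast hI
  have hcs : ∑ c ∈ P.image σ, (Incidences (cell P f σ c) (Lc c) : ℝ) ≤
      10 ^ 11 * ((X + 1) * PO.card + (Y + 1) * (L.card * (2 * Δ))) := by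
    refine (Finset.sum_le_sum fun c _ => hcells c).trans ?_
    rw [← Finset.mul_sum, Finset.sum_add_distrib, ← Finset.mul_sum, ← Finset.mul_sum]
    have : (L.card : ℝ) * (f.totalDegree + 1) ≤ L.card * (2 * Δ) := by
      gcongr; linarith
    gcongr
    exact hsumL.trans this
  have cP' : (PZ.card : ℝ) + PO.card = P.card := by exact_mod_cast cP
  have cPZ' : (P'.card : ℝ) ≤ PZ.card := by exact_mod_cast Finset.card_le_card hP'
  have cLZ : (LZ.card : ℝ) ≤ L.card := by exact_mod_cast Finset.card_le_card hLZs
  have hPO0 : (0:ℝ) ≤ PO.card := by positivity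
  have e1 : (L.card : ℝ) * f.totalDegree ≤ L.card * Δ := by gcongr
  have e2 : (LZ.card : ℝ) * f.totalDegree ≤ L.card * Δ := by gcongr
  have e3 : x * PZ.card ≤ x * P.card := by gcongr
  have e4 : y * LZ.card ≤ y * L.card := by gcongr
  have e5 : X * PO.card ≤ X * (P.card - P'.card) := by gcongr; linarith
  have e6 : 0 ≤ (L.card : ℝ) * Δ := by positivity
  have e7 : 0 ≤ Y * ((L.card : ℝ) * Δ) := by positivity
  have e8 : 0 ≤ x * P.card := by positivity
  have e9 : 0 ≤ y * L.card := by positivity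
  have e10 : 0 ≤ X * PO.card := by positivity
  nlinarith



/-! ### Part 13: the induction -/

lemma pick (μ ν : ℝ) (hμ : 0 < μ) (hν : 0 < ν) (h1 : 1157760 ≤ ν ^ 2) (h2 : 1157760 * ν ≤ μ) :
    ∃ (k : ℕ) (X Y : ℝ), 0 ≤ X ∧ 0 ≤ Y ∧ μ ^ 2 / 8 ^ k ≤ X * Y ^ 2 ∧ 1157760 * 2 ^ k ≤ ν ^ 2 ∧
      (Y + 2) * (ν ^ 4 * 2 ^ k) ≤ 5 * 1157760 * (μ * ν ^ 3) ∧
      ∀ d, 0 ≤ d → d ≤ μ ^ 2 → X * d ≤ μ * ν ^ 3 + d := by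
  obtain ⟨K, hK⟩ : ∃ K : ℝ, K = 1157760 := ⟨_, rfl⟩
  rw [← hK] at h1 h2 ⊢
  have hK0 : 1 ≤ K := by rw [hK]; norm_num
  have hKp : 0 < K := by linarith
  have e8 : ∀ k : ℕ, ((2:ℝ) ^ k) ^ 3 = 8 ^ k := by
    intro k; rw [← pow_mul, mul_comm, pow_mul]; norm_num
  have hM : 0 < μ * ν ^ 3 := by positivity
  have hK43 : 8 * K ^ 3 ≤ 9 * K ^ 4 := by
    have : 0 < K ^ 3 := by positivity
    nlinarith
  rcases le_or_gt (ν ^ 3) μ with h | h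
  · obtain ⟨k, hk1, hk2⟩ := exists_nat_pow_near (x := ν ^ 2 / K) (y := 2)
      ((one_le_div hKp).2 h1) (by norm_num)
    rw [le_div_iff₀ hKp] at hk1
    rw [div_lt_iff₀ hKp] at hk2
    refine ⟨k, 1, 3 * K ^ 2 * μ / ν ^ 3, by norm_num, by positivity, ?_, by linarith, ?_, ?_⟩
    · have h3 : (ν ^ 2) ^ 3 ≤ (2 ^ (k + 1) * K) ^ 3 := by gcongr
      have h4 : (2 ^ (k + 1) * K) ^ 3 = 8 ^ k * (8 * K ^ 3) := by
        rw [← e8 k]; ring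
      rw [h4] at h3
      have h5 : (8:ℝ) ^ k * (8 * K ^ 3) ≤ 8 ^ k * (9 * K ^ 4) := by gcongr
      have h6 : 1 * (3 * K ^ 2 * μ / ν ^ 3) ^ 2 = (9 * K ^ 4 * μ ^ 2) / ν ^ 6 := by
        field_simp; ring
      rw [h6, div_le_div_iff₀ (by positivity) (by positivity)]
      have h7 : μ ^ 2 * (ν ^ 2) ^ 3 ≤ μ ^ 2 * (8 ^ k * (9 * K ^ 4)) := by
        gcongr; linarith
      linarith
    · have h3 : (3 * K ^ 2 * μ / ν ^ 3 + 2) * (ν ^ 4 * 2 ^ k) =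
          (3 * K * μ * ν + 2 * ν ^ 4 / K) * (2 ^ k * K) := by
        field_simp
      rw [h3]
      have h4 : (3 * K * μ * ν + 2 * ν ^ 4 / K) * (2 ^ k * K) ≤
          (3 * K * μ * ν + 2 * ν ^ 4 / K) * ν ^ 2 := by gcongr
      refine h4.trans ?_
      have h5 : 2 * ν ^ 4 / K ≤ 2 * ν ^ 4 * K := by
        rw [div_le_iff₀ hKp]
        have : 0 < 2 * ν ^ 4 := by positivity
        have : 1 ≤ K * K := by nlinarith
        nlinarith
      have h6 : ν ^ 3 * (ν ^ 3 * K) ≤ μ * (ν ^ 3 * K) := by gcongr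
      have h7 : (3 * K * μ * ν + 2 * ν ^ 4 / K) * ν ^ 2 ≤ (3 * K * μ * ν + 2 * ν ^ 4 * K) * ν ^ 2 := by
        gcongr
      nlinarith
    · intro d _ _
      linarith
  · obtain ⟨k, hk1, hk2⟩ := exists_nat_pow_near (x := μ / (K * ν)) (y := 2)
      ((one_le_div (by positivity)).2 h2) (by norm_num)
    rw [le_div_iff₀ (by positivity)] at hk1
    rw [div_lt_iff₀ (by positivity)] at hk2
    refine ⟨k, ν ^ 3 / μ, 3 * K ^ 2, by positivity, by positivity, ?_, ?_, ?_, ?_⟩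
    · have h3 : μ ^ 3 ≤ (2 ^ (k + 1) * (K * ν)) ^ 3 := by gcongr
      have h4 : (2 ^ (k + 1) * (K * ν)) ^ 3 = 8 ^ k * ν ^ 3 * (8 * K ^ 3) := by
        rw [← e8 k]; ring
      rw [h4] at h3
      have h5 : (8:ℝ) ^ k * ν ^ 3 * (8 * K ^ 3) ≤ 8 ^ k * ν ^ 3 * (9 * K ^ 4) := by gcongr
      have h6 : ν ^ 3 / μ * (3 * K ^ 2) ^ 2 = (ν ^ 3 * (9 * K ^ 4)) / μ := by ring
      rw [h6, div_le_div_iff₀ (by positivity) (by positivity)]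
      nlinarith
    · have : (K * 2 ^ k) * ν ≤ ν ^ 2 * ν := by nlinarith
      exact le_of_mul_le_mul_right this hν
    · have h3 : (3 * K ^ 2 + 2) * (ν ^ 4 * 2 ^ k) ≤ (5 * K ^ 2) * (ν ^ 4 * 2 ^ k) := by
        gcongr; nlinarith
      refine h3.trans ?_
      have h4 : (5 * K ^ 2) * (ν ^ 4 * 2 ^ k) = 5 * K * ν ^ 3 * (2 ^ k * (K * ν)) := by ring
      rw [h4]
      have h5 : 5 * K * ν ^ 3 * (2 ^ k * (K * ν)) ≤ 5 * K * ν ^ 3 * μ := by gcongr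
      linarith
    · intro d hd hd2
      have : ν ^ 3 / μ * d ≤ ν ^ 3 / μ * μ ^ 2 := by gcongr
      have h6 : ν ^ 3 / μ * μ ^ 2 = μ * ν ^ 3 := by field_simp
      linarith

lemma exists_root (n : ℕ) (j : ℕ) (hj : j ≠ 0) : ∃ a : ℝ, 0 ≤ a ∧ a ^ j = n :=
  ⟨(n : ℝ) ^ ((j : ℝ)⁻¹), by positivity, Real.rpow_inv_natCast_pow (by positivity) hj⟩

lemma main_ind (N : ℕ) : ∀ (P : Finset (Fin 3 → ℝ)) (L : Finset (Set (Fin 3 → ℝ))) (q : ℕ)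
    (μ ν a b r : ℝ), L.card = N → (∀ ℓ ∈ L, IsLine ℓ) →
    (∀ π : Set (Fin 3 → ℝ), IsPlane π → (L.filter fun ℓ => ℓ ⊆ π).card ≤ q) →
    0 ≤ μ → 0 ≤ ν → 0 ≤ a → 0 ≤ b → 0 ≤ r → μ ^ 2 = P.card → ν ^ 4 = L.card →
    a ^ 3 = P.card → b ^ 3 = L.card → r ^ 3 = q →
    (Incidences P L : ℝ) ≤ 10 ^ 30 * (μ * ν ^ 3 + a ^ 2 * b * r + L.card) +
      2 * 10 ^ 12 * P.card := by
  induction N using Nat.strong_induction_on with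
  | _ N ih =>
  intro P L q μ ν a b r hN hL hq hμ hν ha hb hr hμ2 hν4 ha3 hb3 hr3
  have hM0 : 0 ≤ μ * ν ^ 3 := by positivity
  have hT0 : 0 ≤ a ^ 2 * b * r := by positivity
  have hm0 : (0:ℝ) ≤ P.card := by positivity
  have hn0 : (0:ℝ) ≤ L.card := by positivity
  rcases lt_or_ge (ν ^ 2) 1157760 with hs | h1
  · have h := kst2 P L hL
    have h' : (Incidences P L : ℝ) ≤ P.card + (L.card : ℝ) ^ 2 := by exact_mod_cast h
    have h3 : (L.card : ℝ) ≤ 1157760 ^ 2 := by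
      rw [← hν4, show ν ^ 4 = (ν ^ 2) ^ 2 by ring]; gcongr
    nlinarith
  have hνp : 0 < ν := by
    rcases hν.lt_or_eq with h | h
    · exact h
    · rw [← h] at h1; norm_num at h1
  rcases lt_or_ge μ (1157760 * ν) with hs | h2
  · have h := kst1 P L hL
    have h' : (Incidences P L : ℝ) ≤ L.card + (P.card : ℝ) ^ 2 := by exact_mod_cast h
    have h3 : μ * μ ^ 3 ≤ μ * (1157760 * ν) ^ 3 := by gcongr
    rw [← hμ2] at h'
    nlinarith
  have hμp : 0 < μ := by nlinarith
  have hmp : (0:ℝ) < P.card := by rw [← hμ2]; positivity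
  have hnp : (0:ℝ) < L.card := by rw [← hν4]; positivity
  have hap : 0 < a := by
    rcases ha.lt_or_eq with h | h
    · exact h
    · rw [← h] at ha3; norm_num at ha3; linarith
  have hbp : 0 < b := by
    rcases hb.lt_or_eq with h | h
    · exact h
    · rw [← h] at hb3; norm_num at hb3; linarith
  obtain ⟨k, X, Y, hX, hY, hXY, hk, hYb, hXb⟩ := pick μ ν hμp hνp h1 h2
  rw [hμ2] at hXY
  have hx0 : 0 ≤ b * r / a := by positivity
  have hy0 : 0 ≤ a ^ 2 * r / b ^ 2 := by positivity
  obtain ⟨P', hP', L', hL', hc, hI⟩ := step P L hL q hq (b * r / a) (a ^ 2 * r / b ^ 2)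
    hx0 hy0 (le_of_eq (by rw [← hr3]; field_simp)) k X Y hX hY hXY
  have ex : b * r / a * P.card = a ^ 2 * b * r := by rw [← ha3]; field_simp
  have ey : a ^ 2 * r / b ^ 2 * L.card = a ^ 2 * b * r := by rw [← hb3]; field_simp
  rw [ex, ey] at hI
  have hc' : (L'.card : ℝ) ≤ L.card / 16 := by
    refine hc.trans ?_
    have h3 : (289440 * (2:ℝ) ^ k) ≤ ν ^ 2 / 4 := by linarith
    have h4 : (289440 * (2:ℝ) ^ k) ^ 2 ≤ (ν ^ 2 / 4) ^ 2 := by gcongr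
    rw [← hν4]
    linarith [show (ν ^ 2 / 4) ^ 2 = ν ^ 4 / 16 by ring]
  have hlt : L'.card < N := by
    rw [← hN]
    have : (L'.card : ℝ) < L.card := by linarith
    exact_mod_cast this
  have hPc : (P'.card : ℝ) ≤ P.card := by exact_mod_cast Finset.card_le_card hP'
  obtain ⟨μ', hμ', hμ2'⟩ := exists_root P'.card 2 (by norm_num)
  obtain ⟨ν', hν', hν4'⟩ := exists_root L'.card 4 (by norm_num)
  obtain ⟨a', ha', ha3'⟩ := exists_root P'.card 3 (by norm_num)
  obtain ⟨b', hb', hb3'⟩ := exists_root L'.card 3 (by norm_num)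
  have hIH := ih L'.card hlt P' L' q μ' ν' a' b' r rfl (fun ℓ h => hL ℓ (hL' h))
    (fun π hπ => (Finset.card_le_card (Finset.filter_subset_filter _ hL')).trans (hq π hπ))
    hμ' hν' ha' hb' hr hμ2' hν4' ha3' hb3' hr3
  have i1 : μ' ≤ μ := le_of_pow_le_pow_left₀ (n := 2) (by norm_num) hμ (by rw [hμ2', hμ2]; exact hPc)
  have i2 : a' ≤ a := le_of_pow_le_pow_left₀ (n := 3) (by norm_num) ha (by rw [ha3', ha3]; exact hPc)
  have i3 : ν' ≤ ν / 2 := le_of_pow_le_pow_left₀ (n := 4) (by norm_num) (by positivity) (by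
    rw [hν4', div_pow, hν4]; norm_num; linarith)
  have i4 : b' ≤ b / 2 := le_of_pow_le_pow_left₀ (n := 3) (by norm_num) (by positivity) (by
    rw [hb3', div_pow, hb3]; norm_num; linarith)
  have j1 : μ' * ν' ^ 3 ≤ μ * ν ^ 3 / 8 := by
    have : μ' * ν' ^ 3 ≤ μ * (ν / 2) ^ 3 := by gcongr
    linarith [show μ * (ν / 2) ^ 3 = μ * ν ^ 3 / 8 by ring]
  have j2 : a' ^ 2 * b' * r ≤ a ^ 2 * b * r / 2 := by
    have : a' ^ 2 * b' * r ≤ a ^ 2 * (b / 2) * r := by gcongr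
    linarith [show a ^ 2 * (b / 2) * r = a ^ 2 * b * r / 2 by ring]
  have j3 := hXb ((P.card : ℝ) - P'.card) (by linarith) (by
    rw [hμ2]; have : (0:ℝ) ≤ P'.card := by positivity
    linarith)
  have j4 : (Y + 2) * (L.card * (289440 * 2 ^ k)) ≤ 289440 * (5 * 1157760 * (μ * ν ^ 3)) := by
    rw [← hν4]
    linarith [show (Y + 2) * (ν ^ 4 * (289440 * 2 ^ k)) = 289440 * ((Y + 2) * (ν ^ 4 * 2 ^ k)) by ring]
  linarith


/-- **Guth–Katz point–line incidence theorem in `ℝ³`.** There is an absolute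
constant `c` such that for every set `P` of `m` distinct points and set `L` of `n`
distinct lines in `ℝ³`, if no plane contains more than `q₂ ≤ n` lines of `L`, then
`I(P,L) ≤ c (m^{1/2} n^{3/4} + m^{2/3} n^{1/3} q₂^{1/3} + m + n)`. -/
theorem guth_katz_incidences :
    ∃ c : ℝ, 0 < c ∧
      ∀ (P : Finset (Fin 3 → ℝ)) (L : Finset (Set (Fin 3 → ℝ))) (q₂ : ℕ),
        (∀ ℓ ∈ L, IsLine ℓ) →
        q₂ ≤ L.card →
        (∀ π : Set (Fin 3 → ℝ), IsPlane π → (L.filter fun ℓ => ℓ ⊆ π).card ≤ q₂) →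
        (Incidences P L : ℝ) ≤
          c * ((P.card : ℝ) ^ ((1 : ℝ) / 2) * (L.card : ℝ) ^ ((3 : ℝ) / 4)
                + (P.card : ℝ) ^ ((2 : ℝ) / 3) * (L.card : ℝ) ^ ((1 : ℝ) / 3)
                    * (q₂ : ℝ) ^ ((1 : ℝ) / 3)
                + (P.card : ℝ) + (L.card : ℝ)) := by

  refine ⟨10 ^ 30, by norm_num, ?_⟩
  intro P L q hL _ hq
  have hm : (0:ℝ) ≤ P.card := by positivity
  have hn : (0:ℝ) ≤ L.card := by positivity
  have hq0 : (0:ℝ) ≤ q := by positivity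
  have h := main_ind L.card P L q ((P.card : ℝ) ^ ((1 : ℝ) / 2)) ((L.card : ℝ) ^ ((1 : ℝ) / 4))
    ((P.card : ℝ) ^ ((1 : ℝ) / 3)) ((L.card : ℝ) ^ ((1 : ℝ) / 3)) ((q : ℝ) ^ ((1 : ℝ) / 3))
    rfl hL hq (by positivity) (by positivity) (by positivity) (by positivity) (by positivity)
    (by rw [← Real.rpow_natCast, ← Real.rpow_mul hm]; norm_num)
    (by rw [← Real.rpow_natCast, ← Real.rpow_mul hn]; norm_num)
    (by rw [← Real.rpow_natCast, ← Real.rpow_mul hm]; norm_num)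
    (by rw [← Real.rpow_natCast, ← Real.rpow_mul hn]; norm_num)
    (by rw [← Real.rpow_natCast, ← Real.rpow_mul hq0]; norm_num)
  have e1 : ((L.card : ℝ) ^ ((1 : ℝ) / 4)) ^ 3 = (L.card : ℝ) ^ ((3 : ℝ) / 4) := by
    rw [← Real.rpow_natCast, ← Real.rpow_mul hn]; norm_num
  have e2 : ((P.card : ℝ) ^ ((1 : ℝ) / 3)) ^ 2 = (P.card : ℝ) ^ ((2 : ℝ) / 3) := by
    rw [← Real.rpow_natCast, ← Real.rpow_mul hm]; norm_num
  rw [e1, e2] at h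
  linarith
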